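/- arXiv:1712.08371 — 2 statements merged into one kernel-verified Lean document; each statement's English description precedes it below -/
import Mathlib

section
/- Let a, b be real numbers with a not an integer, b not a nonpositive integer, and b − a not a nonpositive integer. For x > 0 set m₀(x) := ⌊x + 2a − b⌋. Then as x → +∞, G(x) := (1/Γ(b)) · ₁F₁(b−a; b; −x) − (x^{a−b}/Γ(a)) ∑_{j=0}^{m₀(x)−1} (b−a)_j (1−a)_j / (j! x^j) satisfies G(x) = (x^{−a} e^{−x}/Γ(b−a)) · ( cos(πa) + O(x^{−1/2}) ); that is, after subtracting the optimally truncated dominant algebraic expansion, the exponentially small contribution on the Stokes line arg z = π has Stokes multiplier cos(πa) to leading order. -/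
open Complex Filter Asymptotics

/-- The Kummer confluent hypergeometric function `₁F₁(a; b; z)`,
defined by its everywhere convergent power series. -/
noncomputable def kummer (a b z : ℂ) : ℂ :=
  ∑' n : ℕ, ((ascPochhammer ℂ n).eval a / (ascPochhammer ℂ n).eval b) * z ^ n / n.factorial

/-!
For `0 < a < b`, Euler's integral and the binomial series turn the remainder after `m` terms of the
algebraic expansion into a difference of two integrals over `(0, 1)`, one carrying the tail
`∑_{k ≥ m} (1-a)_k / k! · t^{k-m}` of the series for `(1 - t)^{a-1}` and the other, after
`t ↦ 1 / t`, its first `m` terms. For `m = x + O(1)` both have their saddle point at the endpoint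
`t = 1`, near which they are `(1-a)_m / m! · 1 / (1 - t)` times their saddle factors, up to lower
order terms. These common parts cancel, so dropping the saddle factors costs a relative error of
order `x^{-1/2}` only, and what is left is the partial fraction series
`∑_k (1-a)_k / k! · 1 / (1/2 - m + k)`. This is a Beta function analytically continued to a negative
half-integer argument; the reflection formula evaluates it as
`cos(πa) Γ(a) Γ(m + 1/2 - a) / Γ(m + 1/2)`, which is where the Stokes multiplier comes from.

The other parameters are reached by contiguous relations between the remainders, first lowering
`b - a` and then lowering `a`.
-/

namespace KummerStokes

open MeasureTheory Set

lemma ne_neg_natCast_add_one {R : Type*} [Ring R] {s : R} (hs : ∀ n : ℕ, s ≠ -n) (n : ℕ) :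
    s + 1 ≠ -n := by
  intro h
  exact hs (n + 1) (by rw [Nat.cast_succ, neg_add, ← h]; abel)

lemma ne_neg_natCast_add_two {R : Type*} [Ring R] {s : R} (hs : ∀ n : ℕ, s ≠ -n) (n : ℕ) :
    s + 2 ≠ -n := by
  rw [← one_add_one_eq_two, ← add_assoc]
  exact ne_neg_natCast_add_one (ne_neg_natCast_add_one hs) n

section GammaRatio

lemma Gamma_add_le_rpow_mul_Gamma {y σ : ℝ} (hy : 0 < y) (hσ₀ : 0 ≤ σ) (hσ₁ : σ ≤ 1) :
    Real.Gamma (y + σ) ≤ y ^ σ * Real.Gamma y := by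
  have hΓ := Real.Gamma_pos_of_pos hy
  rcases hσ₀.eq_or_lt with rfl | hσ₀
  · simp
  rcases hσ₁.eq_or_lt with rfl | hσ₁
  · rw [Real.Gamma_add_one hy.ne', Real.rpow_one]
  have logConvexity := Real.Gamma_mul_add_mul_le_rpow_Gamma_mul_rpow_Gamma hy
    (by linarith : 0 < y + 1) (sub_pos.mpr hσ₁) hσ₀ (by ring)
  calc Real.Gamma (y + σ) = Real.Gamma ((1 - σ) * y + σ * (y + 1)) := by ring_nf
    _ ≤ Real.Gamma y ^ (1 - σ) * (y * Real.Gamma y) ^ σ := by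
      rwa [← Real.Gamma_add_one hy.ne']
    _ = y ^ σ * Real.Gamma y ^ (1 - σ + σ) := by
      rw [Real.mul_rpow hy.le hΓ.le, Real.rpow_add hΓ]; ring
    _ = y ^ σ * Real.Gamma y := by rw [sub_add_cancel, Real.rpow_one]

lemma rpow_mul_one_sub_le_Gamma_ratio {y σ : ℝ} (hy : 0 < y) (hσ₀ : 0 ≤ σ) (hσ₁ : σ ≤ 1) :
    y ^ σ * (1 - σ / y) ≤ Real.Gamma (y + σ) / Real.Gamma y := by
  have hyσ : 0 < y + σ := by linarith
  have := Real.Gamma_pos_of_pos hy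
  have upper : y * Real.Gamma y ≤ (y + σ) ^ (1 - σ) * Real.Gamma (y + σ) := by
    simpa [Real.Gamma_add_one hy.ne', add_assoc] using
      Gamma_add_le_rpow_mul_Gamma hyσ (sub_nonneg.mpr hσ₁) (by linarith : 1 - σ ≤ 1)
  have hpow : (y + σ) ^ σ * (y + σ) ^ (1 - σ) = y + σ := by
    rw [← Real.rpow_add hyσ, add_sub_cancel, Real.rpow_one]
  have hle : y ^ σ ≤ (y + σ) ^ σ := Real.rpow_le_rpow hy.le (by linarith) hσ₀
  have hfrac : 1 - σ / y ≤ y / (y + σ) := by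
    rw [le_div_iff₀ hyσ, one_sub_div hy.ne', div_mul_eq_mul_div, div_le_iff₀ hy]
    nlinarith [sq_nonneg σ]
  calc y ^ σ * (1 - σ / y) ≤ y ^ σ * (y / (y + σ)) := by gcongr
    _ ≤ (y + σ) ^ σ * (y / (y + σ)) := by gcongr
    _ = (y + σ) ^ σ * (y * Real.Gamma y) / ((y + σ) * Real.Gamma y) := by field_simp
    _ ≤ (y + σ) ^ σ * ((y + σ) ^ (1 - σ) * Real.Gamma (y + σ)) / ((y + σ) * Real.Gamma y) := by
      gcongr
    _ = Real.Gamma (y + σ) / Real.Gamma y := by rw [← mul_assoc, hpow]; field_simp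

lemma Gamma_ratio_sub_rpow_isBigO_of_mem_Icc {σ : ℝ} (hσ₀ : 0 ≤ σ) (hσ₁ : σ ≤ 1) :
    (fun y => Real.Gamma (y + σ) / Real.Gamma y - y ^ σ) =O[atTop] fun y => y ^ (σ - 1) := by
  refine IsBigO.of_bound 1 ?_
  filter_upwards [eventually_gt_atTop 0] with y hy
  have hΓ := Real.Gamma_pos_of_pos hy
  have upper : Real.Gamma (y + σ) / Real.Gamma y ≤ y ^ σ :=
    (div_le_iff₀ hΓ).mpr (Gamma_add_le_rpow_mul_Gamma hy hσ₀ hσ₁)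
  have lower := rpow_mul_one_sub_le_Gamma_ratio hy hσ₀ hσ₁
  have hpow : 0 < y ^ (σ - 1) := Real.rpow_pos_of_pos hy _
  have hsplit : y ^ σ * (1 - σ / y) = y ^ σ - σ * y ^ (σ - 1) := by
    rw [Real.rpow_sub_one hy.ne']; ring
  rw [Real.norm_eq_abs, Real.norm_of_nonneg hpow.le, one_mul, abs_le]
  constructor <;> nlinarith

lemma Gamma_ratio_sub_rpow_isBigO_add_one_iff (σ : ℝ) :
    (fun y => Real.Gamma (y + (σ + 1)) / Real.Gamma y - y ^ (σ + 1)) =O[atTop] (fun y => y ^ σ) ↔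
      (fun y => Real.Gamma (y + σ) / Real.Gamma y - y ^ σ) =O[atTop] fun y => y ^ (σ - 1) := by
  have recurrence : (fun y : ℝ => Real.Gamma (y + (σ + 1)) / Real.Gamma y - y ^ (σ + 1) - σ * y ^ σ)
      =ᶠ[atTop] fun y => (y + σ) * (Real.Gamma (y + σ) / Real.Gamma y - y ^ σ) := by
    filter_upwards [eventually_gt_atTop (max 0 (-σ))] with y hy
    rw [max_lt_iff] at hy
    rw [← add_assoc, Real.Gamma_add_one (by linarith), Real.rpow_add_one hy.1.ne']
    ring
  have hlower : (fun y : ℝ => σ * y ^ σ) =O[atTop] fun y => y ^ σ :=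
    (isBigO_refl _ _).const_mul_left σ
  have hshift : (fun y : ℝ => y + σ) =Θ[atTop] fun y => y :=
    (isTheta_refl _ _).add_isLittleO (isLittleO_const_id_atTop σ)
  have hscale : (fun y : ℝ => (y + σ) * y ^ (σ - 1)) =Θ[atTop] fun y => y ^ σ := by
    refine (IsTheta.mul hshift (isTheta_refl _ _)).trans_eventuallyEq ?_
    filter_upwards [eventually_gt_atTop 0] with y hy
    rw [Real.rpow_sub_one hy.ne', mul_div_cancel₀ _ hy.ne']
  have hne : ∀ᶠ y : ℝ in atTop, y + σ ≠ 0 := by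
    filter_upwards [eventually_gt_atTop (-σ)] with y hy
    linarith
  rw [← hlower.sub_iff_left, isBigO_congr recurrence .rfl,
    ← hscale.isBigO_congr_right]
  simp only [isBigO_iff, norm_mul, mul_left_comm _ ‖_ + σ‖]
  refine exists_congr fun C => eventually_congr (hne.mono fun y hy => ?_)
  exact mul_le_mul_iff_right₀ (norm_pos_iff.mpr hy)

lemma Gamma_ratio_sub_rpow_isBigO (σ : ℝ) :
    (fun y => Real.Gamma (y + σ) / Real.Gamma y - y ^ σ) =O[atTop] fun y => y ^ (σ - 1) := by
  suffices ∀ n : ℤ, (fun y => Real.Gamma (y + (Int.fract σ + n)) / Real.Gamma y -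
      y ^ (Int.fract σ + n)) =O[atTop] fun y => y ^ (Int.fract σ + n - 1) by
    simpa using this ⌊σ⌋
  intro n
  induction n with
  | zero =>
    simpa using
      Gamma_ratio_sub_rpow_isBigO_of_mem_Icc (Int.fract_nonneg σ) (Int.fract_lt_one σ).le
  | succ n ih =>
    simpa [← add_assoc] using (Gamma_ratio_sub_rpow_isBigO_add_one_iff _).mpr ih
  | pred n ih =>
    refine (Gamma_ratio_sub_rpow_isBigO_add_one_iff _).mp ?_
    simpa [add_sub_assoc, add_assoc] using ih

lemma rpow_sub_rpow_isBigO {f : ℝ → ℝ} (hf : (fun x => f x - x) =O[atTop] fun _ => (1 : ℝ))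
    (σ : ℝ) : (fun x => f x ^ σ - x ^ σ) =O[atTop] fun x => x ^ (σ - 1) := by
  have hrel : (fun x => (f x - x) / x) =O[atTop] fun x : ℝ => x⁻¹ := by
    simpa [div_eq_mul_inv] using hf.mul (isBigO_refl (fun x : ℝ => x⁻¹) atTop)
  have hlim : Tendsto (fun x => 1 + (f x - x) / x) atTop (nhds 1) := by
    simpa using (hrel.trans_tendsto tendsto_inv_atTop_zero).const_add 1
  have hdiff : (fun x => (1 + (f x - x) / x) ^ σ - 1) =O[atTop] fun x => (f x - x) / x := by
    have := (Real.hasDerivAt_rpow_const (p := σ) (Or.inl one_ne_zero)).isBigO_sub.comp_tendsto hlim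
    simpa [Function.comp_def] using this
  have hprod := (isBigO_refl (fun x : ℝ => x ^ σ) atTop).mul (hdiff.trans hrel)
  refine hprod.congr' ?_ ?_
  · filter_upwards [eventually_gt_atTop 0, hlim.eventually_const_lt one_pos] with x hx hpos
    rw [mul_sub_one, ← Real.mul_rpow hx.le hpos.le]
    congr 2
    field_simp
    ring
  · filter_upwards [eventually_gt_atTop 0] with x hx
    rw [Real.rpow_sub_one hx.ne', div_eq_mul_inv]

lemma rpow_isBigO_rpow_atTop {p q : ℝ} (hpq : p ≤ q) :
    (fun x : ℝ => x ^ p) =O[atTop] fun x => x ^ q := by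
  refine IsBigO.of_bound' ?_
  filter_upwards [eventually_ge_atTop 1] with x hx
  have : 0 ≤ x := zero_le_one.trans hx
  rw [Real.norm_of_nonneg (by positivity), Real.norm_of_nonneg (by positivity)]
  exact Real.rpow_le_rpow_of_exponent_le hx hpq

lemma Gamma_ratio_comp_sub_rpow_isBigO {f : ℝ → ℝ}
    (hf : (fun x => f x - x) =O[atTop] fun _ => (1 : ℝ)) (σ : ℝ) :
    (fun x => Real.Gamma (f x + σ) / Real.Gamma (f x) - x ^ σ) =O[atTop] fun x => x ^ (σ - 1) := by
  have hlim : Tendsto f atTop atTop := by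
    obtain ⟨C, hC⟩ := hf.bound
    refine tendsto_atTop_mono' _ ?_ (tendsto_atTop_add_const_right atTop (-C) tendsto_id)
    filter_upwards [hC] with x hx
    rw [Real.norm_eq_abs, norm_one, mul_one, abs_le] at hx
    simp only [id_eq]
    linarith [hx.1]
  have hpow : (fun x => f x ^ (σ - 1)) =O[atTop] fun x => x ^ (σ - 1) := by
    have := (rpow_sub_rpow_isBigO hf (σ - 1)).trans
      (rpow_isBigO_rpow_atTop (sub_one_lt (σ - 1)).le)
    simpa using this.add (isBigO_refl _ _)
  have hratio := ((Gamma_ratio_sub_rpow_isBigO σ).comp_tendsto hlim).trans hpow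
  simpa using hratio.add (rpow_sub_rpow_isBigO hf σ)

end GammaRatio

section NegativeBinomialCoefficients

/-- The coefficient `(c)_k / k!` of `t ^ k` in the binomial series of `(1 - t) ^ (-c)`. -/
noncomputable def negBinom (c : ℝ) (k : ℕ) : ℝ :=
  (ascPochhammer ℝ k).eval c / k.factorial

variable {c : ℝ}

lemma negBinom_zero (c : ℝ) : negBinom c 0 = 1 := by simp [negBinom]

lemma succ_mul_negBinom_succ (c : ℝ) (k : ℕ) :
    ((k : ℝ) + 1) * negBinom c (k + 1) = (c + k) * negBinom c k := by
  rw [negBinom, negBinom, ascPochhammer_succ_eval, Nat.factorial_succ]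
  push_cast
  field_simp

lemma hasSum_negBinom_mul_pow (c : ℝ) {t : ℝ} (ht : |t| < 1) :
    HasSum (fun k : ℕ => negBinom c k * t ^ k) ((1 - t) ^ (-c)) := by
  have hmem : t ∈ Metric.eball (0 : ℝ) 1 := by simpa [enorm_eq_nnnorm, ← NNReal.coe_lt_coe] using ht
  have h := (Real.one_div_one_sub_rpow_hasFPowerSeriesOnBall_zero c).hasSum hmem
  rw [zero_add, one_div, ← Real.rpow_neg (by linarith [abs_lt.mp ht])] at h
  refine h.congr_fun fun k => ?_
  have hcoeff : negBinom c k = Ring.choose (c + k - 1) k := by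
    have := Ring.factorial_nsmul_multichoose_eq_ascPochhammer c k
    rw [nsmul_eq_mul, Polynomial.ascPochhammer_smeval_eq_eval, Ring.multichoose_eq] at this
    rw [negBinom, ← this, mul_div_cancel_left₀ _ (by positivity)]
  simp [hcoeff, mul_comm]

lemma Gamma_add_nat (s : ℝ) (hs : ∀ n : ℕ, s ≠ -n) (n : ℕ) :
    Real.Gamma (s + n) = Real.Gamma s * (ascPochhammer ℝ n).eval s := by
  induction n with
  | zero => simp
  | succ n ih =>
    have : s + n ≠ 0 := fun h => hs n (by linarith)
    rw [ascPochhammer_succ_eval, Nat.cast_succ, ← add_assoc, Real.Gamma_add_one this, ih]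
    ring

lemma negBinom_eq_Gamma_ratio (hc : ∀ n : ℕ, c ≠ -n) (k : ℕ) :
    negBinom c k = (Real.Gamma c)⁻¹ * (Real.Gamma (k + 1 + (c - 1)) / Real.Gamma (k + 1)) := by
  have : Real.Gamma c ≠ 0 := Real.Gamma_ne_zero hc
  rw [Real.Gamma_nat_eq_factorial, show (k : ℝ) + 1 + (c - 1) = c + k by ring, Gamma_add_nat c hc,
    negBinom]
  field_simp

lemma negBinom_comp_isBigO (hc : ∀ n : ℕ, c ≠ -n) {m : ℝ → ℕ}
    (hm : (fun x => (m x : ℝ) - x) =O[atTop] fun _ => (1 : ℝ)) :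
    (fun x => negBinom c (m x)) =O[atTop] fun x : ℝ => x ^ (c - 1) := by
  have hm₁ : (fun x => (m x : ℝ) + 1 - x) =O[atTop] fun _ => (1 : ℝ) := by
    simpa [sub_add_eq_add_sub] using hm.add (isBigO_refl (fun _ => (1 : ℝ)) atTop)
  have hratio := (Gamma_ratio_comp_sub_rpow_isBigO hm₁ (c - 1)).trans
    (rpow_isBigO_rpow_atTop (sub_one_lt (c - 1)).le)
  have hΓ := (hratio.add (isBigO_refl _ _)).const_mul_left (Real.Gamma c)⁻¹
  simpa [negBinom_eq_Gamma_ratio hc] using hΓ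

lemma negBinom_isBigO (hc : ∀ n : ℕ, c ≠ -n) :
    negBinom c =O[atTop] fun k : ℕ => (k : ℝ) ^ (c - 1) := by
  have hfloor : (fun x : ℝ => (⌊x⌋₊ : ℝ) - x) =O[atTop] fun _ => (1 : ℝ) := by
    refine IsBigO.of_bound' ?_
    filter_upwards [eventually_ge_atTop 0] with x hx
    rw [norm_one, Real.norm_eq_abs, abs_le]
    constructor <;> linarith [Nat.floor_le hx, Nat.lt_floor_add_one x]
  simpa [Function.comp_def] using
    (negBinom_comp_isBigO hc hfloor).comp_tendsto tendsto_natCast_atTop_atTop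

lemma inv_const_add_isBigO (s r : ℝ) :
    (fun k : ℕ => (s + k)⁻¹) =O[atTop] fun k : ℕ => (r + k)⁻¹ := by
  have hequiv (q : ℝ) : (fun x : ℝ => q + x) ~[atTop] fun x => x :=
    (isLittleO_const_id_atTop q).add_isEquivalent IsEquivalent.refl
  exact ((hequiv s).trans (hequiv r).symm).inv.isBigO.comp_tendsto tendsto_natCast_atTop_atTop

lemma summable_abs_negBinom_div (hc : ∀ n : ℕ, c ≠ -n) (hc₁ : c < 1) (s : ℝ) :
    Summable fun k : ℕ => |negBinom c k / (s + k)| := by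
  have hbig : (fun k : ℕ => negBinom c k / (s + k)) =O[atTop] fun k : ℕ => (k : ℝ) ^ (c - 2) := by
    refine ((negBinom_isBigO hc).mul (inv_const_add_isBigO s 0)).congr' .rfl ?_
    filter_upwards [eventually_gt_atTop 0] with k hk
    rw [zero_add, ← div_eq_mul_inv, ← Real.rpow_sub_one (by positivity)]
    ring_nf
  exact summable_of_isBigO_nat (Real.summable_nat_rpow.mpr (by linarith)) hbig.norm_left

lemma tendsto_negBinom_atTop_zero (hc : ∀ n : ℕ, c ≠ -n) (hc₁ : c < 1) :
    Tendsto (negBinom c) atTop (nhds 0) :=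
  (negBinom_isBigO hc).trans_tendsto <| by
    simpa [Function.comp_def] using (tendsto_rpow_neg_atTop (sub_pos.mpr hc₁)).comp
      tendsto_natCast_atTop_atTop

end NegativeBinomialCoefficients

section UnitIntervalIntegrals

lemma integrableOn_Ioo_zero_one_rpow {r : ℝ} (hr : -1 < r) :
    IntegrableOn (fun t : ℝ => t ^ r) (Ioo 0 1) :=
  (intervalIntegral.integrableOn_Ioo_rpow_iff one_pos).mpr hr

lemma integral_Ioo_zero_one_rpow {r : ℝ} (hr : -1 < r) :
    ∫ t in Ioo (0 : ℝ) 1, t ^ r = 1 / (r + 1) := by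
  rw [← integral_Ioc_eq_integral_Ioo, ← intervalIntegral.integral_of_le zero_le_one,
    integral_rpow (Or.inl hr), Real.one_rpow, Real.zero_rpow (by linarith), sub_zero]

lemma integral_Ioo_rpow_mul_one_sub_rpow {u v : ℝ} (hu : 0 < u) (hv : 0 < v) :
    ∫ t in Ioo (0 : ℝ) 1, t ^ (u - 1) * (1 - t) ^ (v - 1) =
      Real.Gamma u * Real.Gamma v / Real.Gamma (u + v) := by
  have h := Complex.betaIntegral_eq_Gamma_mul_div (u : ℂ) (v : ℂ) (by simpa) (by simpa)
  rw [← Complex.ofReal_add, Complex.Gamma_ofReal, Complex.Gamma_ofReal, Complex.Gamma_ofReal,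
    Complex.betaIntegral, intervalIntegral.integral_of_le zero_le_one,
    integral_Ioc_eq_integral_Ioo] at h
  have hcast : ∫ t in Ioo (0 : ℝ) 1, (t : ℂ) ^ ((u : ℂ) - 1) * (1 - (t : ℂ)) ^ ((v : ℂ) - 1) =
      ∫ t in Ioo (0 : ℝ) 1, ((t ^ (u - 1) * (1 - t) ^ (v - 1) : ℝ) : ℂ) := by
    refine setIntegral_congr_fun measurableSet_Ioo fun t ht => ?_
    have ht₁ : 0 ≤ 1 - t := by linarith [ht.2]
    push_cast [Complex.ofReal_cpow ht.1.le, Complex.ofReal_cpow ht₁]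
    rfl
  rw [hcast, integral_complex_ofReal] at h
  exact_mod_cast h

lemma integrableOn_Ioo_rpow_mul_one_sub_rpow {u v : ℝ} (hu : 0 < u) (hv : 0 < v) :
    IntegrableOn (fun t : ℝ => t ^ (u - 1) * (1 - t) ^ (v - 1)) (Ioo 0 1) := by
  have hne : ∫ t in Ioo (0 : ℝ) 1, t ^ (u - 1) * (1 - t) ^ (v - 1) ≠ 0 := by
    rw [integral_Ioo_rpow_mul_one_sub_rpow hu hv]
    have := Real.Gamma_pos_of_pos hu
    have := Real.Gamma_pos_of_pos hv
    have := Real.Gamma_pos_of_pos (add_pos hu hv)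
    positivity
  exact not_imp_comm.mp integral_undef hne

lemma integrable_of_hasSum {α E : Type*} [MeasurableSpace α] {μ : Measure α}
    [NormedAddCommGroup E] {F : ℕ → α → E} {f : α → E} (hF : ∀ i, Integrable (F i) μ)
    (hsum : Summable fun i => ∫ x, ‖F i x‖ ∂μ) (hf : ∀ᵐ x ∂μ, HasSum (F · x) (f x)) :
    Integrable f μ := by
  refine ⟨aestronglyMeasurable_of_tendsto_ae atTop
    (fun n => Finset.aestronglyMeasurable_fun_sum (Finset.range n) fun i _ => (hF i).1)
    (hf.mono fun x hx => hx.tendsto_sum_nat), ?_⟩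
  have hterm (i : ℕ) : ∫⁻ x, ‖F i x‖ₑ ∂μ = ENNReal.ofReal (∫ x, ‖F i x‖ ∂μ) :=
    (ofReal_integral_norm_eq_lintegral_enorm (hF i)).symm
  calc ∫⁻ x, ‖f x‖ₑ ∂μ ≤ ∫⁻ x, ∑' i, ‖F i x‖ₑ ∂μ := by
        refine lintegral_mono_ae (hf.mono fun x hx => ?_)
        rw [← hx.tsum_eq]
        exact enorm_tsum_le_tsum_enorm
    _ = ∑' i, ENNReal.ofReal (∫ x, ‖F i x‖ ∂μ) := by
        rw [lintegral_tsum fun i => (hF i).1.enorm]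
        exact tsum_congr hterm
    _ < ⊤ := hsum.tsum_ofReal_lt_top

variable {w : ℕ → ℝ} {s : ℝ} {g : ℝ → ℝ}

lemma integrableOn_mul_rpow_add_nat (w : ℕ → ℝ) (hs : 0 < s) (k : ℕ) :
    IntegrableOn (fun t : ℝ => w k * t ^ (s - 1 + k)) (Ioo 0 1) :=
  (integrableOn_Ioo_zero_one_rpow (by linarith [k.cast_nonneg (α := ℝ)])).const_mul _

lemma integral_mul_rpow_add_nat (w : ℕ → ℝ) (hs : 0 < s) (k : ℕ) :
    ∫ t in Ioo (0 : ℝ) 1, w k * t ^ (s - 1 + k) = w k / (s + k) := by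
  rw [integral_const_mul, integral_Ioo_zero_one_rpow (by linarith [k.cast_nonneg (α := ℝ)]),
    mul_one_div]
  ring_nf

lemma summable_integral_norm_mul_rpow_add_nat (hs : 0 < s)
    (hw : Summable fun k : ℕ => |w k / (s + k)|) :
    Summable fun k : ℕ => ∫ t in Ioo (0 : ℝ) 1, ‖w k * t ^ (s - 1 + k)‖ := by
  refine hw.congr fun k => ?_
  have hk : 0 < s + k := by positivity
  rw [abs_div, abs_of_pos hk, ← integral_mul_rpow_add_nat (fun k => |w k|) hs]
  refine setIntegral_congr_fun measurableSet_Ioo fun t ht => ?_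
  simp [abs_of_nonneg (Real.rpow_nonneg ht.1.le _)]

lemma ae_hasSum_mul_rpow_add_nat
    (hg : ∀ t ∈ Ioo (0 : ℝ) 1, HasSum (fun k => w k * t ^ k) (g t)) :
    ∀ᵐ t ∂volume.restrict (Ioo (0 : ℝ) 1),
      HasSum (fun k : ℕ => w k * t ^ (s - 1 + k)) (t ^ (s - 1) * g t) := by
  filter_upwards [ae_restrict_mem measurableSet_Ioo] with t ht
  refine ((hg t ht).mul_left (t ^ (s - 1))).congr_fun fun k => ?_
  rw [Real.rpow_add ht.1, Real.rpow_natCast]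
  ring

lemma integrableOn_rpow_mul_of_hasSum (hs : 0 < s) (hw : Summable fun k : ℕ => |w k / (s + k)|)
    (hg : ∀ t ∈ Ioo (0 : ℝ) 1, HasSum (fun k => w k * t ^ k) (g t)) :
    IntegrableOn (fun t => t ^ (s - 1) * g t) (Ioo 0 1) :=
  integrable_of_hasSum (integrableOn_mul_rpow_add_nat w hs)
    (summable_integral_norm_mul_rpow_add_nat hs hw) (ae_hasSum_mul_rpow_add_nat hg)

lemma hasSum_integral_rpow_mul (hs : 0 < s) (hw : Summable fun k : ℕ => |w k / (s + k)|)
    (hg : ∀ t ∈ Ioo (0 : ℝ) 1, HasSum (fun k => w k * t ^ k) (g t)) :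
    HasSum (fun k : ℕ => w k / (s + k)) (∫ t in Ioo (0 : ℝ) 1, t ^ (s - 1) * g t) := by
  have h := hasSum_integral_of_summable_integral_norm (integrableOn_mul_rpow_add_nat w hs)
    (summable_integral_norm_mul_rpow_add_nat hs hw)
  simp only [integral_mul_rpow_add_nat w hs] at h
  rwa [integral_congr_ae ((ae_hasSum_mul_rpow_add_nat hg).mono fun t ht => ht.tsum_eq)] at h

end UnitIntervalIntegrals

section BetaSeries

variable {c : ℝ}

lemma hasSum_negBinom_div_of_pos (hc : ∀ n : ℕ, c ≠ -n) (hc₁ : c < 1) {s : ℝ} (hs : 0 < s) :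
    HasSum (fun k : ℕ => negBinom c k / (s + k))
      (Real.Gamma s * Real.Gamma (1 - c) / Real.Gamma (s + 1 - c)) := by
  have h := hasSum_integral_rpow_mul hs (summable_abs_negBinom_div hc hc₁ s)
    (g := fun t => (1 - t) ^ (-c)) fun t ht =>
      hasSum_negBinom_mul_pow c (by rw [abs_of_pos ht.1]; exact ht.2)
  have hbeta := integral_Ioo_rpow_mul_one_sub_rpow hs (sub_pos.mpr hc₁)
  rw [show 1 - c - 1 = -c by ring, ← add_sub_assoc] at hbeta
  rwa [hbeta] at h

lemma sum_range_negBinom_div_telescope {s : ℝ} (hs : ∀ n : ℕ, s ≠ -n) (n : ℕ) :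
    ∑ k ∈ Finset.range n,
        (s * (negBinom c k / (s + k)) - (s + 1 - c) * (negBinom c k / (s + 1 + k))) =
      n * negBinom c n / (s + n) := by
  have hne (k : ℕ) : s + k ≠ 0 := fun h => hs k (by linarith)
  induction n with
  | zero => simp
  | succ n ih =>
    have hn₁ : s + 1 + n ≠ 0 := by simpa [add_right_comm, add_assoc] using hne (n + 1)
    rw [Finset.sum_range_succ, ih, Nat.cast_succ, succ_mul_negBinom_succ,
      show s + ((n : ℝ) + 1) = s + 1 + n by ring]
    field_simp [hne n]
    ring

lemma tsum_negBinom_div_recurrence (hc : ∀ n : ℕ, c ≠ -n) (hc₁ : c < 1) {s : ℝ}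
    (hs : ∀ n : ℕ, s ≠ -n) :
    s * ∑' k : ℕ, negBinom c k / (s + k) = (s + 1 - c) * ∑' k : ℕ, negBinom c k / (s + 1 + k) := by
  have hsum (s : ℝ) := (summable_abs_negBinom_div hc hc₁ s).of_abs.hasSum
  have hdiff := (((hsum s).mul_left s).sub ((hsum (s + 1)).mul_left (s + 1 - c))).tendsto_sum_nat
  simp only [sum_range_negBinom_div_telescope hs] at hdiff
  have hratio : (fun n : ℕ => n * negBinom c n / (s + n)) =O[atTop] negBinom c := by
    have := ((isBigO_refl (fun n : ℕ => n * negBinom c n) atTop)).mul (inv_const_add_isBigO s 0)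
    refine this.congr' .rfl ?_
    filter_upwards [eventually_gt_atTop 0] with n hn
    rw [zero_add]
    field_simp
  exact sub_eq_zero.mp (tendsto_nhds_unique hdiff
    (hratio.trans_tendsto (tendsto_negBinom_atTop_zero hc hc₁)))

lemma tsum_negBinom_div (hc : ∀ n : ℕ, c ≠ -n) (hc₁ : c < 1) {s : ℝ} (hs : ∀ n : ℕ, s ≠ -n) :
    ∑' k : ℕ, negBinom c k / (s + k) =
      Real.Gamma s * Real.Gamma (1 - c) / Real.Gamma (s + 1 - c) := by
  obtain ⟨n, hn⟩ := exists_nat_gt (-s)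
  induction n generalizing s with
  | zero => exact (hasSum_negBinom_div_of_pos hc hc₁ (by simpa using hn)).tsum_eq
  | succ n ih =>
    have hs₀ : s ≠ 0 := by simpa using hs 0
    refine mul_left_cancel₀ hs₀ ?_
    push_cast at hn
    rw [tsum_negBinom_div_recurrence hc hc₁ hs, ih (ne_neg_natCast_add_one hs) (by linarith),
      Real.Gamma_add_one hs₀]
    rcases eq_or_ne (s + 1 - c) 0 with hz | hz
    · simp [hz]
    rw [show s + 1 + 1 - c = s + 1 - c + 1 by ring, Real.Gamma_add_one hz]
    field_simp

lemma tsum_negBinom_div_half_sub (hc : ∀ n : ℕ, c ≠ -n) (hc₁ : c < 1) {m : ℕ} (hm : 1 / 2 - c < m) :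
    ∑' k : ℕ, negBinom c k / (1 / 2 - m + k) =
      Real.cos (Real.pi * (1 - c)) * Real.Gamma (1 - c) *
        (Real.Gamma (m + 1 / 2 + (c - 1)) / Real.Gamma (m + 1 / 2)) := by
  have hhalf (k : ℕ) : (1 / 2 - m : ℝ) ≠ -k := by
    intro h
    have : 1 + 2 * k = 2 * m := by exact_mod_cast (by linarith : (1 : ℝ) + 2 * k = 2 * m)
    omega
  have refl₁ := Real.Gamma_mul_Gamma_one_sub (m + 1 / 2)
  have refl₂ := Real.Gamma_mul_Gamma_one_sub (m + 1 / 2 + (c - 1))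
  rw [show Real.pi * ((m : ℝ) + 1 / 2) = Real.pi / 2 + m * Real.pi by ring,
    Real.sin_add_nat_mul_pi, Real.sin_pi_div_two, mul_one,
    show 1 - ((m : ℝ) + 1 / 2) = 1 / 2 - m by ring] at refl₁
  rw [show Real.pi * ((m : ℝ) + 1 / 2 + (c - 1)) =
      Real.pi / 2 - Real.pi * (1 - c) + m * Real.pi by ring,
    Real.sin_add_nat_mul_pi, Real.sin_pi_div_two_sub,
    show 1 - ((m : ℝ) + 1 / 2 + (c - 1)) = 1 / 2 - m + 1 - c by ring] at refl₂
  have hΓ₁ : Real.Gamma (m + 1 / 2) ≠ 0 := (Real.Gamma_pos_of_pos (by positivity)).ne'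
  have hΓ₂ : Real.Gamma (m + 1 / 2 + (c - 1)) ≠ 0 := (Real.Gamma_pos_of_pos (by linarith)).ne'
  rw [tsum_negBinom_div hc hc₁ hhalf, eq_div_of_mul_eq hΓ₁ ((mul_comm _ _).trans refl₁),
    eq_div_of_mul_eq hΓ₂ ((mul_comm _ _).trans refl₂)]
  rcases eq_or_ne (Real.cos (Real.pi * (1 - c))) 0 with hcos | hcos
  · simp [hcos]
  · field_simp [Real.pi_ne_zero]

end BetaSeries

section HeadAndTail

/-- The remainder of the binomial series of `(1 - t) ^ (-c)` after `m` terms, divided by `t ^ m`. -/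
noncomputable def negBinomTail (c : ℝ) (m : ℕ) (t : ℝ) : ℝ :=
  ∑' i : ℕ, negBinom c (m + i) * t ^ i

/-- The `m`-th partial sum of the binomial series of `(1 - t) ^ (-c)` with its coefficients in
reversed order: at `t` it is `t ^ (m - 1)` times the partial sum at `t⁻¹`. -/
noncomputable def negBinomHead (c : ℝ) (m : ℕ) (t : ℝ) : ℝ :=
  ∑ i ∈ Finset.range m, negBinom c (m - 1 - i) * t ^ i

variable {c t : ℝ}

lemma pow_mul_sum_negBinom_mul_inv_pow (c : ℝ) (m : ℕ) (ht : t ≠ 0) :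
    t ^ m * ∑ j ∈ Finset.range m, negBinom c j * t⁻¹ ^ j = t * negBinomHead c m t := by
  rw [negBinomHead, ← Finset.sum_range_reflect, Finset.mul_sum, Finset.mul_sum]
  refine Finset.sum_congr rfl fun i hi => ?_
  have hm : m = (m - 1 - i) + (i + 1) := by have := Finset.mem_range.mp hi; omega
  have hpow : t ^ m * t⁻¹ ^ (m - 1 - i) = t ^ (i + 1) := by
    conv_lhs => rw [hm]
    rw [pow_add, show m - 1 - i + (i + 1) - 1 - i = m - 1 - i by omega, mul_right_comm,
      ← mul_pow, mul_inv_cancel₀ ht, one_pow, one_mul]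
  rw [mul_left_comm, hpow]
  ring

lemma summable_negBinom_add_mul_pow (c : ℝ) (m : ℕ) (ht : t ∈ Ioo (0 : ℝ) 1) :
    Summable fun i => negBinom c (m + i) * t ^ i := by
  have habs : |t| < 1 := by rw [abs_of_pos ht.1]; exact ht.2
  have hshift := (summable_nat_add_iff m).mpr (hasSum_negBinom_mul_pow c habs).summable
  refine (hshift.mul_left (t ^ m)⁻¹).congr fun i => ?_
  have : t ≠ 0 := ht.1.ne'
  rw [pow_add, add_comm i m]
  field_simp

lemma one_sub_rpow_eq_sum_add_tail (c : ℝ) (m : ℕ) (ht : t ∈ Ioo (0 : ℝ) 1) :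
    (1 - t) ^ (-c) = ∑ j ∈ Finset.range m, negBinom c j * t ^ j + t ^ m * negBinomTail c m t := by
  have habs : |t| < 1 := by rw [abs_of_pos ht.1]; exact ht.2
  have hsum := hasSum_negBinom_mul_pow c habs
  rw [← hsum.tsum_eq, ← hsum.summable.sum_add_tsum_nat_add m, negBinomTail, ← tsum_mul_left]
  congr 2 with i
  rw [add_comm i m]
  ring

lemma summable_abs_negBinom_add_div (hc : ∀ n : ℕ, c ≠ -n) (hc₁ : c < 1) (m : ℕ) (s : ℝ) :
    Summable fun i : ℕ => |negBinom c (m + i) / (s + i)| := by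
  refine ((summable_nat_add_iff m).mpr (summable_abs_negBinom_div hc hc₁ (s - m))).congr fun i => ?_
  rw [add_comm i m]
  push_cast
  ring_nf

lemma integrableOn_rpow_mul_negBinomTail (hc : ∀ n : ℕ, c ≠ -n) (hc₁ : c < 1) (m : ℕ) {s : ℝ}
    (hs : 0 < s) : IntegrableOn (fun t => t ^ (s - 1) * negBinomTail c m t) (Ioo 0 1) :=
  integrableOn_rpow_mul_of_hasSum hs (summable_abs_negBinom_add_div hc hc₁ m s)
    fun _ ht => (summable_negBinom_add_mul_pow c m ht).hasSum

lemma rpow_mul_negBinomHead (c : ℝ) (m : ℕ) (s : ℝ) (ht : 0 < t) :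
    t ^ (s - 1) * negBinomHead c m t =
      ∑ i ∈ Finset.range m, negBinom c (m - 1 - i) * t ^ (s - 1 + i) := by
  rw [negBinomHead, Finset.mul_sum]
  refine Finset.sum_congr rfl fun i _ => ?_
  rw [Real.rpow_add ht, Real.rpow_natCast]
  ring

lemma integrableOn_rpow_mul_negBinomHead (c : ℝ) (m : ℕ) {s : ℝ} (hs : 0 < s) :
    IntegrableOn (fun t => t ^ (s - 1) * negBinomHead c m t) (Ioo 0 1) :=
  (integrable_finsetSum (Finset.range m) fun i _ =>
    integrableOn_mul_rpow_add_nat (fun i => negBinom c (m - 1 - i)) hs i).congr <|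
      (ae_restrict_mem measurableSet_Ioo).mono fun _ ht => (rpow_mul_negBinomHead c m s ht.1).symm

lemma integral_rpow_mul_negBinomHead (c : ℝ) (m : ℕ) {s : ℝ} (hs : 0 < s) :
    ∫ t in Ioo (0 : ℝ) 1, t ^ (s - 1) * negBinomHead c m t =
      ∑ j ∈ Finset.range m, negBinom c j / (m - 1 + s - j) := by
  rw [setIntegral_congr_fun measurableSet_Ioo fun t ht => rpow_mul_negBinomHead c m s ht.1,
    integral_finsetSum _ fun i _ =>
      integrableOn_mul_rpow_add_nat (fun i => negBinom c (m - 1 - i)) hs i,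
    ← Finset.sum_range_reflect]
  refine Finset.sum_congr rfl fun j hj => ?_
  have hj' : j ≤ m - 1 := by have := Finset.mem_range.mp hj; omega
  have hm : 1 ≤ m := by have := Finset.mem_range.mp hj; omega
  rw [integral_mul_rpow_add_nat (fun i => negBinom c (m - 1 - i)) hs, Nat.sub_sub_self hj',
    Nat.cast_sub hj', Nat.cast_sub hm]
  push_cast
  ring_nf

lemma integral_tail_sub_integral_head (hc : ∀ n : ℕ, c ≠ -n) (hc₁ : c < 1) (m : ℕ) :
    (∫ t in Ioo (0 : ℝ) 1, t ^ (-(1 / 2) : ℝ) * negBinomTail c m t) -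
      ∫ t in Ioo (0 : ℝ) 1, t ^ (-(1 / 2) : ℝ) * negBinomHead c m t =
    ∑' k : ℕ, negBinom c k / (1 / 2 - m + k) := by
  have htail := (hasSum_integral_rpow_mul one_half_pos
    (summable_abs_negBinom_add_div hc hc₁ m (1 / 2))
    fun t ht => (summable_negBinom_add_mul_pow c m ht).hasSum).tsum_eq
  have hhead := integral_rpow_mul_negBinomHead c m one_half_pos
  have hsum := (summable_abs_negBinom_div hc hc₁ (1 / 2 - m)).of_abs
  norm_num only at htail hhead
  rw [hhead, ← hsum.sum_add_tsum_nat_add m]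
  simp only [negBinomTail]
  rw [← htail, sub_eq_neg_add, ← Finset.sum_neg_distrib]
  congr 1
  · refine Finset.sum_congr rfl fun j _ => ?_
    rw [← div_neg]
    ring_nf
  · refine tsum_congr fun i => ?_
    rw [add_comm i m]
    push_cast
    ring_nf

end HeadAndTail

section BinomialMean

variable {c t : ℝ}

/-- The expectation of `1 / (c + R)` for a binomial random variable `R` with `n` trials and
success probability `1 - t`. -/
noncomputable def binomInvMean (c : ℝ) (n : ℕ) (t : ℝ) : ℝ :=
  ∑ r ∈ Finset.range (n + 1), n.choose r * (1 - t) ^ r * t ^ (n - r) / (c + r)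

lemma sum_binomial_weights (n : ℕ) (t : ℝ) :
    ∑ r ∈ Finset.range (n + 1), (n.choose r * (1 - t) ^ r * t ^ (n - r) : ℝ) = 1 := by
  have := add_pow (1 - t) t n
  rw [sub_add_cancel, one_pow] at this
  exact (Finset.sum_congr rfl fun r _ => by ring).trans this.symm

lemma binomInvMean_succ (hc : ∀ n : ℕ, c ≠ -n) (n : ℕ) (t : ℝ) :
    (c + n + 1) * binomInvMean c (n + 1) t = 1 + t * (n + 1) * binomInvMean c n t := by
  have hne (r : ℕ) : c + r ≠ 0 := fun h => hc r (by linarith)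
  have hterm (r : ℕ) (hr : r ∈ Finset.range (n + 1)) :
      ((n + 1).choose r * (1 - t) ^ r * t ^ (n + 1 - r) : ℝ) * ((n + 1 - r) / (c + r)) =
        t * (n + 1) * (n.choose r * (1 - t) ^ r * t ^ (n - r) / (c + r)) := by
    have hrn : r ≤ n := Nat.lt_succ_iff.mp (Finset.mem_range.mp hr)
    have hchoose : ((n + 1).choose r : ℝ) * (n + 1 - r) = n.choose r * (n + 1) := by
      have := Nat.choose_mul_succ_eq n r
      rw [← Nat.cast_add_one, ← Nat.cast_sub (by omega)]
      exact_mod_cast this.symm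
    rw [Nat.succ_sub hrn, pow_succ]
    linear_combination ((1 - t) ^ r * t ^ (n - r) * t / (c + r)) * hchoose
  have hsplit (r : ℕ) (w : ℝ) :
      (c + n + 1) * (w / (c + r)) - w = w * ((n + 1 - r) / (c + r)) := by
    field_simp [hne r]
    ring
  have hsum : (c + n + 1) * binomInvMean c (n + 1) t -
      ∑ r ∈ Finset.range (n + 1 + 1), ((n + 1).choose r * (1 - t) ^ r * t ^ (n + 1 - r) : ℝ) =
        t * (n + 1) * binomInvMean c n t := by
    rw [binomInvMean, binomInvMean, Finset.mul_sum, Finset.mul_sum, ← Finset.sum_sub_distrib,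
      ← Finset.sum_congr rfl hterm, Finset.sum_congr rfl fun r _ => hsplit r _,
      Finset.sum_range_succ _ (n + 1)]
    push_cast
    rw [sub_self, zero_div, mul_zero, add_zero]
  rwa [sum_binomial_weights, sub_eq_iff_eq_add'] at hsum

lemma negBinomHead_succ (c : ℝ) (m : ℕ) (t : ℝ) :
    negBinomHead c (m + 1) t = negBinom c m + t * negBinomHead c m t := by
  rw [negBinomHead, Finset.sum_range_succ', negBinomHead, Finset.mul_sum]
  simp only [add_tsub_cancel_right, pow_zero, mul_one, tsub_zero, add_comm (negBinom c m)]
  congr 1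
  refine Finset.sum_congr rfl fun i _ => ?_
  rw [show m - (i + 1) = m - 1 - i by omega]
  ring

lemma negBinomHead_succ_eq_binomInvMean (hc : ∀ n : ℕ, c ≠ -n) (n : ℕ) (t : ℝ) :
    negBinomHead c (n + 1) t = (n + 1) * negBinom c (n + 1) * binomInvMean c n t := by
  induction n with
  | zero =>
    have hc₀ : c ≠ 0 := by simpa using hc 0
    have := succ_mul_negBinom_succ c 0
    simp_all [negBinomHead, binomInvMean, negBinom_zero]
  | succ n ih =>
    have hrec := succ_mul_negBinom_succ c (n + 1)
    push_cast at hrec ⊢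
    rw [negBinomHead_succ, ih, hrec]
    linear_combination (-negBinom c (n + 1)) * binomInvMean_succ hc n t

lemma negBinom_one (k : ℕ) : negBinom 1 k = 1 := by
  rw [negBinom, ascPochhammer_eval_one, div_self (by positivity)]

lemma binomInvMean_one (n : ℕ) (t : ℝ) :
    (n + 1) * (1 - t) * binomInvMean 1 n t = 1 - t ^ (n + 1) := by
  have hone : ∀ k : ℕ, (1 : ℝ) ≠ -k := fun k h => by linarith [k.cast_nonneg (α := ℝ)]
  have h := negBinomHead_succ_eq_binomInvMean hone n t
  simp only [negBinomHead, negBinom_one, one_mul, mul_one] at h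
  rw [← mul_neg_geom_sum t (n + 1), h]
  ring

lemma sum_binomial_weights_div_le_one (n : ℕ) (ht : t ∈ Icc (0 : ℝ) 1) :
    (n + 1) * (n + 2) * (1 - t) ^ 2 * ∑ r ∈ Finset.range (n + 1),
      (n.choose r * (1 - t) ^ r * t ^ (n - r) / ((r + 1) * (r + 2)) : ℝ) ≤ 1 := by
  have ht₀ := ht.1
  have ht₁ : 0 ≤ 1 - t := by linarith [ht.2]
  have hterm (r : ℕ) : ((n + 1) * (n + 2) * (1 - t) ^ 2 *
      (n.choose r * (1 - t) ^ r * t ^ (n - r) / ((r + 1) * (r + 2))) : ℝ) =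
        (n + 2).choose (r + 2) * (1 - t) ^ (r + 2) * t ^ (n + 2 - (r + 2)) := by
    have h₁ : ((n + 1) * n.choose r : ℝ) = (n + 1).choose (r + 1) * (r + 1) :=
      mod_cast Nat.add_one_mul_choose_eq n r
    have h₂ : ((n + 2) * (n + 1).choose (r + 1) : ℝ) = (n + 2).choose (r + 2) * (r + 2) :=
      mod_cast Nat.add_one_mul_choose_eq (n + 1) (r + 1)
    rw [Nat.add_sub_add_right]
    field_simp
    linear_combination (1 - t) ^ (r + 2) * t ^ (n - r) * ((n + 2) * h₁ + (r + 1) * h₂)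
  have hsum := sum_binomial_weights (n + 2) t
  rw [Finset.sum_range_succ', Finset.sum_range_succ'] at hsum
  rw [Finset.mul_sum, Finset.sum_congr rfl fun r _ => hterm r]
  have (k : ℕ) : 0 ≤ ((n + 2).choose k * (1 - t) ^ k * t ^ (n + 2 - k) : ℝ) := by positivity
  exact ((le_add_of_nonneg_right (this 1)).trans (le_add_of_nonneg_right (this 0))).trans hsum.le

end BinomialMean

section HeadAndTailBounds

variable {c t : ℝ}

lemma exists_abs_inv_sub_inv_le (hc : ∀ n : ℕ, c ≠ -n) :
    ∃ K : ℝ, ∀ r : ℕ, |1 / (c + r) - 1 / (1 + r)| ≤ K * (1 / ((r + 1) * (r + 2))) := by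
  have hne (r : ℕ) : c + r ≠ 0 := fun h => hc r (by linarith)
  obtain ⟨K, hK⟩ := (isBigO_nat_atTop_iff fun r h => absurd h (by positivity)).mp
    (inv_const_add_isBigO c 2)
  refine ⟨|1 - c| * K, fun r => ?_⟩
  have hr₁ : (0 : ℝ) < 1 + r := by positivity
  have hr₂ : (0 : ℝ) < 2 + r := by positivity
  have hr := hK r
  rw [Real.norm_eq_abs, Real.norm_eq_abs, abs_of_pos (inv_pos.mpr hr₂)] at hr
  calc |1 / (c + r) - 1 / (1 + r)| = |1 - c| * (1 + r : ℝ)⁻¹ * |(c + r)⁻¹| := by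
        rw [← abs_of_pos (inv_pos.mpr hr₁), ← abs_mul, ← abs_mul]
        congr 1
        field_simp [hne r]
        ring
    _ ≤ |1 - c| * (1 + r : ℝ)⁻¹ * (K * (2 + r : ℝ)⁻¹) := by gcongr
    _ = |1 - c| * K * (1 / ((r + 1) * (r + 2))) := by
        rw [add_comm (1 : ℝ), add_comm (2 : ℝ)]
        field_simp

lemma abs_binomInvMean_sub_le {K : ℝ}
    (hK : ∀ r : ℕ, |1 / (c + r) - 1 / (1 + r)| ≤ K * (1 / ((r + 1) * (r + 2)))) (n : ℕ)
    (ht : t ∈ Icc (0 : ℝ) 1) :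
    |binomInvMean c n t - binomInvMean 1 n t| ≤ K * ∑ r ∈ Finset.range (n + 1),
      (n.choose r * (1 - t) ^ r * t ^ (n - r) / ((r + 1) * (r + 2)) : ℝ) := by
  have ht₀ := ht.1
  have ht₁ : 0 ≤ 1 - t := by linarith [ht.2]
  rw [binomInvMean, binomInvMean, ← Finset.sum_sub_distrib, Finset.mul_sum]
  refine (Finset.abs_sum_le_sum_abs _ _).trans (Finset.sum_le_sum fun r _ => ?_)
  have hw : 0 ≤ (n.choose r * (1 - t) ^ r * t ^ (n - r) : ℝ) := by positivity
  calc _ = (n.choose r * (1 - t) ^ r * t ^ (n - r) : ℝ) * |1 / (c + r) - 1 / (1 + r)| := by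
        rw [← abs_of_nonneg hw, ← abs_mul, abs_of_nonneg hw]
        ring_nf
    _ ≤ _ := (mul_le_mul_of_nonneg_left (hK r) hw).trans_eq (by ring)

lemma pow_mul_one_add_mul_one_sub_le_one (m : ℕ) (ht : t ∈ Icc (0 : ℝ) 1) :
    t ^ m * (1 + m * (1 - t)) ≤ 1 := by
  have ht₀ := ht.1
  have hbernoulli := one_add_mul_le_pow (a := 1 - t) (by linarith [ht.2]) m
  calc t ^ m * (1 + m * (1 - t)) ≤ t ^ m * (1 + (1 - t)) ^ m := by gcongr
    _ = (t * (1 + (1 - t))) ^ m := (mul_pow _ _ _).symm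
    _ ≤ 1 := pow_le_one₀ (by nlinarith [ht.1, ht.2]) (by nlinarith [ht.1, ht.2])

lemma add_one_mul_sum_binomial_weights_div_le (n : ℕ) (ht : t ∈ Icc (0 : ℝ) 1) :
    (n + 1) * (1 - t) * (1 + (n + 1) * (1 - t)) * ∑ r ∈ Finset.range (n + 1),
      (n.choose r * (1 - t) ^ r * t ^ (n - r) / ((r + 1) * (r + 2)) : ℝ) ≤ 2 := by
  have ht₀ := ht.1
  have ht₁ : 0 ≤ 1 - t := by linarith [ht.2]
  set S := ∑ r ∈ Finset.range (n + 1),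
    (n.choose r * (1 - t) ^ r * t ^ (n - r) / ((r + 1) * (r + 2)) : ℝ)
  have : 0 ≤ S := Finset.sum_nonneg fun r _ => by positivity
  have hS₁ : S ≤ binomInvMean 1 n t := Finset.sum_le_sum fun r _ => by
    rw [add_comm (1 : ℝ)]
    gcongr
    nlinarith [r.cast_nonneg (α := ℝ)]
  have hfirst : (n + 1) * (1 - t) * S ≤ 1 :=
    (mul_le_mul_of_nonneg_left hS₁ (by positivity)).trans <| by
      rw [binomInvMean_one]
      linarith [pow_nonneg ht₀ (n + 1)]
  have hsecond := sum_binomial_weights_div_le_one n ht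
  have : 0 ≤ (n + 1) * (1 - t) ^ 2 * S := by positivity
  linarith

lemma exists_abs_one_sub_mul_negBinomHead_sub_le (hc : ∀ n : ℕ, c ≠ -n) :
    ∃ K : ℝ, ∀ m : ℕ, ∀ t ∈ Icc (0 : ℝ) 1,
      |(1 - t) * negBinomHead c m t - negBinom c m| * (1 + m * (1 - t)) ≤ K * |negBinom c m| := by
  obtain ⟨K, hK⟩ := exists_abs_inv_sub_inv_le hc
  have hK₀ : 0 ≤ K := by
    have := (abs_nonneg _).trans (hK 0)
    norm_num at this
    linarith
  refine ⟨2 * K + 1, fun m t ht => ?_⟩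
  have ht₀ := ht.1
  have ht₁ : 0 ≤ 1 - t := by linarith [ht.2]
  rcases m with _ | n
  · norm_num [negBinomHead, negBinom_zero]
    exact hK₀
  have hdiff := abs_binomInvMean_sub_le hK n ht
  have hsum := add_one_mul_sum_binomial_weights_div_le n ht
  have hpow := pow_mul_one_add_mul_one_sub_le_one (n + 1) ht
  have hsplit : (1 - t) * negBinomHead c (n + 1) t - negBinom c (n + 1) = negBinom c (n + 1) *
      ((n + 1) * (1 - t) * (binomInvMean c n t - binomInvMean 1 n t) - t ^ (n + 1)) := by
    rw [negBinomHead_succ_eq_binomInvMean hc]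
    linear_combination negBinom c (n + 1) * binomInvMean_one n t
  rw [hsplit, abs_mul, mul_assoc, mul_comm]
  refine mul_le_mul_of_nonneg_right ?_ (abs_nonneg _)
  push_cast at hpow ⊢
  set S := ∑ r ∈ Finset.range (n + 1),
    (n.choose r * (1 - t) ^ r * t ^ (n - r) / ((r + 1) * (r + 2)) : ℝ)
  calc _ ≤ (|(n + 1) * (1 - t) * (binomInvMean c n t - binomInvMean 1 n t)| + |t ^ (n + 1)|) *
        (1 + (n + 1) * (1 - t)) := by gcongr; exact abs_sub _ _
    _ ≤ ((n + 1) * (1 - t) * (K * S) + t ^ (n + 1)) * (1 + (n + 1) * (1 - t)) := by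
        rw [abs_mul, abs_of_nonneg (by positivity : (0 : ℝ) ≤ (n + 1) * (1 - t)),
          abs_of_nonneg (by positivity : 0 ≤ t ^ (n + 1))]
        gcongr
    _ ≤ 2 * K + 1 := by linarith [mul_le_mul_of_nonneg_left hsum hK₀]

lemma negBinom_add_eq_mul (hc₁ : c < 1) {m : ℕ} (hm : 0 ≤ c + m) (i : ℕ) :
    ∃ θ ∈ Icc (0 : ℝ) 1,
      negBinom c (m + i) = θ * negBinom c m ∧ (m + 1) * (1 - θ) ≤ i * (1 - c) := by
  induction i with
  | zero => exact ⟨1, by simp, by simp, by simp⟩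
  | succ i ih =>
    obtain ⟨θ, ⟨hθ₀, hθ₁⟩, heq, hle⟩ := ih
    have hden : (0 : ℝ) < m + i + 1 := by positivity
    set ρ : ℝ := (c + m + i) / (m + i + 1) with hρ
    have : 0 ≤ ρ := div_nonneg (by positivity) hden.le
    have hρ₁ : (m + 1) * (1 - ρ) ≤ 1 - c := by
      rw [hρ, one_sub_div hden.ne', mul_div_assoc', div_le_iff₀ hden]
      nlinarith [mul_nonneg (i.cast_nonneg (α := ℝ)) (sub_nonneg.mpr hc₁.le)]
    have hρ₂ : ρ ≤ 1 := (div_le_one hden).mpr (by linarith)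
    refine ⟨ρ * θ, ⟨by positivity, mul_le_one₀ hρ₂ hθ₀ hθ₁⟩, ?_, ?_⟩
    · rw [mul_assoc, ← heq, hρ, div_mul_eq_mul_div, eq_div_iff hden.ne', ← add_assoc]
      have := succ_mul_negBinom_succ c (m + i)
      push_cast at this
      linear_combination this
    · push_cast
      have hm₁ : (0 : ℝ) ≤ m + 1 := by positivity
      nlinarith [mul_nonneg hm₁ (mul_nonneg (sub_nonneg.mpr hρ₂) (sub_nonneg.mpr hθ₁))]

lemma abs_negBinom_add_sub_le (hc₁ : c < 1) {m : ℕ} (hm : 0 ≤ c + m) (i : ℕ) :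
    |negBinom c (m + i) - negBinom c m| ≤ |negBinom c m| ∧
      |negBinom c (m + i) - negBinom c m| ≤ (1 - c) / (m + 1) * |negBinom c m| * i := by
  obtain ⟨θ, ⟨hθ₀, hθ₁⟩, heq, hle⟩ := negBinom_add_eq_mul hc₁ hm i
  rw [heq, ← sub_one_mul, abs_mul, abs_sub_comm, abs_of_nonneg (sub_nonneg.mpr hθ₁),
    mul_right_comm]
  refine ⟨mul_le_of_le_one_left (abs_nonneg _) (by linarith),
    mul_le_mul_of_nonneg_right ?_ (abs_nonneg _)⟩
  rw [div_mul_eq_mul_div, le_div_iff₀ (by positivity)]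
  linarith

lemma negBinomTail_sub (c : ℝ) (m : ℕ) (ht : t ∈ Ioo (0 : ℝ) 1) :
    negBinomTail c m t - negBinom c m * (1 - t)⁻¹ =
      ∑' i : ℕ, (negBinom c (m + i) - negBinom c m) * t ^ i := by
  rw [← tsum_geometric_of_lt_one ht.1.le ht.2, ← tsum_mul_left, negBinomTail,
    ← (summable_negBinom_add_mul_pow c m ht).tsum_sub
      ((summable_geometric_of_lt_one ht.1.le ht.2).mul_left _)]
  exact tsum_congr fun i => (sub_mul _ _ _).symm

lemma abs_one_sub_mul_negBinomTail_sub_le (hc₁ : c < 1) {m : ℕ} (hm : 0 ≤ c + m)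
    (ht : t ∈ Ioo (0 : ℝ) 1) :
    |(1 - t) * negBinomTail c m t - negBinom c m| * (1 + m * (1 - t)) ≤
      (2 - c) * |negBinom c m| := by
  have ht₁ : 0 < 1 - t := by linarith [ht.2]
  have habs : |t| < 1 := by rw [abs_of_pos ht.1]; exact ht.2
  have hbound₁ := tsum_of_norm_bounded ((hasSum_geometric_of_lt_one ht.1.le ht.2).mul_left _)
    (f := fun i : ℕ => (negBinom c (m + i) - negBinom c m) * t ^ i) fun i => by
      rw [norm_mul, norm_pow, Real.norm_of_nonneg ht.1.le]
      exact mul_le_mul_of_nonneg_right (abs_negBinom_add_sub_le hc₁ hm i).1 (pow_nonneg ht.1.le i)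
  have hbound₂ := tsum_of_norm_bounded
    ((hasSum_coe_mul_geometric_of_norm_lt_one (r := t) habs).mul_left _)
    (f := fun i : ℕ => (negBinom c (m + i) - negBinom c m) * t ^ i) fun i => by
      rw [norm_mul, norm_pow, Real.norm_of_nonneg ht.1.le, ← mul_assoc]
      exact mul_le_mul_of_nonneg_right (abs_negBinom_add_sub_le hc₁ hm i).2 (pow_nonneg ht.1.le i)
  rw [← negBinomTail_sub c m ht, Real.norm_eq_abs] at hbound₁ hbound₂
  have hfactor : (1 - t) * negBinomTail c m t - negBinom c m =
      (1 - t) * (negBinomTail c m t - negBinom c m * (1 - t)⁻¹) := by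
    field_simp
  rw [hfactor, abs_mul, abs_of_pos ht₁]
  set X := |negBinomTail c m t - negBinom c m * (1 - t)⁻¹|
  have hX₁ : (1 - t) * X ≤ |negBinom c m| := by
    rwa [← div_eq_mul_inv, le_div_iff₀' ht₁] at hbound₁
  have hX₂ : m * (1 - t) * ((1 - t) * X) ≤ (1 - c) * |negBinom c m| := by
    rw [mul_div_assoc', le_div_iff₀' (by positivity)] at hbound₂
    have hm₁ : (m : ℝ) / (m + 1) ≤ 1 := (div_le_one (by positivity)).mpr (by linarith)
    calc m * (1 - t) * ((1 - t) * X) = m * ((1 - t) ^ 2 * X) := by ring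
      _ ≤ m * ((1 - c) / (m + 1) * |negBinom c m| * t) := by gcongr
      _ = (1 - c) * |negBinom c m| * (m / (m + 1) * t) := by ring
      _ ≤ (1 - c) * |negBinom c m| := mul_le_of_le_one_right
          (mul_nonneg (by linarith) (abs_nonneg _)) (mul_le_one₀ hm₁ ht.1.le ht.2.le)
  linarith

end HeadAndTailBounds

section Phase

/-- The phase `t - 1 - log t`, minimal at the saddle point `t = 1`. Its value at `t⁻¹` is the phase
of the part of the integral beyond the saddle, after folding `(1, ∞)` onto `(0, 1)`. -/
noncomputable def phase (t : ℝ) : ℝ :=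
  t - 1 - Real.log t

variable {t : ℝ}

lemma phase_inv (t : ℝ) : phase t⁻¹ = t⁻¹ - 1 + Real.log t := by
  rw [phase, Real.log_inv, sub_neg_eq_add]

lemma log_le_of_mem_Ioo (ht : t ∈ Ioo (0 : ℝ) 1) : Real.log t ≤ -(2 * (1 - t) / (1 + t)) := by
  have ht₀ := ht.1
  have h := Real.le_log_one_add_of_nonneg (sub_nonneg.mpr (one_lt_inv₀ ht.1 |>.mpr ht.2).le)
  rw [add_sub_cancel, Real.log_inv] at h
  rw [le_neg]
  refine Eq.trans_le ?_ h
  rw [show t⁻¹ - 1 = (1 - t) / t by field_simp, show (1 - t) / t + 2 = (1 + t) / t by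
    field_simp; ring]
  field_simp

lemma sq_div_two_le_phase (ht : t ∈ Ioo (0 : ℝ) 1) : (1 - t) ^ 2 / 2 ≤ phase t := by
  have ht₀ := ht.1
  have hlog := log_le_of_mem_Ioo ht
  have hsub : 2 * (1 - t) / (1 + t) - (1 - t) = (1 - t) ^ 2 / (1 + t) := by
    field_simp
    ring
  have hle : (1 - t) ^ 2 / 2 ≤ (1 - t) ^ 2 / (1 + t) := by
    gcongr
    linarith [ht.2]
  rw [phase]
  linarith

lemma phase_nonneg (ht : t ∈ Ioo (0 : ℝ) 1) : 0 ≤ phase t :=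
  (by positivity : 0 ≤ (1 - t) ^ 2 / 2).trans (sq_div_two_le_phase ht)

lemma phase_inv_le (ht : t ∈ Ioo (0 : ℝ) 1) : phase t⁻¹ ≤ (1 - t) ^ 2 / t := by
  have hlog := Real.log_le_sub_one_of_pos ht.1
  have hsplit : (1 - t) ^ 2 / t = t⁻¹ - 1 + (t - 1) := by
    field_simp [ht.1.ne']
    ring
  rw [phase_inv, hsplit]
  linarith

lemma phase_le_phase_inv (ht : t ∈ Ioo (0 : ℝ) 1) : phase t ≤ phase t⁻¹ := by
  have hsinh := Real.self_le_sinh_iff.mpr (neg_nonneg.mpr (Real.log_nonpos ht.1.le ht.2.le))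
  rw [Real.sinh_eq, neg_neg, Real.exp_neg, Real.exp_log ht.1] at hsinh
  rw [phase_inv, phase]
  linarith

lemma phase_inv_sub_phase_le (ht : t ∈ Ioo (0 : ℝ) 1) :
    phase t⁻¹ - phase t ≤ (1 - t) ^ 3 / t := by
  have ht₀ := ht.1
  have ht₁ : 0 ≤ 1 - t := by linarith [ht.2]
  have hlog := log_le_of_mem_Ioo ht
  have hsplit : t⁻¹ - t - 2 * (2 * (1 - t) / (1 + t)) = (1 - t) ^ 3 / (t * (1 + t)) := by
    field_simp
    ring
  have hle : (1 - t) ^ 3 / (t * (1 + t)) ≤ (1 - t) ^ 3 / t := by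
    gcongr
    nlinarith
  rw [phase_inv, phase]
  linarith

lemma neg_log_eq_phase_add (t : ℝ) : -Real.log t = phase t + (1 - t) := by
  rw [phase]
  ring

lemma inv_le_exp_one_mul_exp_phase (ht : t ∈ Ioo (0 : ℝ) 1) :
    t⁻¹ ≤ Real.exp 1 * Real.exp (phase t) := by
  rw [← Real.exp_add, ← Real.log_le_iff_le_exp (inv_pos.mpr ht.1), Real.log_inv,
    neg_log_eq_phase_add]
  linarith [ht.1]

lemma abs_exp_sub_exp_le {p q B : ℝ} (hp : Real.exp p ≤ B) (hq : Real.exp q ≤ B) :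
    |Real.exp p - Real.exp q| ≤ B * |p - q| := by
  wlog hpq : q ≤ p generalizing p q
  · rw [abs_sub_comm, abs_sub_comm p]
    exact this hq hp (le_of_not_ge hpq)
  rw [abs_of_nonneg (sub_nonneg.mpr (Real.exp_le_exp.mpr hpq)), abs_of_nonneg (sub_nonneg.mpr hpq)]
  have hexp : Real.exp p * (1 + (q - p)) ≤ Real.exp q := by
    calc Real.exp p * (1 + (q - p)) ≤ Real.exp p * Real.exp (q - p) := by
          gcongr
          linarith [Real.add_one_le_exp (q - p)]
      _ = Real.exp q := by rw [← Real.exp_add, add_sub_cancel]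
  linarith [mul_le_mul_of_nonneg_right hp (sub_nonneg.mpr hpq)]

variable {R x δ θ : ℝ}

lemma exp_mul_log_sub_mul_le (ht : t ∈ Ioo (0 : ℝ) 1) (hδ : |δ| ≤ R) (hx : 2 * R ≤ x)
    (hθ : phase t ≤ θ) :
    Real.exp (δ * Real.log t - x * θ) ≤ Real.exp R * Real.exp (-(x / 2 * phase t)) := by
  have hR : 0 ≤ R := (abs_nonneg δ).trans hδ
  have hphase : 0 ≤ phase t := phase_nonneg ht
  have hlog₀ : 0 ≤ -Real.log t := neg_nonneg.mpr (Real.log_nonpos ht.1.le ht.2.le)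
  have hlog : δ * Real.log t ≤ R * (phase t + (1 - t)) := by
    rw [← neg_log_eq_phase_add]
    nlinarith [abs_le.mp hδ]
  rw [← Real.exp_add, Real.exp_le_exp]
  nlinarith [ht.1, mul_le_mul_of_nonneg_left hθ (by linarith : 0 ≤ x)]

lemma exp_mul_log_sub_mul_le_exp (ht : t ∈ Ioo (0 : ℝ) 1) (hδ : |δ| ≤ R) (hx : 2 * R ≤ x)
    (hθ : phase t ≤ θ) : Real.exp (δ * Real.log t - x * θ) ≤ Real.exp R := by
  have hR : 0 ≤ R := (abs_nonneg δ).trans hδ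
  have hphase : 0 ≤ phase t := phase_nonneg ht
  refine (exp_mul_log_sub_mul_le ht hδ hx hθ).trans
    (mul_le_of_le_one_right (Real.exp_pos R).le (Real.exp_le_one_iff.mpr ?_))
  nlinarith

lemma abs_exp_sub_one_le_exp (ht : t ∈ Ioo (0 : ℝ) 1) (hδ : |δ| ≤ R) (hx : 2 * R ≤ x)
    (hθ : phase t ≤ θ) : |Real.exp (δ * Real.log t - x * θ) - 1| ≤ Real.exp R := by
  have hR : 0 ≤ R := (abs_nonneg δ).trans hδ
  have := Real.exp_pos (δ * Real.log t - x * θ)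
  have := exp_mul_log_sub_mul_le_exp ht hδ hx hθ
  have := Real.one_le_exp hR
  exact abs_sub_le_iff.mpr ⟨by linarith, by linarith⟩

lemma abs_exp_sub_one_le (ht : t ∈ Ioo (0 : ℝ) 1) (hδ : |δ| ≤ R) (hx : 2 * R ≤ x)
    (hθ : phase t ≤ θ) (hθ' : θ ≤ (1 - t) ^ 2 / t) :
    |Real.exp (δ * Real.log t - x * θ) - 1| ≤
      2 * (R + 1) * Real.exp R * ((1 - t) * (1 + x * (1 - t))) := by
  have hR : 0 ≤ R := (abs_nonneg δ).trans hδ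
  have hx₀ : 0 ≤ x := by linarith
  have ht₁ : 0 ≤ 1 - t := by linarith [ht.2]
  have hexp := Real.one_le_exp hR
  have hxu : 0 ≤ x * (1 - t) := by positivity
  rcases le_total t (1 / 2) with hhalf | hhalf
  · have hv : 1 ≤ 2 * ((1 - t) * (1 + x * (1 - t))) := by nlinarith
    calc _ ≤ Real.exp R := abs_exp_sub_one_le_exp ht hδ hx hθ
      _ ≤ (R + 1) * Real.exp R * (2 * ((1 - t) * (1 + x * (1 - t)))) := by
        rw [mul_assoc, ← one_mul (Real.exp R)]
        gcongr
        · linarith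
        · rw [one_mul]
          exact le_mul_of_one_le_right (by positivity) hv
      _ = _ := by ring
  · have hinv : t⁻¹ ≤ 2 := inv_le_of_inv_le₀ two_pos (by linarith)
    have hlog : |Real.log t| ≤ 2 * (1 - t) := by
      rw [abs_of_nonpos (Real.log_nonpos ht.1.le ht.2.le)]
      have := Real.one_sub_inv_le_log_of_pos ht.1
      have hmul : t⁻¹ * t = 1 := inv_mul_cancel₀ ht.1.ne'
      nlinarith
    have hθ₀ : 0 ≤ θ := (phase_nonneg ht).trans hθ
    have hθ₂ : θ ≤ 2 * (1 - t) ^ 2 := hθ'.trans <| by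
      rw [div_eq_mul_inv, mul_comm]
      gcongr
    calc _ = |Real.exp (δ * Real.log t - x * θ) - Real.exp 0| := by rw [Real.exp_zero]
      _ ≤ Real.exp R * |δ * Real.log t - x * θ - 0| := abs_exp_sub_exp_le
          (exp_mul_log_sub_mul_le_exp ht hδ hx hθ) (by rwa [Real.exp_zero])
      _ ≤ Real.exp R * (R * (2 * (1 - t)) + x * (2 * (1 - t) ^ 2)) := by
        rw [sub_zero]
        gcongr
        refine (abs_sub _ _).trans ?_
        rw [abs_mul, abs_of_nonneg (mul_nonneg hx₀ hθ₀)]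
        gcongr
      _ ≤ _ := by nlinarith [mul_nonneg hR (mul_nonneg hxu ht₁), Real.exp_pos R]

lemma abs_exp_sub_one_mul_le (ht : t ∈ Ioo (0 : ℝ) 1) (hδ : |δ| ≤ R) (hx : 2 * R ≤ x)
    (hθ : phase t ≤ θ) (hθ' : θ ≤ (1 - t) ^ 2 / t) :
    |Real.exp (δ * Real.log t - x * θ) - 1| * (1 + x * (1 - t) ^ 2) ≤
      4 * (R + 1) * Real.exp R * ((1 - t) * (1 + x * (1 - t))) := by
  have hR : 0 ≤ R := (abs_nonneg δ).trans hδ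
  have hbdd := abs_exp_sub_one_le_exp ht hδ hx hθ
  have hsmall := abs_exp_sub_one_le ht hδ hx hθ hθ'
  set D := |Real.exp (δ * Real.log t - x * θ) - 1|
  set v := (1 - t) * (1 + x * (1 - t))
  have hD : 0 ≤ D := abs_nonneg _
  have hxv : 1 + x * (1 - t) ^ 2 ≤ 1 + v := by linarith [ht.2]
  have hv₀ : 0 ≤ v := mul_nonneg (by linarith [ht.2]) (by nlinarith [ht.2])
  have hx₀ : 0 ≤ x := by linarith
  rcases le_total v 1 with hv₁ | hv₁
  · calc _ ≤ D * 2 := by gcongr; linarith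
      _ ≤ _ := by linarith
  · calc _ ≤ Real.exp R * (2 * v) := by gcongr; linarith
      _ ≤ _ := by nlinarith [mul_nonneg (mul_nonneg hR (Real.exp_pos R).le) hv₀, Real.exp_pos R]

lemma one_add_sq_le_exp {s : ℝ} (hs : 0 ≤ s) : (1 + s) ^ 2 ≤ 256 * Real.exp (s / 8) := by
  calc (1 + s) ^ 2 ≤ (16 * Real.exp (s / 16)) ^ 2 := by
        gcongr
        linarith [Real.add_one_le_exp (s / 16)]
    _ = 256 * Real.exp (s / 8) := by
        rw [mul_pow, ← Real.exp_nat_mul]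
        ring_nf

lemma abs_exponent_sub_le (ht : t ∈ Ioo (0 : ℝ) 1) (hδ : |δ| ≤ R) (hx : 0 ≤ x) :
    |(δ * Real.log t - x * phase t) - (-δ * Real.log t - x * phase t⁻¹)| ≤
      Real.exp 1 * Real.exp (phase t) * ((1 - t) * (2 * R + x * (1 - t) ^ 2)) := by
  have hR : 0 ≤ R := (abs_nonneg δ).trans hδ
  have ht₁ : 0 ≤ 1 - t := by linarith [ht.2]
  have hlog : |Real.log t| ≤ (1 - t) * t⁻¹ := by
    rw [abs_of_nonpos (Real.log_nonpos ht.1.le ht.2.le), sub_mul, one_mul,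
      mul_inv_cancel₀ ht.1.ne']
    linarith [Real.one_sub_inv_le_log_of_pos ht.1]
  calc _ = |2 * δ * Real.log t + x * (phase t⁻¹ - phase t)| := by ring_nf
    _ ≤ 2 * R * ((1 - t) * t⁻¹) + x * ((1 - t) ^ 3 / t) := by
        refine (abs_add_le _ _).trans ?_
        rw [abs_mul, abs_mul, abs_two, abs_of_nonneg
          (mul_nonneg hx (sub_nonneg.mpr (phase_le_phase_inv ht)))]
        gcongr
        exact phase_inv_sub_phase_le ht
    _ = t⁻¹ * ((1 - t) * (2 * R + x * (1 - t) ^ 2)) := by ring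
    _ ≤ _ := by
        gcongr
        exact inv_le_exp_one_mul_exp_phase ht

lemma abs_exp_sub_exp_inv_mul_le (ht : t ∈ Ioo (0 : ℝ) 1) (hδ : |δ| ≤ R) (hx : 2 * R ≤ x)
    (hx₄ : 4 ≤ x) :
    |Real.exp (δ * Real.log t - x * phase t) - Real.exp (-δ * Real.log t - x * phase t⁻¹)| *
        (1 + x * (1 - t) ^ 2) ≤
      256 * (2 * R + 1) * Real.exp (R + 1) * (1 - t) := by
  have hR : 0 ≤ R := (abs_nonneg δ).trans hδ
  have ht₁ : 0 ≤ 1 - t := by linarith [ht.2]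
  have hdiff := abs_exp_sub_exp_le (exp_mul_log_sub_mul_le ht hδ hx le_rfl)
    (exp_mul_log_sub_mul_le ht ((abs_neg δ).trans_le hδ) hx (phase_le_phase_inv ht))
  have hexponent := abs_exponent_sub_le ht hδ (by linarith : 0 ≤ x)
  set s := x * (1 - t) ^ 2
  have hs₀ : 0 ≤ s := by positivity
  have hdecay : Real.exp (-(x / 2 * phase t)) * Real.exp (phase t) ≤ Real.exp (-(s / 8)) := by
    rw [← Real.exp_add, Real.exp_le_exp]
    nlinarith [sq_div_two_le_phase ht, sq_nonneg (1 - t)]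
  calc _ ≤ Real.exp R * Real.exp (-(x / 2 * phase t)) *
        (Real.exp 1 * Real.exp (phase t) * ((1 - t) * (2 * R + s))) * (1 + s) := by
        gcongr
        exact hdiff.trans (by gcongr)
    _ = Real.exp (R + 1) * (Real.exp (-(x / 2 * phase t)) * Real.exp (phase t)) *
          ((1 - t) * ((2 * R + s) * (1 + s))) := by
        rw [Real.exp_add]
        ring
    _ ≤ Real.exp (R + 1) * Real.exp (-(s / 8)) *
          ((1 - t) * ((2 * R + 1) * (256 * Real.exp (s / 8)))) := by
        have hpoly : (2 * R + s) * (1 + s) ≤ (2 * R + 1) * (1 + s) ^ 2 := by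
          nlinarith [mul_nonneg hR hs₀, mul_nonneg hR (sq_nonneg s)]
        have := hpoly.trans (mul_le_mul_of_nonneg_left (one_add_sq_le_exp hs₀) (by positivity))
        gcongr
    _ = _ := by
        rw [Real.exp_neg]
        field_simp

end Phase

section LaplaceError

lemma continuous_inv_one_add_mul_sq {x : ℝ} (hx : 0 < x) :
    Continuous fun t : ℝ => (1 + x * (1 - t) ^ 2)⁻¹ :=
  Continuous.inv₀ (by fun_prop) fun t => by positivity

lemma integral_inv_one_add_mul_sq_le {x : ℝ} (hx : 0 < x) :
    ∫ t in Ioo (0 : ℝ) 1, (1 + x * (1 - t) ^ 2)⁻¹ ≤ Real.pi / 2 * (√x)⁻¹ := by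
  have hsqrt : √x ≠ 0 := (Real.sqrt_pos.mpr hx).ne'
  have hsubst := intervalIntegral.integral_comp_sub_mul (a := 0) (b := 1)
    (fun s : ℝ => (1 + s ^ 2)⁻¹) hsqrt √x
  rw [mul_one, sub_self, mul_zero, sub_zero, integral_inv_one_add_sq, Real.arctan_zero, sub_zero,
    smul_eq_mul, mul_comm, intervalIntegral.integral_of_le zero_le_one,
    integral_Ioc_eq_integral_Ioo] at hsubst
  have hsq (t : ℝ) : (√x - √x * t) ^ 2 = x * (1 - t) ^ 2 := by
    rw [← mul_one_sub, mul_pow, Real.sq_sqrt hx.le]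
  simp only [hsq] at hsubst
  rw [hsubst]
  gcongr
  exact (Real.arctan_lt_pi_div_two _).le

lemma rpow_neg_half_mul_inv_le {x t : ℝ} (hx : 0 < x) (ht : t ∈ Ioo (0 : ℝ) 1) :
    t ^ (-(1 / 2) : ℝ) * (1 + x * (1 - t) ^ 2)⁻¹ ≤
      (1 + x * (1 - t) ^ 2)⁻¹ + (√x)⁻¹ * t ^ (-(1 / 2) : ℝ) := by
  have hsqrt := Real.sqrt_pos.mpr hx
  have htsqrt := Real.sqrt_pos.mpr ht.1
  have ht₁ : 0 < 1 - t := by linarith [ht.2]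
  have hden : 0 < 1 + x * (1 - t) ^ 2 := by positivity
  have hsub : (√t)⁻¹ - 1 ≤ (1 - t) * (√t)⁻¹ := by
    rw [← sub_nonneg]
    have : (1 - t) * (√t)⁻¹ - ((√t)⁻¹ - 1) = 1 - √t := by
      nth_rewrite 1 [← Real.mul_self_sqrt ht.1.le]
      field_simp
      ring
    rw [this, sub_nonneg]
    exact Real.sqrt_le_one.mpr ht.2.le
  have hpeak : (1 - t) * (1 + x * (1 - t) ^ 2)⁻¹ ≤ (√x)⁻¹ := by
    rw [← div_eq_mul_inv, div_le_iff₀ hden, ← div_eq_inv_mul, le_div_iff₀ hsqrt]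
    nlinarith [sq_nonneg (√x * (1 - t) - 1), Real.sq_sqrt hx.le]
  rw [Real.rpow_neg ht.1.le, ← Real.sqrt_eq_rpow]
  have := mul_le_mul_of_nonneg_right hsub (inv_pos.mpr hden).le
  have := mul_le_mul_of_nonneg_right hpeak (inv_pos.mpr htsqrt).le
  linarith

lemma abs_integral_le_of_le_inv_one_add_mul_sq {f : ℝ → ℝ} {x B : ℝ} (hx : 0 < x) (hB : 0 ≤ B)
    (hf : ∀ t ∈ Ioo (0 : ℝ) 1, |f t| ≤ B * (t ^ (-(1 / 2) : ℝ) * (1 + x * (1 - t) ^ 2)⁻¹)) :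
    |∫ t in Ioo (0 : ℝ) 1, f t| ≤ B * ((Real.pi / 2 + 2) * (√x)⁻¹) := by
  have hint₁ : IntegrableOn (fun t : ℝ => (1 + x * (1 - t) ^ 2)⁻¹) (Ioo 0 1) :=
    (continuous_inv_one_add_mul_sq hx).continuousOn.integrableOn_Icc.mono_set Ioo_subset_Icc_self
  have hint₂ : IntegrableOn (fun t : ℝ => (√x)⁻¹ * t ^ (-(1 / 2) : ℝ)) (Ioo 0 1) :=
    (integrableOn_Ioo_zero_one_rpow (by norm_num)).const_mul _
  have hle := norm_integral_le_of_norm_le (f := f) ((hint₁.add hint₂).const_mul B)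
    ((ae_restrict_mem measurableSet_Ioo).mono fun t ht => (hf t ht).trans
      (mul_le_mul_of_nonneg_left (rpow_neg_half_mul_inv_le hx ht) hB))
  refine hle.trans ?_
  rw [integral_const_mul]
  simp only [Pi.add_apply]
  rw [integral_add hint₁ hint₂, integral_const_mul,
    integral_Ioo_zero_one_rpow (by norm_num)]
  gcongr
  linarith [integral_inv_one_add_mul_sq_le hx]

variable {c R : ℝ}

lemma abs_mul_le_of_abs_mul_le {D r u P Q C k κ : ℝ} (hu : 0 ≤ u) (hC : 0 ≤ C)
    (hD : |D| * P ≤ C * (u * Q)) (hr : |r| * Q ≤ k * κ) : |D * r| * P ≤ C * k * κ * u := by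
  calc |D * r| * P = |D| * P * |r| := by rw [abs_mul, mul_right_comm]
    _ ≤ C * (u * Q) * |r| := mul_le_mul_of_nonneg_right hD (abs_nonneg r)
    _ = C * u * (|r| * Q) := by ring
    _ ≤ C * u * (k * κ) := mul_le_mul_of_nonneg_left hr (mul_nonneg hC hu)
    _ = C * k * κ * u := by ring

-- Here `T` and `H` both approximate `κ / u`; their common singular part `κ / u` is paired with
-- `E - E'` only, which vanishes to higher order than `E - 1` and `E' - 1`.
lemma abs_sub_one_mul_sub_le_of_approx {u P Q E E' T H κ k k' C₁ C₂ : ℝ} (hu : 0 < u)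
    (hP : 0 ≤ P) (hC₁ : 0 ≤ C₁) (hE : |E - 1| * P ≤ C₁ * (u * Q))
    (hE' : |E' - 1| * P ≤ C₁ * (u * Q)) (hEE' : |E - E'| * P ≤ C₂ * u)
    (hT : |u * T - κ| * Q ≤ k * |κ|) (hH : |u * H - κ| * Q ≤ k' * |κ|) :
    |(E - 1) * T - (E' - 1) * H| * P ≤ (C₁ * (k + k') + C₂) * |κ| := by
  have hsplit : u * ((E - 1) * T - (E' - 1) * H) =
      (E - 1) * (u * T - κ) - (E' - 1) * (u * H - κ) + (E - E') * κ := by ring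
  rw [← mul_le_mul_iff_right₀ hu]
  calc _ = |(E - 1) * (u * T - κ) - (E' - 1) * (u * H - κ) + (E - E') * κ| * P := by
        rw [← hsplit, abs_mul, abs_of_pos hu, mul_assoc]
    _ ≤ (|(E - 1) * (u * T - κ)| + |(E' - 1) * (u * H - κ)| + |(E - E') * κ|) * P := by
        gcongr
        exact (abs_add_le _ _).trans (by gcongr; exact abs_sub _ _)
    _ ≤ C₁ * k * |κ| * u + C₁ * k' * |κ| * u + C₂ * u * |κ| := by
        rw [add_mul, add_mul, abs_mul (E - E'), mul_right_comm]
        exact add_le_add (add_le_add (abs_mul_le_of_abs_mul_le hu.le hC₁ hE hT)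
          (abs_mul_le_of_abs_mul_le hu.le hC₁ hE' hH))
          (mul_le_mul_of_nonneg_right hEE' (abs_nonneg κ))
    _ = _ := by ring

lemma exists_abs_exp_sub_one_mul_tail_sub_head_le (hc : ∀ n : ℕ, c ≠ -n) (hc₁ : c < 1)
    (hR : 0 ≤ R) :
    ∃ C : ℝ, 0 ≤ C ∧ ∀ (x δ : ℝ) (m : ℕ), 4 ≤ x → 2 * R ≤ x → |δ| ≤ R → x ≤ 2 * m → 0 ≤ c + m →
      ∀ t ∈ Ioo (0 : ℝ) 1,
        |(Real.exp (δ * Real.log t - x * phase t) - 1) * negBinomTail c m t -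
            (Real.exp (-δ * Real.log t - x * phase t⁻¹) - 1) * negBinomHead c m t| ≤
          C * |negBinom c m| * (1 + x * (1 - t) ^ 2)⁻¹ := by
  obtain ⟨K, hK⟩ := exists_abs_one_sub_mul_negBinomHead_sub_le hc
  have hK₀ : 0 ≤ K := by
    have := hK 0 1 (by simp)
    norm_num [negBinom_zero] at this
    linarith
  have hc₂ : 0 ≤ 2 - c := by linarith
  refine ⟨8 * (R + 1) * Real.exp R * (2 - c + K) + 256 * (2 * R + 1) * Real.exp (R + 1),
    by positivity, fun x δ m hx₄ hxR hδ hxm hm t ht => ?_⟩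
  have ht₁ : 0 < 1 - t := by linarith [ht.2]
  have hP : 0 < 1 + x * (1 - t) ^ 2 := by positivity
  have hxm' : 4 * (R + 1) * Real.exp R * ((1 - t) * (1 + x * (1 - t))) ≤
      8 * (R + 1) * Real.exp R * ((1 - t) * (1 + m * (1 - t))) := by
    have : 1 + x * (1 - t) ≤ 2 * (1 + m * (1 - t)) := by nlinarith
    linarith [mul_le_mul_of_nonneg_left this
      (by positivity : 0 ≤ 4 * (R + 1) * Real.exp R * (1 - t))]
  rw [← div_eq_mul_inv, le_div_iff₀ hP]
  exact abs_sub_one_mul_sub_le_of_approx ht₁ hP.le (by positivity)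
    ((abs_exp_sub_one_mul_le ht hδ hxR le_rfl
      ((phase_le_phase_inv ht).trans (phase_inv_le ht))).trans hxm')
    ((abs_exp_sub_one_mul_le ht ((abs_neg δ).trans_le hδ) hxR (phase_le_phase_inv ht)
      (phase_inv_le ht)).trans hxm')
    (abs_exp_sub_exp_inv_mul_le ht hδ hxR hx₄)
    (abs_one_sub_mul_negBinomTail_sub_le hc₁ hm ht) (hK m t ⟨ht.1.le, ht.2.le⟩)

lemma integrableOn_mul_of_abs_le {f E : ℝ → ℝ} {B : ℝ} (hf : IntegrableOn f (Ioo 0 1))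
    (hE : Measurable E) (hB : ∀ t ∈ Ioo (0 : ℝ) 1, |E t| ≤ B) :
    IntegrableOn (fun t => E t * f t) (Ioo 0 1) :=
  Integrable.bdd_mul hf hE.aestronglyMeasurable
    ((ae_restrict_mem measurableSet_Ioo).mono fun t ht => hB t ht)

lemma measurable_exp_mul_log_sub (δ x : ℝ) {θ : ℝ → ℝ} (hθ : Measurable θ) :
    Measurable fun t => Real.exp (δ * Real.log t - x * θ t) := by
  fun_prop

lemma measurable_phase : Measurable phase := by
  unfold phase
  fun_prop

/-- `eˣ Γ(a) Γ(b - a)` times the remainder of `₁F₁(b - a; b; -x) / Γ(b)` after `m` terms of its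
algebraic expansion, as an integral over `(0, 1)`, for `c = 1 - a` and `δ = b - a + m - 1/2 - x`.
Optimal truncation keeps `δ` bounded. -/
noncomputable def saddleIntegral (c : ℝ) (m : ℕ) (δ x : ℝ) : ℝ :=
  (∫ t in Ioo (0 : ℝ) 1, Real.exp (δ * Real.log t - x * phase t) *
      (t ^ (-(1 / 2) : ℝ) * negBinomTail c m t)) -
    ∫ t in Ioo (0 : ℝ) 1, Real.exp (-δ * Real.log t - x * phase t⁻¹) *
      (t ^ (-(1 / 2) : ℝ) * negBinomHead c m t)

lemma exists_abs_saddleIntegral_sub_tsum_le (hc : ∀ n : ℕ, c ≠ -n) (hc₁ : c < 1) (hR : 0 ≤ R) :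
    ∃ C : ℝ, ∀ (x δ : ℝ) (m : ℕ), 4 ≤ x → 2 * R ≤ x → |δ| ≤ R → x ≤ 2 * m → 0 ≤ c + m →
      |saddleIntegral c m δ x - ∑' k : ℕ, negBinom c k / (1 / 2 - m + k)| ≤
        C * (|negBinom c m| * (√x)⁻¹) := by
  obtain ⟨C, hC₀, hC⟩ := exists_abs_exp_sub_one_mul_tail_sub_head_le hc hc₁ hR
  refine ⟨C * (Real.pi / 2 + 2), fun x δ m hx₄ hxR hδ hxm hm => ?_⟩
  have hx : 0 < x := by linarith
  have htail := integrableOn_rpow_mul_negBinomTail hc hc₁ m one_half_pos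
  have hhead := integrableOn_rpow_mul_negBinomHead c m one_half_pos
  norm_num only at htail hhead
  have htailE := integrableOn_mul_of_abs_le htail (measurable_exp_mul_log_sub δ x measurable_phase)
    fun t ht => (Real.abs_exp _).trans_le (exp_mul_log_sub_mul_le_exp ht hδ hxR le_rfl)
  have hheadE := integrableOn_mul_of_abs_le hhead
    (measurable_exp_mul_log_sub (-δ) x (measurable_phase.comp measurable_inv))
    fun t ht => (Real.abs_exp _).trans_le (exp_mul_log_sub_mul_le_exp ht
      ((abs_neg δ).trans_le hδ) hxR (phase_le_phase_inv ht))
  simp only [Function.comp_apply] at hheadE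
  rw [← integral_tail_sub_integral_head hc hc₁ m, saddleIntegral, ← integral_sub htailE hheadE,
    ← integral_sub htail hhead, ← integral_sub (htailE.fun_sub hheadE) (htail.fun_sub hhead)]
  refine (abs_integral_le_of_le_inv_one_add_mul_sq (B := C * |negBinom c m|) hx (by positivity)
    fun t ht => ?_).trans_eq (by ring)
  have hpow := Real.rpow_nonneg ht.1.le (-(1 / 2))
  calc _ = t ^ (-(1 / 2) : ℝ) *
        |(Real.exp (δ * Real.log t - x * phase t) - 1) * negBinomTail c m t -
          (Real.exp (-δ * Real.log t - x * phase t⁻¹) - 1) * negBinomHead c m t| := by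
        rw [← abs_of_nonneg hpow, ← abs_mul, abs_of_nonneg hpow]
        ring_nf
    _ ≤ t ^ (-(1 / 2) : ℝ) * (C * |negBinom c m| * (1 + x * (1 - t) ^ 2)⁻¹) :=
        mul_le_mul_of_nonneg_left (hC x δ m hx₄ hxR hδ hxm hm t ht) hpow
    _ = _ := mul_left_comm _ _ _

end LaplaceError

section IntegralRepresentation

lemma ascPochhammer_eval_ofReal (n : ℕ) (s : ℝ) :
    (ascPochhammer ℂ n).eval (s : ℂ) = ((ascPochhammer ℝ n).eval s : ℝ) := by
  rw [← ascPochhammer_map Complex.ofRealHom, Polynomial.eval_map]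
  exact Polynomial.eval₂_at_apply Complex.ofRealHom s

lemma integral_Ioo_pow_mul_rpow_mul_one_sub_rpow {u v : ℝ} (hu : 0 < u) (hv : 0 < v) (n : ℕ) :
    ∫ t in Ioo (0 : ℝ) 1, t ^ n * (t ^ (u - 1) * (1 - t) ^ (v - 1)) =
      Real.Gamma u * Real.Gamma v / Real.Gamma (u + v) *
        ((ascPochhammer ℝ n).eval u / (ascPochhammer ℝ n).eval (u + v)) := by
  have hne {s : ℝ} (hs : 0 < s) (k : ℕ) : s ≠ -k := by
    have : (0 : ℝ) ≤ k := k.cast_nonneg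
    linarith
  have hbeta := integral_Ioo_rpow_mul_one_sub_rpow (u := u + n) (by positivity) hv
  rw [add_right_comm u, Gamma_add_nat u (hne hu), Gamma_add_nat _ (hne (add_pos hu hv))] at hbeta
  rw [div_mul_div_comm, mul_right_comm, ← hbeta]
  refine setIntegral_congr_fun measurableSet_Ioo fun t ht => ?_
  rw [add_sub_right_comm, Real.rpow_add ht.1, Real.rpow_natCast]
  ring

lemma integrableOn_pow_mul_beta {u v : ℝ} (hu : 0 < u) (hv : 0 < v) (n : ℕ) :
    IntegrableOn (fun t : ℝ => t ^ n * (t ^ (u - 1) * (1 - t) ^ (v - 1))) (Ioo 0 1) :=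
  integrableOn_mul_of_abs_le (integrableOn_Ioo_rpow_mul_one_sub_rpow hu hv) (by fun_prop)
    fun t ht => by rw [abs_pow, abs_of_pos ht.1]; exact pow_le_one₀ ht.1.le ht.2.le

lemma summable_integral_norm_pow_div_factorial_mul {w : ℝ → ℝ} (hw : IntegrableOn w (Ioo 0 1))
    (hw₀ : ∀ t ∈ Ioo (0 : ℝ) 1, 0 ≤ w t) (z : ℂ) :
    Summable fun n : ℕ =>
      ∫ t in Ioo (0 : ℝ) 1, ‖z ^ n / (n.factorial : ℂ) * (t ^ n * w t : ℝ)‖ := by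
  refine .of_nonneg_of_le (fun n => integral_nonneg fun _ => norm_nonneg _) (fun n => ?_)
    ((Real.summable_pow_div_factorial ‖z‖).mul_right (∫ t in Ioo (0 : ℝ) 1, w t))
  rw [← integral_const_mul]
  refine integral_mono_of_nonneg (ae_of_all _ fun _ => norm_nonneg _) (hw.const_mul _)
    ((ae_restrict_mem measurableSet_Ioo).mono fun t ht => ?_)
  have hpow : t ^ n * w t ≤ w t :=
    mul_le_of_le_one_left (hw₀ t ht) (pow_le_one₀ ht.1.le ht.2.le)
  dsimp only
  rw [norm_mul, norm_div, norm_pow, Complex.norm_natCast,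
    Complex.norm_of_nonneg (mul_nonneg (pow_nonneg ht.1.le n) (hw₀ t ht))]
  gcongr

lemma integral_Ioo_cexp_mul_rpow_mul_one_sub_rpow {u v : ℝ} (hu : 0 < u) (hv : 0 < v) (z : ℂ) :
    ∫ t in Ioo (0 : ℝ) 1, cexp (z * t) * (t ^ (u - 1) * (1 - t) ^ (v - 1) : ℝ) =
      Real.Gamma u * Real.Gamma v / Real.Gamma (u + v) * kummer u (u + v) z := by
  set w : ℝ → ℝ := fun t => t ^ (u - 1) * (1 - t) ^ (v - 1)
  set F : ℕ → ℝ → ℂ := fun n t => z ^ n / n.factorial * (t ^ n * w t : ℝ)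
  have hF_int (n : ℕ) : IntegrableOn (F n) (Ioo 0 1) :=
    (integrableOn_pow_mul_beta hu hv n).ofReal.const_mul _
  have hF_norm : Summable fun n => ∫ t in Ioo (0 : ℝ) 1, ‖F n t‖ :=
    summable_integral_norm_pow_div_factorial_mul (integrableOn_Ioo_rpow_mul_one_sub_rpow hu hv)
      (fun t ht => mul_nonneg (Real.rpow_nonneg ht.1.le _)
        (Real.rpow_nonneg (sub_nonneg.mpr ht.2.le) _)) z
  have hF_sum (t : ℝ) : HasSum (F · t) (cexp (z * t) * w t) := by
    have := (NormedSpace.expSeries_div_hasSum_exp (z * (t : ℂ))).mul_right (w t : ℂ)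
    rw [← Complex.exp_eq_exp_ℂ] at this
    refine this.congr_fun fun n => ?_
    simp only [F]
    push_cast
    rw [mul_pow]
    ring
  rw [← integral_congr_ae (ae_of_all _ fun t => (hF_sum t).tsum_eq),
    ← integral_tsum_of_summable_integral_norm hF_int hF_norm, kummer, ← tsum_mul_left]
  refine tsum_congr fun n => ?_
  rw [integral_const_mul, integral_complex_ofReal, integral_Ioo_pow_mul_rpow_mul_one_sub_rpow hu hv,
    ← Complex.ofReal_add, ascPochhammer_eval_ofReal, ascPochhammer_eval_ofReal]
  push_cast
  ring

lemma integral_Ioi_one_eq_integral_Ioo_inv (f : ℝ → ℝ) :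
    ∫ t in Ioi (1 : ℝ), f t = ∫ t in Ioo (0 : ℝ) 1, (t ^ 2)⁻¹ * f t⁻¹ := by
  have himage : (fun t : ℝ => t⁻¹) '' Ioo 0 1 = Ioi 1 := by
    rw [image_inv_eq_inv, inv_Ioo_0_left one_pos, inv_one]
  have hderiv (t : ℝ) (ht : t ∈ Ioo (0 : ℝ) 1) :
      HasDerivWithinAt (fun t : ℝ => t⁻¹) (-(t ^ 2)⁻¹) (Ioo 0 1) t :=
    (hasDerivAt_inv ht.1.ne').hasDerivWithinAt
  rw [← himage, integral_image_eq_integral_abs_deriv_smul measurableSet_Ioo hderiv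
    inv_injective.injOn]
  simp

variable {c s x : ℝ}

lemma integrableOn_Ioi_rpow_mul_exp_neg_mul (hs : 0 < s) (hx : 0 < x) :
    IntegrableOn (fun t : ℝ => t ^ (s - 1) * Real.exp (-(x * t))) (Ioi 0) := by
  refine Integrable.of_integral_ne_zero ?_
  rw [Real.integral_rpow_mul_exp_neg_mul_Ioi hs hx]
  have := Real.Gamma_pos_of_pos hs
  positivity

lemma rpow_mul_sum_negBinom_mul_exp (c s x : ℝ) (m : ℕ) {t : ℝ} (ht : 0 < t) :
    t ^ (s - 1) * (∑ j ∈ Finset.range m, negBinom c j * t ^ j) * Real.exp (-(x * t)) =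
      ∑ j ∈ Finset.range m, negBinom c j * (t ^ (s + j - 1) * Real.exp (-(x * t))) := by
  rw [Finset.mul_sum, Finset.sum_mul]
  refine Finset.sum_congr rfl fun j _ => ?_
  rw [add_sub_right_comm, Real.rpow_add ht, Real.rpow_natCast]
  ring

lemma integrableOn_Ioi_rpow_mul_sum_negBinom_mul_exp (c : ℝ) (hs : 0 < s) (hx : 0 < x) (m : ℕ) :
    IntegrableOn (fun t : ℝ => t ^ (s - 1) * (∑ j ∈ Finset.range m, negBinom c j * t ^ j) *
      Real.exp (-(x * t))) (Ioi 0) :=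
  (integrable_finsetSum (Finset.range m) fun j _ =>
    (integrableOn_Ioi_rpow_mul_exp_neg_mul (s := s + j) (by positivity) hx).const_mul
      (negBinom c j)).congr <| (ae_restrict_mem measurableSet_Ioi).mono fun _ ht =>
        (rpow_mul_sum_negBinom_mul_exp c s x m ht).symm

lemma integral_Ioi_rpow_mul_sum_negBinom_mul_exp (c : ℝ) (hs : 0 < s) (hx : 0 < x) (m : ℕ) :
    ∫ t in Ioi (0 : ℝ), t ^ (s - 1) * (∑ j ∈ Finset.range m, negBinom c j * t ^ j) *
        Real.exp (-(x * t)) =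
      ∑ j ∈ Finset.range m, negBinom c j * (Real.Gamma (s + j) * x ^ (-(s + j))) := by
  have hsj (j : ℕ) : 0 < s + j := by positivity
  rw [setIntegral_congr_fun measurableSet_Ioi fun t ht => rpow_mul_sum_negBinom_mul_exp c s x m ht,
    integral_finsetSum _ fun j _ =>
      (integrableOn_Ioi_rpow_mul_exp_neg_mul (hsj j) hx).const_mul (negBinom c j)]
  refine Finset.sum_congr rfl fun j _ => ?_
  rw [integral_const_mul, Real.integral_rpow_mul_exp_neg_mul_Ioi (hsj j) hx, one_div,
    Real.inv_rpow hx.le, ← Real.rpow_neg hx.le, mul_comm (Real.Gamma _)]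

lemma integral_Ioi_one_rpow_mul_sum_negBinom_mul_exp (c s x : ℝ) (m : ℕ) :
    ∫ t in Ioi (1 : ℝ), t ^ (s - 1) * (∑ j ∈ Finset.range m, negBinom c j * t ^ j) *
        Real.exp (-(x * t)) =
      ∫ t in Ioo (0 : ℝ) 1, Real.exp (-(x * t⁻¹)) * (t ^ (-s - m) * negBinomHead c m t) := by
  rw [integral_Ioi_one_eq_integral_Ioo_inv]
  refine setIntegral_congr_fun measurableSet_Ioo fun t ht => ?_
  have ht₀ : t ≠ 0 := ht.1.ne'
  have hhead := pow_mul_sum_negBinom_mul_inv_pow c m ht₀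
  have hpow : t⁻¹ ^ (s - 1) = t ^ (-s - m) * t ^ m * t := by
    rw [Real.inv_rpow ht.1.le, ← Real.rpow_neg ht.1.le, ← Real.rpow_natCast, ← Real.rpow_add ht.1,
      ← Real.rpow_add_one ht₀]
    ring_nf
  simp only [hpow]
  have ht_sq : (t ^ 2)⁻¹ * t * t = 1 := by field_simp
  linear_combination (t ^ 2)⁻¹ * t * t ^ (-s - m : ℝ) * Real.exp (-(x * t⁻¹)) * hhead +
    t ^ (-s - m : ℝ) * Real.exp (-(x * t⁻¹)) * negBinomHead c m t * ht_sq

lemma integrableOn_exp_mul_rpow_mul_negBinomTail (hc : ∀ n : ℕ, c ≠ -n) (hc₁ : c < 1) (m : ℕ)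
    (hs : 0 < s) (hx : 0 < x) :
    IntegrableOn (fun t => Real.exp (-(x * t)) * (t ^ (s + m - 1) * negBinomTail c m t))
      (Ioo 0 1) :=
  integrableOn_mul_of_abs_le (integrableOn_rpow_mul_negBinomTail hc hc₁ m (by positivity))
    (by fun_prop) fun t ht => by
      rw [Real.abs_exp, Real.exp_le_one_iff, neg_nonpos]
      exact mul_nonneg hx.le ht.1.le

lemma integral_Ioo_exp_mul_rpow_mul_one_sub_rpow_sub_sum (hc : ∀ n : ℕ, c ≠ -n) (hc₁ : c < 1)
    (m : ℕ) (hs : 0 < s) (hx : 0 < x) :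
    (∫ t in Ioo (0 : ℝ) 1, Real.exp (-(x * t)) * (t ^ (s - 1) * (1 - t) ^ (-c))) -
        ∑ j ∈ Finset.range m, negBinom c j * (Real.Gamma (s + j) * x ^ (-(s + j))) =
      (∫ t in Ioo (0 : ℝ) 1, Real.exp (-(x * t)) * (t ^ (s + m - 1) * negBinomTail c m t)) -
        ∫ t in Ioo (0 : ℝ) 1, Real.exp (-(x * t⁻¹)) * (t ^ (-s - m) * negBinomHead c m t) := by
  set f : ℝ → ℝ := fun t =>
    t ^ (s - 1) * (∑ j ∈ Finset.range m, negBinom c j * t ^ j) * Real.exp (-(x * t))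
  have hf : IntegrableOn f (Ioi 0) := integrableOn_Ioi_rpow_mul_sum_negBinom_mul_exp c hs hx m
  have hf_split :
      ∫ t in Ioi (0 : ℝ), f t = (∫ t in Ioo (0 : ℝ) 1, f t) + ∫ t in Ioi (1 : ℝ), f t := by
    rw [← integral_Ioc_eq_integral_Ioo, ← Ioc_union_Ioi_eq_Ioi zero_le_one,
      setIntegral_union (Ioc_disjoint_Ioi le_rfl) measurableSet_Ioi
        (hf.mono_set Ioc_subset_Ioi_self) (hf.mono_set (Ioi_subset_Ioi zero_le_one))]
  have htail : ∫ t in Ioo (0 : ℝ) 1, Real.exp (-(x * t)) * (t ^ (s - 1) * (1 - t) ^ (-c)) =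
      (∫ t in Ioo (0 : ℝ) 1, f t) +
        ∫ t in Ioo (0 : ℝ) 1, Real.exp (-(x * t)) * (t ^ (s + m - 1) * negBinomTail c m t) := by
    rw [← integral_add (hf.mono_set Ioo_subset_Ioi_self)
      (integrableOn_exp_mul_rpow_mul_negBinomTail hc hc₁ m hs hx)]
    refine setIntegral_congr_fun measurableSet_Ioo fun t ht => ?_
    simp only [f]
    rw [one_sub_rpow_eq_sum_add_tail c m ht, add_sub_right_comm, Real.rpow_add ht.1,
      Real.rpow_natCast]
    ring
  rw [htail, ← integral_Ioi_rpow_mul_sum_negBinom_mul_exp c hs hx, hf_split,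
    ← integral_Ioi_one_rpow_mul_sum_negBinom_mul_exp]
  ring

/-- The algebraic expansion of `₁F₁(s; s + 1 - c; -z)` up to its prefactor, truncated after `m`
terms. -/
noncomputable def algebraicSum (m : ℕ) (s c z : ℂ) : ℂ :=
  ∑ j ∈ Finset.range m,
    (ascPochhammer ℂ j).eval s * (ascPochhammer ℂ j).eval c / (j.factorial * z ^ j)

/-- The difference between `₁F₁(b - a; b; -z) / Γ(b)` and the sum of the first `m` terms of its
algebraic expansion. -/
noncomputable def stokesRemainder (m : ℕ) (a b z : ℂ) : ℂ :=
  1 / Complex.Gamma b * kummer (b - a) b (-z) -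
    z ^ (a - b) / Complex.Gamma a * algebraicSum m (b - a) (1 - a) z

lemma Gamma_mul_Gamma_mul_algebraicSum {a b : ℝ} (ha : ∀ n : ℕ, a ≠ -n) (hba : a < b)
    (hx : 0 < x) (m : ℕ) :
    Complex.Gamma a * Complex.Gamma (b - a) *
      ((x : ℂ) ^ ((a : ℂ) - b) / Complex.Gamma a * algebraicSum m (b - a) (1 - a) x) =
    (∑ j ∈ Finset.range m,
      negBinom (1 - a) j * (Real.Gamma (b - a + j) * x ^ (-(b - a + j))) : ℝ) := by
  have hΓ : Complex.Gamma a ≠ 0 := by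
    rw [Complex.Gamma_ofReal]
    exact_mod_cast Real.Gamma_ne_zero ha
  have hpow : (x : ℂ) ^ ((a : ℂ) - b) = (x ^ (a - b) : ℝ) := by
    rw [Complex.ofReal_cpow hx.le]
    push_cast
    rfl
  have hs (n : ℕ) : b - a ≠ -n := by linarith [n.cast_nonneg (α := ℝ)]
  rw [algebraicSum, Finset.mul_sum, Finset.mul_sum, Complex.ofReal_sum]
  refine Finset.sum_congr rfl fun j _ => ?_
  have hxj : x ^ (-(b - a + j)) = x ^ (a - b) / x ^ j := by
    rw [← Real.rpow_natCast, ← Real.rpow_sub hx]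
    ring_nf
  rw [hpow, ← Complex.ofReal_one, ← Complex.ofReal_sub, ← Complex.ofReal_sub,
    ascPochhammer_eval_ofReal, ascPochhammer_eval_ofReal, Gamma_add_nat _ hs, hxj,
    negBinom, Complex.Gamma_ofReal (b - a)]
  push_cast
  field_simp

lemma Gamma_mul_Gamma_mul_stokesRemainder {a b : ℝ} (ha : ∀ n : ℤ, a ≠ n) (ha₀ : 0 < a)
    (hba : a < b) (hx : 0 < x) (m : ℕ) :
    Complex.Gamma a * Complex.Gamma (b - a) * stokesRemainder m a b x =
      ((∫ t in Ioo (0 : ℝ) 1,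
          Real.exp (-(x * t)) * (t ^ (b - a + m - 1) * negBinomTail (1 - a) m t)) -
        ∫ t in Ioo (0 : ℝ) 1,
          Real.exp (-(x * t⁻¹)) * (t ^ (-(b - a) - m) * negBinomHead (1 - a) m t) : ℝ) := by
  have hc (n : ℕ) : 1 - a ≠ -n := fun h => ha (n + 1) (by push_cast; linarith)
  have ha_nat (n : ℕ) : a ≠ -n := by linarith [n.cast_nonneg (α := ℝ)]
  have hEuler := integral_Ioo_cexp_mul_rpow_mul_one_sub_rpow (sub_pos.mpr hba) ha₀ (-x : ℂ)
  rw [sub_add_cancel, Complex.ofReal_sub, sub_add_cancel] at hEuler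
  rw [← integral_Ioo_exp_mul_rpow_mul_one_sub_rpow_sub_sum hc (sub_lt_self 1 ha₀) m
    (sub_pos.mpr hba) hx, stokesRemainder, mul_sub, Complex.ofReal_sub,
    Gamma_mul_Gamma_mul_algebraicSum ha_nat hba hx, ← integral_complex_ofReal]
  congr 1
  calc _ = _ := by
        rw [← Complex.ofReal_sub, Complex.Gamma_ofReal, Complex.Gamma_ofReal, Complex.Gamma_ofReal]
        ring
    _ = _ := hEuler.symm
    _ = _ := by
        congr 1 with t
        push_cast
        ring_nf

end IntegralRepresentation

section BaseCase

lemma exp_mul_exp_neg_mul_mul_rpow (x s : ℝ) {t : ℝ} (ht : 0 < t) :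
    Real.exp x * (Real.exp (-(x * t)) * t ^ (s - 1 / 2)) =
      Real.exp ((s - x) * Real.log t - x * phase t) * t ^ (-(1 / 2) : ℝ) := by
  rw [Real.rpow_def_of_pos ht, Real.rpow_def_of_pos ht, ← Real.exp_add, ← Real.exp_add,
    ← Real.exp_add, phase]
  ring_nf

lemma exp_mul_exp_neg_mul_inv_mul_rpow (x s : ℝ) {t : ℝ} (ht : 0 < t) :
    Real.exp x * (Real.exp (-(x * t⁻¹)) * t ^ (-s - 1 / 2)) =
      Real.exp (-(s - x) * Real.log t - x * phase t⁻¹) * t ^ (-(1 / 2) : ℝ) := by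
  rw [Real.rpow_def_of_pos ht, Real.rpow_def_of_pos ht, ← Real.exp_add, ← Real.exp_add,
    ← Real.exp_add, phase, Real.log_inv]
  ring_nf

lemma exp_mul_Gamma_mul_Gamma_mul_stokesRemainder {a b x : ℝ} (ha : ∀ n : ℤ, a ≠ n) (ha₀ : 0 < a)
    (hba : a < b) (hx : 0 < x) (m : ℕ) :
    cexp x * (Complex.Gamma a * Complex.Gamma (b - a) * stokesRemainder m a b x) =
      saddleIntegral (1 - a) m (b - a + m - 1 / 2 - x) x := by
  rw [Gamma_mul_Gamma_mul_stokesRemainder ha ha₀ hba hx, ← Complex.ofReal_exp,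
    ← Complex.ofReal_mul, mul_sub, ← integral_const_mul, ← integral_const_mul, saddleIntegral]
  congr 2 <;> refine setIntegral_congr_fun measurableSet_Ioo fun t ht => ?_
  · have hkernel := exp_mul_exp_neg_mul_mul_rpow x (b - a + m - 1 / 2) ht.1
    rw [sub_sub _ (1 / 2 : ℝ) (1 / 2), add_halves] at hkernel
    linear_combination negBinomTail (1 - a) m t * hkernel
  · have hkernel := exp_mul_exp_neg_mul_inv_mul_rpow x (b - a + m - 1 / 2) ht.1
    rw [show -(b - a + m - 1 / 2) - 1 / 2 = -(b - a) - m by ring] at hkernel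
    linear_combination negBinomHead (1 - a) m t * hkernel

variable {c : ℝ} {m : ℝ → ℕ}

lemma saddleIntegral_sub_tsum_isBigO (hc : ∀ n : ℕ, c ≠ -n) (hc₁ : c < 1)
    (hm : (fun x => (m x : ℝ) - x) =O[atTop] fun _ => (1 : ℝ)) {δ : ℝ → ℝ}
    (hδ : δ =O[atTop] fun _ => (1 : ℝ)) :
    (fun x => saddleIntegral c (m x) (δ x) x - ∑' k : ℕ, negBinom c k / (1 / 2 - m x + k))
      =O[atTop] fun x => x ^ (c - 1 - 1 / 2) := by
  obtain ⟨R, hR, hδR⟩ := hδ.exists_pos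
  obtain ⟨K, hK, hmK⟩ := hm.exists_pos
  obtain ⟨C, hC⟩ := exists_abs_saddleIntegral_sub_tsum_le hc hc₁ hR.le
  have hbound : (fun x => saddleIntegral c (m x) (δ x) x -
      ∑' k : ℕ, negBinom c k / (1 / 2 - m x + k)) =O[atTop]
        fun x => negBinom c (m x) * x ^ (-(1 / 2) : ℝ) := by
    refine IsBigO.of_bound C ?_
    filter_upwards [hδR.bound, hmK.bound, eventually_ge_atTop (4 + 2 * R + 2 * K + 2 * |c|)]
      with x hδx hmx hx
    rw [norm_one, mul_one, Real.norm_eq_abs] at hδx hmx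
    have hcx := neg_abs_le c
    have hc₀ := abs_nonneg c
    have hmx' := (abs_le.mp hmx).1
    have hx₀ : 0 < x := by linarith
    rw [Real.norm_eq_abs, norm_mul, Real.norm_eq_abs, Real.norm_of_nonneg (by positivity),
      Real.rpow_neg hx₀.le, ← Real.sqrt_eq_rpow]
    exact hC x (δ x) (m x) (by linarith) (by linarith) hδx (by linarith) (by linarith)
  refine (hbound.trans ((negBinom_comp_isBigO hc hm).mul (isBigO_refl _ _))).congr' .rfl ?_
  filter_upwards [eventually_gt_atTop 0] with x hx
  rw [← Real.rpow_add hx, sub_eq_add_neg _ (1 / 2 : ℝ)]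

lemma tsum_negBinom_div_half_sub_isBigO (hc : ∀ n : ℕ, c ≠ -n) (hc₁ : c < 1)
    (hm : (fun x => (m x : ℝ) - x) =O[atTop] fun _ => (1 : ℝ)) :
    (fun x => ∑' k : ℕ, negBinom c k / (1 / 2 - m x + k) -
        Real.cos (Real.pi * (1 - c)) * Real.Gamma (1 - c) * x ^ (c - 1))
      =O[atTop] fun x => x ^ (c - 1 - 1 / 2) := by
  have hm_half : (fun x => (m x : ℝ) + 1 / 2 - x) =O[atTop] fun _ => (1 : ℝ) := by
    simpa [sub_add_eq_add_sub] using hm.add (isBigO_const_const (1 / 2 : ℝ) one_ne_zero atTop)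
  have hratio := (Gamma_ratio_comp_sub_rpow_isBigO hm_half (c - 1)).trans
    (rpow_isBigO_rpow_atTop (q := c - 1 - 1 / 2) (by linarith))
  refine (hratio.const_mul_left (Real.cos (Real.pi * (1 - c)) * Real.Gamma (1 - c))).congr' ?_ .rfl
  obtain ⟨K, hmK⟩ := hm.bound
  filter_upwards [hmK, eventually_gt_atTop (1 / 2 - c + K)] with x hmx hx
  rw [norm_one, mul_one, Real.norm_eq_abs] at hmx
  rw [tsum_negBinom_div_half_sub hc hc₁ (by linarith [abs_le.mp hmx]), mul_sub]

/-- The leading exponentially small contribution `z^{-a} e^{-z} cos(πa) / Γ(b - a)` to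
`₁F₁(b - a; b; -z) / Γ(b)`. -/
noncomputable def stokesTerm (a b z : ℂ) : ℂ :=
  z ^ (-a) * cexp (-z) / Complex.Gamma (b - a) * Complex.cos (Real.pi * a)

/-- After `m(x)` terms of the algebraic expansion, where `m(x) - x` is only required to be bounded,
the exponentially small contribution has Stokes multiplier `cos(πa)` to leading order. -/
def HasCosStokesMultiplier (a b : ℝ) : Prop :=
  ∀ m : ℝ → ℕ, (fun x => (m x : ℝ) - x) =O[atTop] (fun _ => (1 : ℝ)) →
    (fun x : ℝ => stokesRemainder (m x) a b x - stokesTerm a b x)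
      =O[atTop] fun x : ℝ => x ^ (-a - 1 / 2) * Real.exp (-x)

lemma stokesRemainder_sub_stokesTerm_eq {a b x : ℝ} (ha : ∀ n : ℤ, a ≠ n) (ha₀ : 0 < a)
    (hba : a < b) (hx : 0 < x) (m : ℕ) :
    stokesRemainder m a b x - stokesTerm a b x =
      ((Real.Gamma a * Real.Gamma (b - a))⁻¹ *
        ((saddleIntegral (1 - a) m (b - a + m - 1 / 2 - x) x -
          Real.cos (Real.pi * a) * Real.Gamma a * x ^ (-a)) * Real.exp (-x)) : ℝ) := by
  have hΓa := (Real.Gamma_pos_of_pos ha₀).ne'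
  have hΓba := (Real.Gamma_pos_of_pos (sub_pos.mpr hba)).ne'
  have hrep := exp_mul_Gamma_mul_Gamma_mul_stokesRemainder ha ha₀ hba hx m
  rw [← Complex.ofReal_sub, Complex.Gamma_ofReal, Complex.Gamma_ofReal] at hrep
  push_cast [Complex.ofReal_cpow hx.le]
  rw [← hrep, stokesTerm, ← Complex.ofReal_sub, Complex.Gamma_ofReal, Complex.exp_neg]
  have := Complex.exp_ne_zero x
  have : (Real.Gamma a : ℂ) ≠ 0 := by exact_mod_cast hΓa
  have : (Real.Gamma (b - a) : ℂ) ≠ 0 := by exact_mod_cast hΓba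
  field_simp

theorem hasCosStokesMultiplier_of_pos {a b : ℝ} (ha : ∀ n : ℤ, a ≠ n) (ha₀ : 0 < a)
    (hba : a < b) : HasCosStokesMultiplier a b := by
  intro m hm
  have hc (n : ℕ) : 1 - a ≠ -n := fun h => ha (n + 1) (by push_cast; linarith)
  have hc₁ : 1 - a < 1 := sub_lt_self 1 ha₀
  have hδ : (fun x => b - a + m x - 1 / 2 - x) =O[atTop] fun _ => (1 : ℝ) :=
    (hm.add (isBigO_const_const (b - a - 1 / 2) one_ne_zero atTop)).congr_left fun x => by ring
  have hsaddle := (saddleIntegral_sub_tsum_isBigO hc hc₁ hm hδ).add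
    (tsum_negBinom_div_half_sub_isBigO hc hc₁ hm)
  rw [show 1 - a - 1 = -a by ring, sub_sub_cancel] at hsaddle
  have hscaled := (hsaddle.mul (isBigO_refl (fun x => Real.exp (-x)) atTop)).const_mul_left
    (Real.Gamma a * Real.Gamma (b - a))⁻¹
  refine (Complex.isBigO_ofReal_left.mpr hscaled).congr' ?_ .rfl
  filter_upwards [eventually_gt_atTop 0] with x hx
  rw [stokesRemainder_sub_stokesTerm_eq ha ha₀ hba hx, sub_add_sub_cancel]

end BaseCase

section Contiguity

lemma ascPochhammer_succ_eval_left {R : Type*} [CommSemiring R] (s : R) (n : ℕ) :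
    (ascPochhammer R (n + 1)).eval s = s * (ascPochhammer R n).eval (s + 1) := by
  simp [ascPochhammer_succ_left]

lemma mul_ascPochhammer_eval_add_one {R : Type*} [CommSemiring R] (s : R) (n : ℕ) :
    s * (ascPochhammer R n).eval (s + 1) = (s + n) * (ascPochhammer R n).eval s := by
  rw [← ascPochhammer_succ_eval_left, ascPochhammer_succ_eval, mul_comm]

variable {a b z : ℂ}

lemma ascPochhammer_eval_ne_zero (hb : ∀ n : ℕ, b ≠ -n) (n : ℕ) :
    (ascPochhammer ℂ n).eval b ≠ 0 := by
  rw [Ne, ascPochhammer_eval_eq_zero_iff]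
  rintro ⟨k, -, hk⟩
  exact hb k (by rw [hk, neg_neg])

lemma summable_kummer (a z : ℂ) (hb : ∀ n : ℕ, b ≠ -n) :
    Summable fun n : ℕ => (ascPochhammer ℂ n).eval a / (ascPochhammer ℂ n).eval b * z ^ n /
      n.factorial := by
  have hratio : Tendsto (fun n : ℕ => (a + n) / (b + n) * (z / (n + 1))) atTop (nhds 0) := by
    have hquot := tendsto_add_mul_div_add_mul_atTop_nhds a b (1 : ℂ) one_ne_zero
    have hinv := (tendsto_one_div_add_atTop_nhds_zero_nat (𝕜 := ℂ)).const_mul z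
    simpa [div_eq_mul_inv] using hquot.mul hinv
  refine summable_of_ratio_norm_eventually_le (r := 1 / 2) (by norm_num) ?_
  filter_upwards [hratio.norm.eventually_le_const (by norm_num : ‖(0 : ℂ)‖ < 1 / 2)] with n hn
  refine le_trans (le_of_eq ?_) (mul_le_mul_of_nonneg_right hn (norm_nonneg _))
  have hb_ne := ascPochhammer_eval_ne_zero hb n
  have hbn : b + n ≠ 0 := fun h => hb n (eq_neg_of_add_eq_zero_left h)
  have hn₁ : (n : ℂ) + 1 ≠ 0 := Nat.cast_add_one_ne_zero n
  rw [← norm_mul, ascPochhammer_succ_eval, ascPochhammer_succ_eval, Nat.factorial_succ]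
  push_cast
  congr 1
  field_simp
  ring

lemma tsum_eq_tsum_add_mul_tsum {f g h : ℕ → ℂ} {r : ℂ} (hf : Summable f) (hg : Summable g)
    (hh : Summable h) (hzero : f 0 = g 0) (hsucc : ∀ n, f (n + 1) = g (n + 1) + r * h n) :
    ∑' n, f n = ∑' n, g n + r * ∑' n, h n := by
  rw [hf.tsum_eq_zero_add, hg.tsum_eq_zero_add, hzero, tsum_congr hsucc,
    ((summable_nat_add_iff 1).mpr hg).tsum_add (hh.mul_left r), tsum_mul_left, add_assoc]

lemma ascPochhammer_succ_eval_eq_div (hb : ∀ n : ℕ, b ≠ -n) (n : ℕ) :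
    (ascPochhammer ℂ (n + 1)).eval b =
      b * ((b + 1) * (ascPochhammer ℂ n).eval (b + 2)) / (b + 1 + n) := by
  have hbn : b + 1 + n ≠ 0 := fun h =>
    ne_neg_natCast_add_one hb n (eq_neg_of_add_eq_zero_left h)
  have hshift := mul_ascPochhammer_eval_add_one (b + 1) n
  rw [add_assoc, one_add_one_eq_two] at hshift
  rw [ascPochhammer_succ_eval_left, eq_div_iff hbn, hshift]
  ring

lemma kummer_eq_kummer_add_one_right_add (a z : ℂ) (hb : ∀ n : ℕ, b ≠ -n) :
    kummer a b z = kummer a (b + 1) z + z * a / (b * (b + 1)) * kummer (a + 1) (b + 2) z := by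
  have hb₁ := ne_neg_natCast_add_one hb
  have hb₂ := ne_neg_natCast_add_two hb
  refine tsum_eq_tsum_add_mul_tsum (summable_kummer a z hb) (summable_kummer a z hb₁)
    (summable_kummer _ z hb₂) (by simp) fun n => ?_
  have hQ := ascPochhammer_eval_ne_zero hb₂ n
  have hb₀ : b ≠ 0 := by simpa using hb 0
  have hb₁₀ : b + 1 ≠ 0 := by simpa using hb₁ 0
  have : b + 1 + n ≠ 0 := fun h => hb₁ n (eq_neg_of_add_eq_zero_left h)
  have hn : (n : ℂ) + 1 ≠ 0 := Nat.cast_add_one_ne_zero n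
  rw [ascPochhammer_succ_eval_eq_div hb, ascPochhammer_succ_eval_left a,
    ascPochhammer_succ_eval_left (b + 1), add_assoc b 1 1, one_add_one_eq_two, Nat.factorial_succ]
  push_cast
  field_simp
  ring

lemma kummer_eq_kummer_add_one_add_one_sub (a z : ℂ) (hb : ∀ n : ℕ, b ≠ -n) :
    kummer a b z =
      kummer (a + 1) (b + 1) z + -(z * (b - a)) / (b * (b + 1)) * kummer (a + 1) (b + 2) z := by
  have hb₁ := ne_neg_natCast_add_one hb
  have hb₂ := ne_neg_natCast_add_two hb
  refine tsum_eq_tsum_add_mul_tsum (summable_kummer a z hb) (summable_kummer _ z hb₁)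
    (summable_kummer _ z hb₂) (by simp) fun n => ?_
  have hQ := ascPochhammer_eval_ne_zero hb₂ n
  have hb₀ : b ≠ 0 := by simpa using hb 0
  have hb₁₀ : b + 1 ≠ 0 := by simpa using hb₁ 0
  have : b + 1 + n ≠ 0 := fun h => hb₁ n (eq_neg_of_add_eq_zero_left h)
  have hn : (n : ℂ) + 1 ≠ 0 := Nat.cast_add_one_ne_zero n
  rw [ascPochhammer_succ_eval_eq_div hb, ascPochhammer_succ_eval_left a,
    ascPochhammer_succ_eval (k := a + 1),
    ascPochhammer_succ_eval_left (b + 1), add_assoc b 1 1, one_add_one_eq_two, Nat.factorial_succ]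
  push_cast
  field_simp
  ring

lemma mul_algebraicSum_add_one_right (m : ℕ) (s c z : ℂ) :
    c * algebraicSum m s (c + 1) z =
      s * algebraicSum m (s + 1) c z - (s - c) * algebraicSum m s c z := by
  simp only [algebraicSum, Finset.mul_sum]
  rw [← Finset.sum_sub_distrib]
  refine Finset.sum_congr rfl fun j _ => ?_
  have hs := mul_ascPochhammer_eval_add_one s j
  have hc := mul_ascPochhammer_eval_add_one c j
  linear_combination ((ascPochhammer ℂ j).eval s * hc - (ascPochhammer ℂ j).eval c * hs) /
    (j.factorial * z ^ j)

lemma algebraicSum_succ_eq (m : ℕ) (s c : ℂ) (hz : z ≠ 0) :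
    algebraicSum (m + 1) s (c + 1) z =
      (s - c) / z * algebraicSum m (s + 1) (c + 1) z + algebraicSum (m + 1) (s + 1) c z := by
  simp only [algebraicSum, Finset.mul_sum]
  rw [Finset.sum_range_succ', Finset.sum_range_succ' _ m, ← add_assoc, ← Finset.sum_add_distrib]
  congr 1
  · refine Finset.sum_congr rfl fun j _ => ?_
    have hj : (j : ℂ) + 1 ≠ 0 := Nat.cast_add_one_ne_zero j
    rw [ascPochhammer_succ_eval_left s, ascPochhammer_succ_eval (k := c + 1),
      ascPochhammer_succ_eval (k := s + 1), ascPochhammer_succ_eval_left c, Nat.factorial_succ]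
    push_cast
    field_simp
    ring
  · simp

lemma Gamma_add_two (hb : ∀ n : ℕ, b ≠ -n) :
    Complex.Gamma (b + 2) = (b + 1) * (b * Complex.Gamma b) := by
  have hb₀ : b ≠ 0 := by simpa using hb 0
  have hb₁ : b + 1 ≠ 0 := by simpa using ne_neg_natCast_add_one hb 0
  rw [← one_add_one_eq_two, ← add_assoc, Complex.Gamma_add_one _ hb₁, Complex.Gamma_add_one _ hb₀]

lemma stokesRemainder_eq_sub (m : ℕ) (ha : a ≠ 0) (hb : ∀ n : ℕ, b ≠ -n) (hz : z ≠ 0) :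
    stokesRemainder m a b z = b * stokesRemainder m (a + 1) (b + 1) z -
      z * (b - a) * stokesRemainder m (a + 1) (b + 2) z := by
  have hb₀ : b ≠ 0 := by simpa using hb 0
  have hb₁ : b + 1 ≠ 0 := by simpa using ne_neg_natCast_add_one hb 0
  have hΓ := Complex.Gamma_ne_zero hb
  have hsum : algebraicSum m (b - a) (1 - a) z =
      (b * algebraicSum m (b - a) (-a) z - (b - a) * algebraicSum m (b - a + 1) (-a) z) / a := by
    rw [eq_div_iff ha, show 1 - a = -a + 1 by ring]
    linear_combination -mul_algebraicSum_add_one_right m (b - a) (-a) z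
  have hpow : z ^ (a + 1 - (b + 2)) = z ^ (a - b) / z := by
    rw [show a + 1 - (b + 2) = a - b - 1 by ring, Complex.cpow_sub _ _ hz, Complex.cpow_one]
  simp only [stokesRemainder]
  rw [kummer_eq_kummer_add_one_right_add (b - a) (-z) hb, hsum, hpow, Gamma_add_two hb,
    Complex.Gamma_add_one _ hb₀, Complex.Gamma_add_one _ ha, add_sub_add_right_eq_sub,
    add_sub_add_right_eq_sub, show b + 2 - (a + 1) = b - a + 1 by ring,
    show 1 - (a + 1) = -a by ring]
  field_simp
  ring

lemma stokesRemainder_succ_eq_add (m : ℕ) (ha : a ≠ 0) (hb : ∀ n : ℕ, b ≠ -n) (hz : z ≠ 0) :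
    stokesRemainder (m + 1) a b z = b * stokesRemainder m a (b + 1) z +
      a * z * stokesRemainder (m + 1) (a + 1) (b + 2) z := by
  have hb₀ : b ≠ 0 := by simpa using hb 0
  have hb₁ : b + 1 ≠ 0 := by simpa using ne_neg_natCast_add_one hb 0
  have hΓ := Complex.Gamma_ne_zero hb
  have hsum : algebraicSum (m + 1) (b - a) (1 - a) z =
      b / z * algebraicSum m (b - a + 1) (1 - a) z + algebraicSum (m + 1) (b - a + 1) (-a) z := by
    rw [show 1 - a = -a + 1 by ring, algebraicSum_succ_eq m (b - a) (-a) hz, sub_neg_eq_add,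
      sub_add_cancel]
  have hpow (e : ℂ) (he : e = a - b - 1) : z ^ e = z ^ (a - b) / z := by
    rw [he, Complex.cpow_sub _ _ hz, Complex.cpow_one]
  simp only [stokesRemainder]
  rw [kummer_eq_kummer_add_one_add_one_sub (b - a) (-z) hb, hsum, hpow (a + 1 - (b + 2)) (by ring),
    hpow (a - (b + 1)) (by ring), Gamma_add_two hb, Complex.Gamma_add_one _ hb₀,
    Complex.Gamma_add_one _ ha, show b + 1 - a = b - a + 1 by ring,
    show b + 2 - (a + 1) = b - a + 1 by ring, show 1 - (a + 1) = -a by ring]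
  field_simp
  ring

end Contiguity

section ParameterShift

lemma stokesTerm_add_one_add_one (a b : ℂ) {z : ℂ} (hz : z ≠ 0) :
    stokesTerm (a + 1) (b + 1) z = -stokesTerm a b z / z := by
  rw [stokesTerm, stokesTerm, add_sub_add_right_eq_sub, neg_add', Complex.cpow_sub _ _ hz,
    Complex.cpow_one, mul_add, mul_one, Complex.cos_add_pi]
  ring

lemma stokesTerm_add_one_right {a b : ℂ} (hab : b - a ≠ 0) (z : ℂ) :
    stokesTerm a (b + 1) z = stokesTerm a b z / (b - a) := by
  rw [stokesTerm, stokesTerm, add_sub_right_comm, Complex.Gamma_add_one _ hab]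
  field_simp

lemma stokesTerm_add_one_add_two {a b z : ℂ} (hab : b - a ≠ 0) (hz : z ≠ 0) :
    stokesTerm (a + 1) (b + 2) z = -stokesTerm a b z / (z * (b - a)) := by
  rw [← one_add_one_eq_two, ← add_assoc, stokesTerm_add_one_add_one _ _ hz,
    stokesTerm_add_one_right hab]
  field_simp

lemma norm_stokesTerm_ofReal (a b : ℝ) {x : ℝ} (hx : 0 < x) :
    ‖stokesTerm a b x‖ =
      ‖(Complex.Gamma (b - a))⁻¹ * Complex.cos (Real.pi * a)‖ * (x ^ (-a) * Real.exp (-x)) := by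
  rw [stokesTerm, div_mul_eq_mul_div, mul_div_assoc, div_eq_inv_mul, norm_mul, norm_mul _ (cexp _),
    Complex.norm_cpow_eq_rpow_re_of_pos hx, Complex.norm_exp, mul_comm]
  simp

lemma stokesTerm_isBigO (a b : ℝ) :
    (fun x : ℝ => stokesTerm a b x) =O[atTop] fun x => x ^ (-a) * Real.exp (-x) := by
  refine .of_bound ‖(Complex.Gamma (b - a))⁻¹ * Complex.cos (Real.pi * a)‖ ?_
  filter_upwards [eventually_gt_atTop 0] with x hx
  rw [norm_stokesTerm_ofReal a b hx, Real.norm_of_nonneg (by positivity)]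

lemma rpow_mul_exp_neg_isBigO {p q : ℝ} (hpq : p ≤ q) :
    (fun x : ℝ => x ^ p * Real.exp (-x)) =O[atTop] fun x => x ^ q * Real.exp (-x) :=
  (rpow_isBigO_rpow_atTop hpq).mul (isBigO_refl _ _)

variable {a b : ℝ}

lemma HasCosStokesMultiplier.ofReal_mul_isBigO (h : HasCosStokesMultiplier (a + 1) b) {m : ℝ → ℕ}
    (hm : (fun x => (m x : ℝ) - x) =O[atTop] fun _ => (1 : ℝ)) :
    (fun x : ℝ => x * (stokesRemainder (m x) (a + 1) b x - stokesTerm (a + 1) b x))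
      =O[atTop] fun x : ℝ => x ^ (-a - 1 / 2) * Real.exp (-x) := by
  have hmul := (Complex.isBigO_ofReal_left.mpr (isBigO_refl (fun x : ℝ => x) atTop)).mul (h m hm)
  refine (hmul.congr_left fun x => by push_cast; rfl).congr' .rfl ?_
  filter_upwards [eventually_gt_atTop 0] with x hx
  rw [← mul_assoc, mul_comm x, ← Real.rpow_add_one hx.ne']
  ring_nf

lemma hasCosStokesMultiplier_of_add_one_add_one (ha : a ≠ 0) (hb : ∀ n : ℕ, b ≠ -n)
    (hab : b - a ≠ 0) (h₁ : HasCosStokesMultiplier (a + 1) (b + 1))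
    (h₂ : HasCosStokesMultiplier (a + 1) (b + 2)) : HasCosStokesMultiplier a b := by
  intro m hm
  have hrem₁ := (h₁ m hm).trans (rpow_mul_exp_neg_isBigO (q := -a - 1 / 2) (by linarith))
  have hterm := (stokesTerm_isBigO (a + 1) (b + 1)).trans
    (rpow_mul_exp_neg_isBigO (q := -a - 1 / 2) (by linarith))
  have hrem₂ := (h₂.ofReal_mul_isBigO hm).const_mul_left ((b : ℂ) - a)
  refine (((hrem₁.add hterm).const_mul_left (b : ℂ)).sub hrem₂).congr' ?_ .rfl
  filter_upwards [eventually_gt_atTop 0] with x hx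
  have hx' : (x : ℂ) ≠ 0 := by exact_mod_cast hx.ne'
  have hab' : (b : ℂ) - a ≠ 0 := by exact_mod_cast hab
  have hrec := stokesRemainder_eq_sub (a := a) (b := b) (m x)
    (by exact_mod_cast ha) (by exact_mod_cast hb) hx'
  push_cast
  rw [hrec, stokesTerm_add_one_add_two hab' hx']
  field_simp
  ring

lemma hasCosStokesMultiplier_of_add_one_right (ha : a ≠ 0) (hb : ∀ n : ℕ, b ≠ -n)
    (hab : b - a ≠ 0) (h₁ : HasCosStokesMultiplier a (b + 1))
    (h₂ : HasCosStokesMultiplier (a + 1) (b + 2)) : HasCosStokesMultiplier a b := by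
  intro m hm
  obtain ⟨K, hmK⟩ := hm.bound
  have hpred : ∀ᶠ x in atTop, m x - 1 + 1 = m x := by
    filter_upwards [hmK, eventually_gt_atTop K] with x hmx hx
    rw [norm_one, mul_one, Real.norm_eq_abs] at hmx
    have : (0 : ℝ) < m x := by linarith [abs_le.mp hmx]
    exact Nat.sub_add_cancel (by exact_mod_cast this)
  have hm_pred : (fun x => ((m x - 1 : ℕ) : ℝ) - x) =O[atTop] fun _ => (1 : ℝ) := by
    refine (hm.sub (isBigO_refl _ _)).congr' ?_ .rfl
    filter_upwards [hpred] with x hx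
    rw [← hx, Nat.cast_succ, Nat.add_sub_cancel]
    ring
  have hrem₁ := (h₁ _ hm_pred).const_mul_left (b : ℂ)
  have hrem₂ := (h₂.ofReal_mul_isBigO hm).const_mul_left (a : ℂ)
  refine (hrem₁.add hrem₂).congr' ?_ .rfl
  filter_upwards [eventually_gt_atTop 0, hpred] with x hx hmx
  have hx' : (x : ℂ) ≠ 0 := by exact_mod_cast hx.ne'
  have hab' : (b : ℂ) - a ≠ 0 := by exact_mod_cast hab
  have hrec := stokesRemainder_succ_eq_add (a := a) (b := b) (m x - 1)
    (by exact_mod_cast ha) (by exact_mod_cast hb) hx'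
  rw [hmx] at hrec
  push_cast
  rw [hrec, stokesTerm_add_one_add_two hab' hx', stokesTerm_add_one_right hab']
  field_simp
  ring

lemma hasCosStokesMultiplier_of_pos_left (ha : ∀ n : ℤ, a ≠ n) (ha₀ : 0 < a)
    (hb : ∀ n : ℕ, b ≠ -n) (hab : ∀ n : ℕ, b - a ≠ -n) : HasCosStokesMultiplier a b := by
  obtain ⟨n, hn⟩ := exists_nat_gt (a - b)
  induction n generalizing a b with
  | zero => exact hasCosStokesMultiplier_of_pos ha ha₀ (by simpa using hn)
  | succ n ih =>
    push_cast at hn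
    have ha₁ (k : ℤ) : a + 1 ≠ k := fun h => ha (k - 1) (by push_cast; linarith)
    refine hasCosStokesMultiplier_of_add_one_right ha₀.ne' hb (by simpa using hab 0)
      (ih ha ha₀ (ne_neg_natCast_add_one hb) ?_ (by linarith))
      (ih ha₁ (by linarith) (ne_neg_natCast_add_two hb) ?_ (by linarith))
    · rw [add_sub_right_comm]
      exact ne_neg_natCast_add_one hab
    · rw [show b + 2 - (a + 1) = b - a + 1 by ring]
      exact ne_neg_natCast_add_one hab

theorem hasCosStokesMultiplier (ha : ∀ n : ℤ, a ≠ n) (hb : ∀ n : ℕ, b ≠ -n)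
    (hab : ∀ n : ℕ, b - a ≠ -n) : HasCosStokesMultiplier a b := by
  obtain ⟨n, hn⟩ := exists_nat_gt (-a)
  induction n generalizing a b with
  | zero => exact hasCosStokesMultiplier_of_pos_left ha (by simpa using hn) hb hab
  | succ n ih =>
    push_cast at hn
    have ha₁ (k : ℤ) : a + 1 ≠ k := fun h => ha (k - 1) (by push_cast; linarith)
    refine hasCosStokesMultiplier_of_add_one_add_one (by simpa using ha 0) hb (by simpa using hab 0)
      (ih ha₁ (ne_neg_natCast_add_one hb) ?_ (by linarith))
      (ih ha₁ (ne_neg_natCast_add_two hb) ?_ (by linarith))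
    · rwa [add_sub_add_right_eq_sub]
    · rw [show b + 2 - (a + 1) = b - a + 1 by ring]
      exact ne_neg_natCast_add_one hab

lemma floor_add_toNat_sub_isBigO_one (d : ℝ) :
    (fun x : ℝ => (⌊x + d⌋.toNat : ℝ) - x) =O[atTop] fun _ => (1 : ℝ) := by
  refine .of_bound (|d| + 1) ?_
  filter_upwards [eventually_ge_atTop (-d)] with x hx
  have hfloor : ((⌊x + d⌋.toNat : ℕ) : ℝ) = ⌊x + d⌋ := by
    exact_mod_cast Int.toNat_of_nonneg (Int.floor_nonneg.mpr (by linarith))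
  rw [hfloor, norm_one, mul_one, Real.norm_eq_abs, abs_le]
  constructor <;>
    linarith [neg_abs_le d, le_abs_self d, Int.floor_le (x + d), Int.lt_floor_add_one (x + d)]

end ParameterShift

end KummerStokes

theorem kummer_stokes_line_exponentially_small_general (a b : ℝ) (ha : ∀ n : ℤ, a ≠ n)
    (hb : ∀ n : ℕ, b ≠ -n) (hba : ∀ n : ℕ, b - a ≠ -n) (m : ℝ → ℕ)
    (hm : (fun x => (m x : ℝ) - x) =O[atTop] fun _ => (1 : ℝ)) :
    (fun x : ℝ =>
        (1 / Complex.Gamma b * kummer (b - a) b (-x) -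
            (x : ℂ) ^ ((a : ℂ) - b) / Complex.Gamma a *
              ∑ j ∈ Finset.range (m x),
                (ascPochhammer ℂ j).eval ((b : ℂ) - a) * (ascPochhammer ℂ j).eval (1 - (a : ℂ)) /
                  (j.factorial * (x : ℂ) ^ j)) -
          (x : ℂ) ^ (-(a : ℂ)) * Complex.exp (-x) / Complex.Gamma (b - a) *
            (Real.cos (Real.pi * a) : ℂ))
      =O[atTop] fun x : ℝ => x ^ (-a - 1 / 2) * Real.exp (-x) := by
  simpa only [KummerStokes.stokesRemainder, KummerStokes.algebraicSum, KummerStokes.stokesTerm,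
    Complex.ofReal_cos, Complex.ofReal_mul] using
    KummerStokes.hasCosStokesMultiplier ha hb hba m hm

/-- On the Stokes line `arg z = π`: after subtracting the optimally truncated dominant
algebraic expansion (truncation index `m₀(x) = ⌊x + 2a − b⌋`) from `₁F₁(b−a;b;−x)/Γ(b)`,
the exponentially small contribution is `(x^{−a} e^{−x}/Γ(b−a)) (cos(πa) + O(x^{−1/2}))`. -/
theorem kummer_stokes_line_exponentially_small (a b : ℝ)
    (ha : ∀ n : ℤ, a ≠ (n : ℝ)) (hb : ∀ n : ℕ, b ≠ -(n : ℝ)) (hba : ∀ n : ℕ, b - a ≠ -(n : ℝ)) :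
    (fun x : ℝ =>
        ((1 / Complex.Gamma (b : ℂ)) * kummer ((b : ℂ) - (a : ℂ)) (b : ℂ) (-(x : ℂ)) -
            ((x : ℂ) ^ ((a : ℂ) - (b : ℂ)) / Complex.Gamma (a : ℂ)) *
              ∑ j ∈ Finset.range (⌊x + 2 * a - b⌋.toNat),
                (ascPochhammer ℂ j).eval ((b : ℂ) - (a : ℂ)) *
                  (ascPochhammer ℂ j).eval (1 - (a : ℂ)) / (j.factorial * (x : ℂ) ^ j)) -
          (x : ℂ) ^ (-(a : ℂ)) * Complex.exp (-(x : ℂ)) / Complex.Gamma ((b : ℂ) - (a : ℂ)) *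
            (Real.cos (Real.pi * a) : ℂ))
      =O[atTop] fun x : ℝ => x ^ (-a - 1 / 2) * Real.exp (-x) := by
  refine kummer_stokes_line_exponentially_small_general a b ha hb hba _ ?_
  simpa only [add_sub_assoc] using KummerStokes.floor_add_toNat_sub_isBigO_one (2 * a - b)
end

section
/- Let α, β > 0 be real with κ := 1 + β − α > 0, and let a, b ∈ ℂ be such that αn + a is not a nonpositive integer for every natural number n. Set h := α^α β^{−β}, ϑ := a − b, A := κ^{−ϑ−1/2} α^{a−1/2} β^{1/2−b}, and for x > 0 set Z(x) := κ (h x)^{1/κ}. Then as x → +∞ along the positive real axis, ₁Ψ₁((α,a); (β,b) | x) / (A · Z(x)^ϑ · e^{Z(x)}) tends to 1. -/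
open Complex Filter

/-- The Wright function `₁Ψ₁((α,a); (β,b) | z) = ∑ Γ(αn+a)/Γ(βn+b) · zⁿ/n!`. -/
noncomputable def wright (α β : ℝ) (a b z : ℂ) : ℂ :=
  ∑' n : ℕ, (Complex.Gamma ((α : ℂ) * n + a) / Complex.Gamma ((β : ℂ) * n + b)) *
    z ^ n / n.factorial

/-!
Stirling's formula turns the coefficients of the Wright series into the weights
`n ^ (a - b - 1/2) * hⁿ * (e / n) ^ (κ n)`, up to a constant. With `X = (h x) ^ (1 / κ)` the `n`-th
term of the series divided by `e ^ (κ X)` is therefore of size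
`n ^ (a - b - 1/2) * exp (κ * (n log (X / n) + n - X))`, and Laplace's method applies. In the
coordinate `v = √n - √X` the exponent `n log (X / n) + n - X` is at most `-v²` and tends to `-2 v²`,
so the sum is a Gaussian integral by dominated convergence. The same exponent governs Euler's
integral for `Γ(t + a)`, so the same dominated convergence argument also gives Stirling's formula.
-/

section WrightAsymptotics

open MeasureTheory Set
open scoped Topology Real

/-- The logarithm of `(e x / t) ^ t * e ^ (-x)`, i.e. minus the large-deviation rate function of
the Poisson distribution. The exponent of the integrand of `Γ(t + 1)` normalised by its maximum is
`x ↦ poissonExponent t x`, and that of the terms of the normalised Wright series is a multiple of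
`n ↦ poissonExponent n X`. At `t = 0` the junk value of `x / 0` is harmless and the exponent
is `-x`. -/
noncomputable def poissonExponent (t x : ℝ) : ℝ :=
  t * Real.log (x / t) + t - x

lemma log_div_eq_two_mul_log_one_add {x t : ℝ} (hx : 0 < x) (ht : 0 < t) :
    Real.log (x / t) = 2 * Real.log (1 + (√x - √t) / √t) := by
  have hst : √t ≠ 0 := by positivity
  rw [sub_div, div_self hst, add_sub_cancel, ← Real.sqrt_div hx.le, Real.log_sqrt (by positivity),
    mul_div_cancel₀ _ two_ne_zero]

lemma log_div_le_two_mul_sqrt_sub_div {x t : ℝ} (hx : 0 < x) (ht : 0 < t) :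
    Real.log (x / t) ≤ 2 * ((√x - √t) / √t) := by
  have hpos : 0 < 1 + (√x - √t) / √t := by
    rw [show 1 + (√x - √t) / √t = √x / √t by field_simp; ring]
    positivity
  rw [log_div_eq_two_mul_log_one_add hx ht]
  linarith [Real.log_le_sub_one_of_pos hpos]

lemma log_sub_log_le_two_mul_abs_sqrt_sub {x t : ℝ} (hx : 0 < x) (ht : 1 ≤ t) :
    Real.log x - Real.log t ≤ 2 * |√x - √t| := by
  have ht₀ : 0 < t := by linarith
  have hst : 1 ≤ √t := Real.one_le_sqrt.2 ht
  calc Real.log x - Real.log t = Real.log (x / t) := (Real.log_div hx.ne' ht₀.ne').symm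
    _ ≤ 2 * ((√x - √t) / √t) := log_div_le_two_mul_sqrt_sub_div hx ht₀
    _ ≤ 2 * (|√x - √t| / √t) := by gcongr; exact le_abs_self _
    _ ≤ 2 * |√x - √t| := by gcongr; exact div_le_self (abs_nonneg _) hst

lemma abs_log_natCast_sub_log_le (n : ℕ) {x : ℝ} (hx : 1 ≤ x) :
    |Real.log n - Real.log x| ≤ 2 * |√n - √x| := by
  have hx₀ : 0 < x := by linarith
  rcases n.eq_zero_or_pos with rfl | hn
  · have hsx : 1 ≤ √x := Real.one_le_sqrt.2 hx
    have hlog := log_sub_log_le_two_mul_abs_sqrt_sub hx₀ le_rfl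
    rw [Real.log_one, Real.sqrt_one, abs_of_nonneg (by linarith)] at hlog
    simp only [Nat.cast_zero, Real.log_zero, Real.sqrt_zero, zero_sub, abs_neg,
      abs_of_nonneg (Real.log_nonneg hx), abs_of_nonneg (Real.sqrt_nonneg x)]
    linarith
  · have hn₁ : (1 : ℝ) ≤ n := mod_cast hn
    have hxn := log_sub_log_le_two_mul_abs_sqrt_sub hx₀ hn₁
    rw [abs_sub_comm] at hxn
    exact abs_sub_le_iff.2 ⟨log_sub_log_le_two_mul_abs_sqrt_sub (by linarith) hx, hxn⟩

lemma poissonExponent_le {t x : ℝ} (ht : 0 ≤ t) (hx : 0 < x) :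
    poissonExponent t x ≤ -(√x - √t) ^ 2 := by
  rcases ht.eq_or_lt with rfl | ht
  · simp [poissonExponent, Real.sq_sqrt hx.le]
  · calc poissonExponent t x ≤ t * (2 * ((√x - √t) / √t)) + t - x := by
          unfold poissonExponent
          gcongr
          exact log_div_le_two_mul_sqrt_sub_div hx ht
      _ = √t ^ 2 * (2 * ((√x - √t) / √t)) + √t ^ 2 - √x ^ 2 := by
          rw [Real.sq_sqrt ht.le, Real.sq_sqrt hx.le]
      _ = -(√x - √t) ^ 2 := by field_simp; ring

lemma poissonExponent_eq_sq_mul_log_one_add_sub {t x : ℝ} (ht : 0 < t) (hx : 0 < x) :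
    poissonExponent t x =
      2 * (√t ^ 2 * (Real.log (1 + (√x - √t) / √t) - (√x - √t) / √t)) - (√x - √t) ^ 2 := by
  calc poissonExponent t x
      = √t ^ 2 * (2 * Real.log (1 + (√x - √t) / √t)) + √t ^ 2 - √x ^ 2 := by
        rw [poissonExponent, log_div_eq_two_mul_log_one_add hx ht, Real.sq_sqrt ht.le,
          Real.sq_sqrt hx.le]
    _ = _ := by field_simp; ring

section Limits

variable {ι : Type*} {l : Filter ι}

lemma tendsto_sq_mul_log_one_add_sub {r u : ι → ℝ} {v : ℝ} (hu : Tendsto u l (𝓝 0))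
    (hru : Tendsto (fun i => r i * u i) l (𝓝 v)) :
    Tendsto (fun i => r i ^ 2 * (Real.log (1 + u i) - u i)) l (𝓝 (-v ^ 2 / 2)) := by
  have habs : Tendsto (fun i => |u i|) l (𝓝 0) := by simpa using hu.abs
  have herror : Tendsto (fun i => r i ^ 2 * (Real.log (1 + u i) - u i) + (r i * u i) ^ 2 / 2) l
      (𝓝 0) := by
    have hbound : Tendsto (fun i => (r i * u i) ^ 2 * (|u i| / (1 - |u i|))) l (𝓝 0) := by
      simpa using (hru.pow 2).mul (habs.div (habs.const_sub 1) (by norm_num))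
    refine squeeze_zero_norm' ?_ hbound
    filter_upwards [habs.eventually_lt_const one_pos] with i hi
    have htaylor : |u i ^ 2 / 2 - u i + Real.log (1 + u i)| ≤ |u i| ^ 3 / (1 - |u i|) := by
      have := Real.abs_log_sub_add_sum_range_le (x := -u i) (by rwa [abs_neg]) 2
      norm_num [Finset.sum_range_succ] at this
      convert this using 2
      ring
    calc ‖r i ^ 2 * (Real.log (1 + u i) - u i) + (r i * u i) ^ 2 / 2‖
        = r i ^ 2 * |u i ^ 2 / 2 - u i + Real.log (1 + u i)| := by
          rw [Real.norm_eq_abs, ← abs_of_nonneg (sq_nonneg (r i)), ← abs_mul,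
            abs_of_nonneg (sq_nonneg (r i))]
          ring_nf
      _ ≤ r i ^ 2 * (|u i| ^ 3 / (1 - |u i|)) := by gcongr
      _ = (r i * u i) ^ 2 * (|u i| / (1 - |u i|)) := by rw [mul_pow, ← sq_abs (u i)]; ring
  have := herror.sub ((hru.pow 2).div_const 2)
  simp only [add_sub_cancel_right] at this
  convert this using 2
  ring

variable {t x : ι → ℝ} {v : ℝ}

lemma tendsto_sqrt_sub_div_sqrt (ht : Tendsto t l atTop)
    (hv : Tendsto (fun i => √(x i) - √(t i)) l (𝓝 v)) :
    Tendsto (fun i => (√(x i) - √(t i)) / √(t i)) l (𝓝 0) :=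
  hv.div_atTop (Real.tendsto_sqrt_atTop.comp ht)

lemma tendsto_atTop_of_tendsto_sqrt_sub (ht : Tendsto t l atTop)
    (hv : Tendsto (fun i => √(x i) - √(t i)) l (𝓝 v)) : Tendsto x l atTop := by
  have hsqrt : Tendsto (fun i => √(x i)) l atTop := by
    simpa using (Real.tendsto_sqrt_atTop.comp ht).atTop_add hv
  refine tendsto_atTop_mono' l ?_ hsqrt
  filter_upwards [hsqrt.eventually_ge_atTop 1] with i hi
  exact Real.sqrt_le_self_iff.2 (Or.inr (Real.one_le_sqrt.1 hi))

lemma tendsto_log_div_of_tendsto_sqrt_sub (ht : Tendsto t l atTop)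
    (hv : Tendsto (fun i => √(x i) - √(t i)) l (𝓝 v)) :
    Tendsto (fun i => Real.log (x i / t i)) l (𝓝 0) := by
  have hlog : Tendsto (fun i => 2 * Real.log (1 + (√(x i) - √(t i)) / √(t i))) l (𝓝 0) := by
    simpa using (((tendsto_sqrt_sub_div_sqrt ht hv).const_add 1).log (by norm_num)).const_mul 2
  refine hlog.congr' ?_
  filter_upwards [ht.eventually_gt_atTop 0,
    (tendsto_atTop_of_tendsto_sqrt_sub ht hv).eventually_gt_atTop 0] with i hti hxi
  exact (log_div_eq_two_mul_log_one_add hxi hti).symm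

lemma tendsto_poissonExponent (ht : Tendsto t l atTop)
    (hv : Tendsto (fun i => √(x i) - √(t i)) l (𝓝 v)) :
    Tendsto (fun i => poissonExponent (t i) (x i)) l (𝓝 (-2 * v ^ 2)) := by
  have hru : Tendsto (fun i => √(t i) * ((√(x i) - √(t i)) / √(t i))) l (𝓝 v) :=
    hv.congr' <| (ht.eventually_gt_atTop 0).mono fun i hi =>
      (mul_div_cancel₀ _ (Real.sqrt_pos.2 hi).ne').symm
  have hlim := ((tendsto_sq_mul_log_one_add_sub (tendsto_sqrt_sub_div_sqrt ht hv) hru).const_mul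
    2).sub (hv.pow 2)
  rw [show 2 * (-v ^ 2 / 2) - v ^ 2 = -2 * v ^ 2 by ring] at hlim
  refine hlim.congr' ?_
  filter_upwards [ht.eventually_gt_atTop 0,
    (tendsto_atTop_of_tendsto_sqrt_sub ht hv).eventually_gt_atTop 0] with i hti hxi
  exact (poissonExponent_eq_sq_mul_log_one_add_sub hti hxi).symm

lemma tendsto_sqrt_add_sqrt_sq_sub_sqrt (v : ℝ) :
    Tendsto (fun X : ℝ => √((v + √X) ^ 2) - √X) atTop (𝓝 v) := by
  refine tendsto_const_nhds.congr' ?_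
  filter_upwards [Real.tendsto_sqrt_atTop.eventually_ge_atTop (-v)] with X hX
  rw [Real.sqrt_sq (neg_le_iff_add_nonneg'.1 hX), add_sub_cancel_right]

end Limits

section SqrtRescale

variable {E : Type*} [NormedAddCommGroup E] [NormedSpace ℝ E]

/-- The function `g` in the coordinate `v = √x - √X` around `X`, multiplied by the Jacobian of
`v ↦ (v + √X) ^ 2` and by the factor `(√X)⁻¹` that makes it converge as `X → ∞`; it vanishes
outside the range `v > -√X` of the coordinate. -/
noncomputable def sqrtRescale (g : ℝ → E) (X : ℝ) : ℝ → E :=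
  (Ioi (-√X)).indicator fun v => ((√X)⁻¹ * (2 * (v + √X))) • g ((v + √X) ^ 2)

lemma image_add_sq_Ioi_neg (s : ℝ) : (fun v => (v + s) ^ 2) '' Ioi (-s) = Ioi 0 := by
  ext x
  refine ⟨?_, fun hx => ⟨√x - s, ?_, ?_⟩⟩
  · rintro ⟨v, hv, rfl⟩
    have : 0 < v + s := neg_lt_iff_pos_add.1 hv
    exact pow_pos this 2
  · simpa using hx
  · simpa using Real.sq_sqrt (le_of_lt hx)

lemma injOn_add_sq_Ioi_neg (s : ℝ) : InjOn (fun v => (v + s) ^ 2) (Ioi (-s)) := by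
  intro v hv w hw hvw
  simpa using (sq_eq_sq₀ (neg_lt_iff_pos_add.1 hv).le (neg_lt_iff_pos_add.1 hw).le).1 hvw

lemma hasDerivWithinAt_add_sq (s v : ℝ) (S : Set ℝ) :
    HasDerivWithinAt (fun v => (v + s) ^ 2) (2 * (v + s)) S v := by
  simpa using (((hasDerivAt_id' v).add_const s).fun_pow 2).hasDerivWithinAt

variable {g : ℝ → E} {X : ℝ}

lemma eqOn_abs_deriv_smul_sqrtRescale (hX : 0 < X) :
    EqOn (fun v => |2 * (v + √X)| • g ((v + √X) ^ 2)) (fun v => √X • sqrtRescale g X v)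
      (Ioi (-√X)) := by
  intro v hv
  have hpos : 0 < v + √X := neg_lt_iff_pos_add.1 hv
  have hsX : √X ≠ 0 := by positivity
  simp only [sqrtRescale, indicator_of_mem hv, smul_smul, mul_inv_cancel_left₀ hsX]
  rw [abs_of_pos (by positivity)]

lemma integral_sqrtRescale (hX : 0 < X) :
    ∫ v, sqrtRescale g X v = (√X)⁻¹ • ∫ x in Ioi 0, g x := by
  have hsX : √X ≠ 0 := by positivity
  have hcov := integral_image_eq_integral_abs_deriv_smul measurableSet_Ioi
    (fun v _ => hasDerivWithinAt_add_sq (√X) v (Ioi (-√X))) (injOn_add_sq_Ioi_neg (√X)) g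
  rw [image_add_sq_Ioi_neg, setIntegral_congr_fun measurableSet_Ioi
    (eqOn_abs_deriv_smul_sqrtRescale hX), integral_smul] at hcov
  rw [hcov, inv_smul_smul₀ hsX, ← integral_indicator measurableSet_Ioi, sqrtRescale,
    indicator_indicator, inter_self]

lemma integrable_sqrtRescale_iff (hX : 0 < X) :
    Integrable (sqrtRescale g X) ↔ IntegrableOn g (Ioi 0) := by
  have hsX : √X ≠ 0 := by positivity
  have hcov := integrableOn_image_iff_integrableOn_abs_deriv_smul measurableSet_Ioi
    (fun v _ => hasDerivWithinAt_add_sq (√X) v (Ioi (-√X))) (injOn_add_sq_Ioi_neg (√X)) g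
  rw [image_add_sq_Ioi_neg, integrableOn_congr_fun (eqOn_abs_deriv_smul_sqrtRescale hX)
    measurableSet_Ioi] at hcov
  rw [hcov, IntegrableOn, integrable_fun_smul_iff hsX, ← IntegrableOn,
    ← integrable_indicator_iff measurableSet_Ioi, sqrtRescale, indicator_indicator, inter_self]

lemma stronglyMeasurable_sqrtRescale (hg : StronglyMeasurable g) :
    StronglyMeasurable (sqrtRescale g X) := by
  have hmeas : Measurable fun v => (v + √X) ^ 2 := by fun_prop
  have hjac : Measurable fun v => (√X)⁻¹ * (2 * (v + √X)) := by fun_prop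
  exact (hjac.stronglyMeasurable.smul (hg.comp_measurable hmeas)).indicator measurableSet_Ioi

variable {Φ : ℝ → ℝ}

lemma norm_sqrtRescale_le (hΦ : ∀ v, 0 ≤ Φ v) (hX : 1 ≤ X)
    (hg : ∀ x, 0 < x → ‖g x‖ ≤ Φ (√x - √X)) (v : ℝ) :
    ‖sqrtRescale g X v‖ ≤ 2 * ((1 + |v|) * Φ v) := by
  have hΦv := hΦ v
  by_cases hv : v ∈ Ioi (-√X)
  · have hpos : 0 < v + √X := neg_lt_iff_pos_add.1 hv
    have hsX : 1 ≤ √X := Real.one_le_sqrt.2 hX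
    have hgv : ‖g ((v + √X) ^ 2)‖ ≤ Φ v := by
      have := hg ((v + √X) ^ 2) (by positivity)
      rwa [Real.sqrt_sq hpos.le, add_sub_cancel_right] at this
    have hjac : (√X)⁻¹ * (2 * (v + √X)) ≤ 2 * (1 + |v|) :=
      calc (√X)⁻¹ * (2 * (v + √X)) = 2 * (1 + v / √X) := by field_simp; ring
        _ ≤ 2 * (1 + |v| / √X) := by gcongr; exact le_abs_self v
        _ ≤ 2 * (1 + |v|) := by gcongr; exact div_le_self (abs_nonneg v) hsX
    rw [sqrtRescale, indicator_of_mem hv, norm_smul, Real.norm_of_nonneg (by positivity),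
      ← mul_assoc 2]
    exact mul_le_mul hjac hgv (norm_nonneg _) (by positivity)
  · rw [sqrtRescale, indicator_of_notMem hv, norm_zero]
    positivity

lemma tendsto_sqrtRescale {G : ℝ → ℝ → E} {v : ℝ} {y : E}
    (hG : Tendsto (fun X => G X ((v + √X) ^ 2)) atTop (𝓝 y)) :
    Tendsto (fun X => sqrtRescale (G X) X v) atTop (𝓝 ((2 : ℝ) • y)) := by
  have hjac : Tendsto (fun X => 2 * (1 + v / √X)) atTop (𝓝 2) := by
    simpa using ((tendsto_const_nhds.div_atTop Real.tendsto_sqrt_atTop).const_add 1).const_mul 2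
  refine (hjac.smul hG).congr' ?_
  filter_upwards [Real.tendsto_sqrt_atTop.eventually_gt_atTop (max 0 (-v))] with X hX
  have hsX : 0 < √X := (le_max_left _ _).trans_lt hX
  have hv : v ∈ Ioi (-√X) := neg_lt.1 ((le_max_right _ _).trans_lt hX)
  rw [sqrtRescale, indicator_of_mem hv]
  congr 1
  field_simp
  ring

lemma integrableOn_Ioi_of_norm_le_sqrt_sub (hΦ : ∀ v, 0 ≤ Φ v)
    (hΦint : Integrable fun v => (1 + |v|) * Φ v) (hg : StronglyMeasurable g) (hX : 1 ≤ X)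
    (hbound : ∀ x, 0 < x → ‖g x‖ ≤ Φ (√x - √X)) : IntegrableOn g (Ioi 0) :=
  (integrable_sqrtRescale_iff (by linarith)).1 <|
    (hΦint.const_mul 2).mono' (stronglyMeasurable_sqrtRescale hg).aestronglyMeasurable
      (.of_forall (norm_sqrtRescale_le hΦ hX hbound))

theorem tendsto_inv_sqrt_smul_integral_Ioi {G : ℝ → ℝ → E} {γ : ℝ → E} (hΦ : ∀ v, 0 ≤ Φ v)
    (hΦint : Integrable fun v => (1 + |v|) * Φ v)
    (hG : ∀ X, StronglyMeasurable (G X))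
    (hbound : ∀ X, 1 ≤ X → ∀ x, 0 < x → ‖G X x‖ ≤ Φ (√x - √X))
    (hlim : ∀ v, Tendsto (fun X => G X ((v + √X) ^ 2)) atTop (𝓝 (γ v))) :
    Tendsto (fun X => (√X)⁻¹ • ∫ x in Ioi 0, G X x) atTop (𝓝 ((2 : ℝ) • ∫ v, γ v)) := by
  have hrescaled : Tendsto (fun X => ∫ v, sqrtRescale (G X) X v) atTop
      (𝓝 (∫ v, (2 : ℝ) • γ v)) := by
    refine tendsto_integral_filter_of_dominated_convergence _ ?_ ?_ (hΦint.const_mul 2)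
      (.of_forall fun v => tendsto_sqrtRescale (hlim v))
    · exact .of_forall fun X => (stronglyMeasurable_sqrtRescale (hG X)).aestronglyMeasurable
    · filter_upwards [eventually_ge_atTop 1] with X hX
      exact .of_forall (norm_sqrtRescale_le hΦ hX (hbound X hX))
  rw [integral_smul] at hrescaled
  refine hrescaled.congr' ?_
  filter_upwards [eventually_gt_atTop 0] with X hX using integral_sqrtRescale hX

end SqrtRescale

section GaussianMajorant

lemma integrable_exp_mul_abs_sub_mul_sq (k : ℝ) {c : ℝ} (hc : 0 < c) :
    Integrable fun v : ℝ => Real.exp (k * |v| - c * v ^ 2) := by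
  have hdom : Integrable fun v : ℝ => Real.exp (k ^ 2 / (2 * c)) * Real.exp (-(c / 2) * v ^ 2) :=
    (integrable_exp_neg_mul_sq (by positivity)).const_mul _
  refine hdom.mono' (by fun_prop) (.of_forall fun v => ?_)
  rw [Real.norm_of_nonneg (Real.exp_nonneg _), ← Real.exp_add, Real.exp_le_exp, ← sub_nonneg]
  have hsq : k ^ 2 / (2 * c) + -(c / 2) * v ^ 2 - (k * |v| - c * v ^ 2) =
      (k - c * |v|) ^ 2 / (2 * c) := by
    rw [← sq_abs v]
    field_simp
    ring
  rw [hsq]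
  positivity

lemma integrable_one_add_abs_mul_exp_mul_abs_sub_mul_sq (C k : ℝ) {c : ℝ} (hc : 0 < c) :
    Integrable fun v : ℝ => (1 + |v|) * (C * Real.exp (k * |v| - c * v ^ 2)) := by
  refine ((integrable_exp_mul_abs_sub_mul_sq (k + 1) hc).const_mul |C|).mono' (by fun_prop)
    (.of_forall fun v => ?_)
  calc ‖(1 + |v|) * (C * Real.exp (k * |v| - c * v ^ 2))‖
      = (1 + |v|) * (|C| * Real.exp (k * |v| - c * v ^ 2)) := by
        rw [norm_mul, norm_mul, Real.norm_of_nonneg (by positivity), Real.norm_eq_abs C,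
          Real.norm_of_nonneg (by positivity)]
    _ ≤ Real.exp |v| * (|C| * Real.exp (k * |v| - c * v ^ 2)) := by
        gcongr
        linarith [Real.add_one_le_exp |v|]
    _ = |C| * Real.exp ((k + 1) * |v| - c * v ^ 2) := by
        rw [mul_left_comm, ← Real.exp_add]
        ring_nf

lemma two_mul_integral_exp_neg_two_mul_sq (κ : ℝ) :
    2 * ∫ v : ℝ, Real.exp (κ * (-2 * v ^ 2)) = √(2 * π / κ) := by
  have hgauss : ∫ v : ℝ, Real.exp (κ * (-2 * v ^ 2)) = √(π / (2 * κ)) := by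
    rw [← integral_gaussian]
    ring_nf
  rw [hgauss, show 2 * π / κ = 2 ^ 2 * (π / (2 * κ)) by field_simp,
    Real.sqrt_mul (by positivity), Real.sqrt_sq zero_le_two]

end GaussianMajorant

section FloorSums

variable {E : Type*} [NormedAddCommGroup E] [NormedSpace ℝ E] [CompleteSpace E]

lemma integral_Ioi_natFloor {f : ℕ → E} (hf : IntegrableOn (fun x : ℝ => f ⌊x⌋₊) (Ioi 0)) :
    ∫ x in Ioi (0 : ℝ), f ⌊x⌋₊ = ∑' n, f n := by
  have hfloor (n : ℕ) : (Nat.floor : ℝ → ℕ) ⁻¹' {n} ∩ Ici 0 = Ico (n : ℝ) (n + 1) := by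
    ext x
    constructor
    · rintro ⟨rfl, hx⟩
      exact ⟨Nat.floor_le hx, Nat.lt_floor_add_one x⟩
    · intro hx
      have hx₀ : 0 ≤ x := n.cast_nonneg.trans hx.1
      exact ⟨(Nat.floor_eq_iff hx₀).2 hx, hx₀⟩
  have hvol (n : ℕ) :
      ((volume.restrict (Ici (0 : ℝ))).map Nat.floor).real {n} = 1 := by
    rw [map_measureReal_apply Nat.measurable_floor (measurableSet_singleton n),
      measureReal_restrict_apply (Nat.measurable_floor (measurableSet_singleton n)), hfloor]
    simp
  rw [← integrableOn_Ici_iff_integrableOn_Ioi] at hf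
  rw [← integral_Ici_eq_integral_Ioi,
    ← integral_map Nat.measurable_floor.aemeasurable (AEStronglyMeasurable.of_discrete (f := f)),
    integral_countable ((integrable_map_measure .of_discrete
      Nat.measurable_floor.aemeasurable).2 hf)]
  simp only [hvol, one_smul]

lemma sqrt_natFloor_le {x : ℝ} (hx : 0 ≤ x) : √(⌊x⌋₊ : ℝ) ≤ √x :=
  Real.sqrt_le_sqrt (Nat.floor_le hx)

lemma sqrt_le_sqrt_natFloor_add_one (x : ℝ) : √x ≤ √(⌊x⌋₊ : ℝ) + 1 := by
  rw [Real.sqrt_le_left (by positivity)]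
  nlinarith [Nat.lt_floor_add_one x, Real.sq_sqrt (Nat.cast_nonneg (α := ℝ) ⌊x⌋₊),
    Real.sqrt_nonneg (⌊x⌋₊ : ℝ)]

lemma tendsto_sqrt_sub_sqrt_natFloor :
    Tendsto (fun x : ℝ => √x - √(⌊x⌋₊ : ℝ)) atTop (𝓝 0) := by
  have hinv : Tendsto (fun x => 1 / √x) atTop (𝓝 0) :=
    tendsto_const_nhds.div_atTop Real.tendsto_sqrt_atTop
  refine squeeze_zero' ?_ ?_ hinv
  · filter_upwards [eventually_ge_atTop 0] with x hx using sub_nonneg.2 (sqrt_natFloor_le hx)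
  · filter_upwards [eventually_gt_atTop 0] with x hx
    rw [le_div_iff₀ (by positivity)]
    have hle := sqrt_natFloor_le hx.le
    have hdiff : (√x - √(⌊x⌋₊ : ℝ)) * (√x + √(⌊x⌋₊ : ℝ)) = x - ⌊x⌋₊ := by
      linear_combination Real.sq_sqrt hx.le - Real.sq_sqrt (Nat.cast_nonneg (α := ℝ) ⌊x⌋₊)
    nlinarith [Nat.lt_floor_add_one x, Real.sqrt_nonneg (⌊x⌋₊ : ℝ)]

lemma tendsto_sqrt_natFloor_add_sqrt_sq_sub_sqrt (v : ℝ) :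
    Tendsto (fun X : ℝ => √(⌊(v + √X) ^ 2⌋₊ : ℝ) - √X) atTop (𝓝 v) := by
  have hsq : Tendsto (fun X => (v + √X) ^ 2) atTop atTop :=
    (tendsto_pow_atTop two_ne_zero).comp
      (tendsto_atTop_add_const_left _ v Real.tendsto_sqrt_atTop)
  simpa using (tendsto_sqrt_add_sqrt_sq_sub_sqrt v).sub (tendsto_sqrt_sub_sqrt_natFloor.comp hsq)

lemma mul_abs_sub_mul_sq_le_of_shift {k c d e : ℝ} (hk : 0 ≤ k) (hc : 0 ≤ c) (hed : e ≤ d)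
    (hde : d ≤ e + 1) :
    k * |e| - c * e ^ 2 ≤ k + ((k + 2 * c) * |d| - c * d ^ 2) := by
  have habs : |e| ≤ |d| + 1 := by
    rcases abs_cases e with ⟨he, -⟩ | ⟨he, -⟩ <;> linarith [le_abs_self d, neg_abs_le d]
  have hsq : d ^ 2 - 2 * |d| ≤ e ^ 2 := by
    nlinarith [le_abs_self d, abs_nonneg d]
  nlinarith

theorem tendsto_inv_sqrt_smul_tsum {F : ℝ → ℕ → E} {γ : ℝ → E} {C k c : ℝ} (hk : 0 ≤ k)
    (hc : 0 < c)
    (hbound : ∀ X, 1 ≤ X → ∀ n : ℕ,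
      ‖F X n‖ ≤ C * Real.exp (k * |√n - √X| - c * (√n - √X) ^ 2))
    (hlim : ∀ (v : ℝ) (m : ℝ → ℕ), Tendsto (fun X => √(m X) - √X) atTop (𝓝 v) →
      Tendsto (fun X => F X (m X)) atTop (𝓝 (γ v))) :
    Tendsto (fun X => (√X)⁻¹ • ∑' n, F X n) atTop (𝓝 ((2 : ℝ) • ∫ v, γ v)) := by
  have hC : 0 ≤ C :=
    nonneg_of_mul_nonneg_left ((norm_nonneg _).trans (hbound 1 le_rfl 0)) (Real.exp_pos _)
  let Φ : ℝ → ℝ := fun v => C * Real.exp k * Real.exp ((k + 2 * c) * |v| - c * v ^ 2)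
  have hΦ₀ (v : ℝ) : 0 ≤ Φ v := by positivity
  have hΦint : Integrable fun v => (1 + |v|) * Φ v :=
    integrable_one_add_abs_mul_exp_mul_abs_sub_mul_sq _ _ hc
  have hmeas (X : ℝ) : StronglyMeasurable fun x : ℝ => F X ⌊x⌋₊ :=
    (StronglyMeasurable.of_discrete (f := F X)).comp_measurable Nat.measurable_floor
  have hfloor (X : ℝ) (hX : 1 ≤ X) (x : ℝ) (hx : 0 < x) : ‖F X ⌊x⌋₊‖ ≤ Φ (√x - √X) := by
    refine (hbound X hX ⌊x⌋₊).trans ?_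
    simp only [Φ, mul_assoc, ← Real.exp_add]
    gcongr
    exact mul_abs_sub_mul_sq_le_of_shift hk hc.le (by linarith [sqrt_natFloor_le hx.le])
      (by linarith [sqrt_le_sqrt_natFloor_add_one x])
  have hprofile (v : ℝ) : Tendsto (fun X => F X ⌊(v + √X) ^ 2⌋₊) atTop (𝓝 (γ v)) :=
    hlim v _ (tendsto_sqrt_natFloor_add_sqrt_sq_sub_sqrt v)
  refine (tendsto_inv_sqrt_smul_integral_Ioi hΦ₀ hΦint hmeas hfloor hprofile).congr' ?_
  filter_upwards [eventually_ge_atTop 1] with X hX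
  rw [integral_Ioi_natFloor
    (integrableOn_Ioi_of_norm_le_sqrt_sub hΦ₀ hΦint (hmeas X) hX (hfloor X hX))]

end FloorSums

section Stirling

lemma ofReal_cpow_eq_exp_mul_log {x : ℝ} (hx : 0 < x) (s : ℂ) :
    (x : ℂ) ^ s = cexp (s * Real.log x) := by
  rw [cpow_def_of_ne_zero (mod_cast hx.ne'), ← ofReal_log hx.le, mul_comm]

lemma ofReal_sqrt_eq_exp_log_div_two {x : ℝ} (hx : 0 < x) :
    ((√x : ℝ) : ℂ) = cexp (Real.log x / 2) := by
  rw [← Real.exp_log (Real.sqrt_pos.2 hx), Real.log_sqrt hx.le]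
  push_cast
  rfl

lemma ofReal_sqrt_two_mul_pi_ne_zero : ((√(2 * π) : ℝ) : ℂ) ≠ 0 :=
  ofReal_ne_zero.2 (Real.sqrt_pos.2 Real.two_pi_pos).ne'

/-- The leading term in Stirling's formula for `Γ(t + a)` as `t → +∞`. -/
noncomputable def stirlingApprox (a : ℂ) (t : ℝ) : ℂ :=
  (√(2 * π) : ℝ) * (t : ℂ) ^ (t + a - 1 / 2) * cexp (-t)

lemma stirlingApprox_eq_exp (a : ℂ) {t : ℝ} (ht : 0 < t) :
    stirlingApprox a t = (√(2 * π) : ℝ) * cexp ((t + a - 1 / 2) * Real.log t - t) := by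
  rw [stirlingApprox, ofReal_cpow_eq_exp_mul_log ht, mul_assoc, ← Complex.exp_add, ← sub_eq_add_neg]

lemma stirlingApprox_ne_zero (a : ℂ) {t : ℝ} (ht : 0 < t) : stirlingApprox a t ≠ 0 := by
  rw [stirlingApprox_eq_exp a ht]
  exact mul_ne_zero ofReal_sqrt_two_mul_pi_ne_zero (Complex.exp_ne_zero _)

lemma stirlingApprox_add_one (a : ℂ) {t : ℝ} (ht : 0 < t) :
    stirlingApprox (a + 1) t = t * stirlingApprox a t := by
  rw [stirlingApprox, stirlingApprox,
    show (t : ℂ) + (a + 1) - 1 / 2 = t + a - 1 / 2 + 1 by ring,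
    cpow_add _ _ (mod_cast ht.ne'), cpow_one]
  ring

/-- The integrand of `Γ(t + a)` divided by `t ^ (t + a - 1) * e ^ (-t)`. -/
noncomputable def gammaKernel (a : ℂ) (t x : ℝ) : ℂ :=
  cexp ((a - 1) * Real.log (x / t) + poissonExponent t x)

lemma Gamma_add_div_stirlingApprox {a : ℂ} {t : ℝ} (ht : 0 < t) (hat : 0 < (t + a).re) :
    Complex.Gamma (t + a) / stirlingApprox a t =
      ((√(2 * π) : ℝ) : ℂ)⁻¹ * ((√t)⁻¹ • ∫ x in Ioi 0, gammaKernel a t x) := by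
  rw [Complex.Gamma_eq_integral hat, GammaIntegral, stirlingApprox_eq_exp a ht, real_smul,
    div_eq_inv_mul, mul_inv, mul_assoc, ofReal_inv, ofReal_sqrt_eq_exp_log_div_two ht,
    ← Complex.exp_neg, ← Complex.exp_neg]
  congr 1
  rw [← integral_const_mul, ← integral_const_mul]
  refine setIntegral_congr_fun measurableSet_Ioi fun x hx => ?_
  have hx₀ : 0 < x := hx
  simp only [gammaKernel, poissonExponent]
  rw [ofReal_cpow_eq_exp_mul_log hx₀, ofReal_exp, ← Complex.exp_add, ← Complex.exp_add,
    ← Complex.exp_add, Real.log_div hx₀.ne' ht.ne']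
  congr 1
  push_cast
  ring

lemma norm_gammaKernel_le {a : ℂ} (ha : 1 ≤ a.re) {t x : ℝ} (ht : 1 ≤ t) (hx : 0 < x) :
    ‖gammaKernel a t x‖ ≤
      1 * Real.exp (2 * (a.re - 1) * |√x - √t| - 1 * (√x - √t) ^ 2) := by
  have ht₀ : 0 < t := by linarith
  have hlog : (a.re - 1) * Real.log (x / t) ≤ (a.re - 1) * (2 * |√x - √t|) := by
    rw [Real.log_div hx.ne' ht₀.ne']
    exact mul_le_mul_of_nonneg_left (log_sub_log_le_two_mul_abs_sqrt_sub hx ht) (by linarith)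
  rw [gammaKernel, Complex.norm_exp, add_re, re_mul_ofReal, ofReal_re, sub_re, one_re, one_mul,
    Real.exp_le_exp]
  linarith [poissonExponent_le ht₀.le hx]

lemma stronglyMeasurable_gammaKernel (a : ℂ) (t : ℝ) : StronglyMeasurable (gammaKernel a t) := by
  unfold gammaKernel poissonExponent
  exact Measurable.stronglyMeasurable (by fun_prop)

lemma tendsto_gammaKernel (a : ℂ) (v : ℝ) :
    Tendsto (fun t => gammaKernel a t ((v + √t) ^ 2)) atTop
      (𝓝 (Real.exp (1 * (-2 * v ^ 2)) : ℝ)) := by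
  have hv := tendsto_sqrt_add_sqrt_sq_sub_sqrt v
  have hexponent := ((tendsto_log_div_of_tendsto_sqrt_sub tendsto_id hv).ofReal.const_mul
    (a - 1)).add (tendsto_poissonExponent tendsto_id hv).ofReal
  simpa [gammaKernel] using hexponent.cexp

theorem tendsto_Gamma_add_div_stirlingApprox_of_one_le_re {a : ℂ} (ha : 1 ≤ a.re) :
    Tendsto (fun t : ℝ => Complex.Gamma (t + a) / stirlingApprox a t) atTop (𝓝 1) := by
  have hlaplace := (tendsto_inv_sqrt_smul_integral_Ioi (fun v => by positivity)
    (integrable_one_add_abs_mul_exp_mul_abs_sub_mul_sq 1 (2 * (a.re - 1)) one_pos)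
    (stronglyMeasurable_gammaKernel a) (fun t ht x hx => norm_gammaKernel_le ha ht hx)
    (tendsto_gammaKernel a)).const_mul ((√(2 * π) : ℝ) : ℂ)⁻¹
  have hvalue : ((√(2 * π) : ℝ) : ℂ)⁻¹ *
      ((2 : ℝ) • ∫ v : ℝ, ((Real.exp (1 * (-2 * v ^ 2)) : ℝ) : ℂ)) = 1 := by
    rw [integral_complex_ofReal, real_smul, ← ofReal_mul, two_mul_integral_exp_neg_two_mul_sq,
      div_one, inv_mul_cancel₀ ofReal_sqrt_two_mul_pi_ne_zero]
  rw [hvalue] at hlaplace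
  refine hlaplace.congr' ?_
  filter_upwards [eventually_gt_atTop 0] with t ht
  exact (Gamma_add_div_stirlingApprox ht (by
    rw [add_re, ofReal_re]
    linarith)).symm

lemma tendsto_ofReal_div_ofReal_add (a : ℂ) :
    Tendsto (fun t : ℝ => (t : ℂ) / (t + a)) atTop (𝓝 1) := by
  have hinv : Tendsto (fun t : ℝ => ((t⁻¹ : ℝ) : ℂ)) atTop (𝓝 0) := by
    simpa using (tendsto_inv_atTop_zero (𝕜 := ℝ)).ofReal
  have hlim : Tendsto (fun t : ℝ => (1 + a * ((t⁻¹ : ℝ) : ℂ))⁻¹) atTop (𝓝 1) := by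
    simpa using ((hinv.const_mul a).const_add 1).inv₀ (by simp)
  refine hlim.congr' ?_
  filter_upwards [eventually_gt_atTop 0] with t ht
  have htc : (t : ℂ) ≠ 0 := mod_cast ht.ne'
  rw [← inv_div, add_div, div_self htc, ofReal_inv, div_eq_mul_inv a]

lemma tendsto_Gamma_add_div_stirlingApprox_of_add_one {a : ℂ}
    (ha : Tendsto (fun t : ℝ => Complex.Gamma (t + (a + 1)) / stirlingApprox (a + 1) t) atTop
      (𝓝 1)) :
    Tendsto (fun t : ℝ => Complex.Gamma (t + a) / stirlingApprox a t) atTop (𝓝 1) := by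
  have hlim := ha.mul (tendsto_ofReal_div_ofReal_add a)
  rw [one_mul] at hlim
  refine hlim.congr' ?_
  filter_upwards [eventually_gt_atTop 0, eventually_gt_atTop (-a.re)] with t ht hat
  have htc : (t : ℂ) ≠ 0 := mod_cast ht.ne'
  have hta : (t : ℂ) + a ≠ 0 := fun h => by
    have := congrArg re h
    simp only [add_re, ofReal_re, zero_re] at this
    linarith
  have hS := stirlingApprox_ne_zero a ht
  rw [← add_assoc, Complex.Gamma_add_one _ hta, stirlingApprox_add_one a ht]
  field_simp

theorem tendsto_Gamma_add_div_stirlingApprox (a : ℂ) :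
    Tendsto (fun t : ℝ => Complex.Gamma (t + a) / stirlingApprox a t) atTop (𝓝 1) := by
  obtain ⟨N, hN⟩ := exists_nat_ge (1 - a.re)
  induction N generalizing a with
  | zero => exact tendsto_Gamma_add_div_stirlingApprox_of_one_le_re (by simpa using hN)
  | succ N ih =>
    refine tendsto_Gamma_add_div_stirlingApprox_of_add_one (ih (a + 1) ?_)
    push_cast at hN
    rw [add_re, one_re]
    linarith

end Stirling

section WeightedPoissonSum

lemma exists_forall_norm_le_mul_exp_log {D : ℕ → ℂ} {q B : ℂ}
    (hD : Tendsto (fun n => D n / (n : ℂ) ^ q) atTop (𝓝 B)) :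
    ∃ C, 0 ≤ C ∧ ∀ n : ℕ, ‖D n‖ ≤ C * Real.exp (q.re * Real.log n) := by
  have hnorm : Tendsto (fun n : ℕ => ‖D n‖ / Real.exp (q.re * Real.log n)) atTop (𝓝 ‖B‖) := by
    refine hD.norm.congr' ?_
    filter_upwards [eventually_gt_atTop 0] with n hn
    rw [norm_div, ← ofReal_natCast, ofReal_cpow_eq_exp_mul_log (mod_cast hn), Complex.norm_exp,
      re_mul_ofReal]
  obtain ⟨C, hC⟩ := hnorm.bddAbove_range
  have hle : ∀ n : ℕ, ‖D n‖ / Real.exp (q.re * Real.log n) ≤ C := fun n => hC ⟨n, rfl⟩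
  exact ⟨C, (by positivity : (0 : ℝ) ≤ _).trans (hle 0),
    fun n => (div_le_iff₀ (Real.exp_pos _)).1 (hle n)⟩

lemma norm_mul_exp_poissonExponent_le {κ C X : ℝ} (hκ : 0 ≤ κ) (hC : 0 ≤ C) (hX : 1 ≤ X)
    {d q : ℂ} {n : ℕ} (hd : ‖d‖ ≤ C * Real.exp (q.re * Real.log n)) :
    ‖d / (X : ℂ) ^ q * Real.exp (κ * poissonExponent n X)‖ ≤
      C * Real.exp (2 * |q.re| * |√n - √X| - κ * (√n - √X) ^ 2) := by
  have hX₀ : 0 < X := by linarith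
  have hpower : q.re * (Real.log n - Real.log X) ≤ |q.re| * (2 * |√n - √X|) :=
    (le_abs_self _).trans <| by
      rw [abs_mul]
      exact mul_le_mul_of_nonneg_left (abs_log_natCast_sub_log_le n hX) (abs_nonneg _)
  have hexponent : κ * poissonExponent n X ≤ κ * -(√X - √n) ^ 2 :=
    mul_le_mul_of_nonneg_left (poissonExponent_le n.cast_nonneg hX₀) hκ
  calc ‖d / (X : ℂ) ^ q * Real.exp (κ * poissonExponent n X)‖
      = ‖d‖ * (Real.exp (q.re * Real.log X))⁻¹ * Real.exp (κ * poissonExponent n X) := by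
        rw [norm_mul, norm_div, ofReal_cpow_eq_exp_mul_log hX₀, Complex.norm_exp, re_mul_ofReal,
          norm_real, Real.norm_of_nonneg (Real.exp_nonneg _), div_eq_mul_inv]
    _ ≤ C * Real.exp (q.re * Real.log n) * (Real.exp (q.re * Real.log X))⁻¹ *
          Real.exp (κ * poissonExponent n X) := by gcongr
    _ = C * Real.exp (q.re * (Real.log n - Real.log X) + κ * poissonExponent n X) := by
        rw [← Real.exp_neg, mul_assoc, mul_assoc, ← Real.exp_add, ← Real.exp_add]
        ring_nf
    _ ≤ C * Real.exp (2 * |q.re| * |√n - √X| - κ * (√n - √X) ^ 2) := by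
        gcongr
        linarith

lemma tendsto_mul_exp_poissonExponent {κ : ℝ} {D : ℕ → ℂ} {q B : ℂ}
    (hD : Tendsto (fun n => D n / (n : ℂ) ^ q) atTop (𝓝 B)) {v : ℝ} {m : ℝ → ℕ}
    (hm : Tendsto (fun X => √(m X) - √X) atTop (𝓝 v)) :
    Tendsto (fun X : ℝ => D (m X) / (X : ℂ) ^ q * Real.exp (κ * poissonExponent (m X) X)) atTop
      (𝓝 (B * (Real.exp (κ * (-2 * v ^ 2)) : ℝ))) := by
  have hm_atTop : Tendsto (fun X => (m X : ℝ)) atTop atTop :=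
    tendsto_atTop_of_tendsto_sqrt_sub tendsto_id hm
  have hratio : Tendsto (fun X : ℝ => cexp (q * Real.log (m X / X))) atTop (𝓝 1) := by
    simpa using ((tendsto_log_div_of_tendsto_sqrt_sub tendsto_id hm).ofReal.const_mul q).cexp
  have hv : Tendsto (fun X => √X - √(m X)) atTop (𝓝 (-v)) := by
    simpa using hm.neg
  have hexponent : Tendsto (fun X => ((Real.exp (κ * poissonExponent (m X) X) : ℝ) : ℂ)) atTop
      (𝓝 (Real.exp (κ * (-2 * v ^ 2)) : ℝ)) := by
    simpa only [neg_sq] using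
      (((tendsto_poissonExponent hm_atTop hv).const_mul κ).rexp).ofReal
  have hlim := ((hD.comp (tendsto_natCast_atTop_iff.1 hm_atTop)).mul hratio).mul hexponent
  rw [mul_one] at hlim
  refine hlim.congr' ?_
  filter_upwards [eventually_gt_atTop 0, hm_atTop.eventually_gt_atTop 0] with X hX hmX
  rw [Function.comp_apply, ← ofReal_natCast, ofReal_cpow_eq_exp_mul_log hX,
    ofReal_cpow_eq_exp_mul_log hmX, Real.log_div hmX.ne' hX.ne', ofReal_sub, mul_sub,
    Complex.exp_sub]
  field_simp [Complex.exp_ne_zero]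

theorem tendsto_tsum_mul_exp_poissonExponent {κ : ℝ} (hκ : 0 < κ) {D : ℕ → ℂ} {q B : ℂ}
    (hD : Tendsto (fun n => D n / (n : ℂ) ^ q) atTop (𝓝 B)) :
    Tendsto (fun X : ℝ => (∑' n : ℕ, D n * Real.exp (κ * poissonExponent n X)) /
      (X : ℂ) ^ (q + 1 / 2)) atTop (𝓝 (B * (√(2 * π / κ) : ℝ))) := by
  obtain ⟨C, hC, hDC⟩ := exists_forall_norm_le_mul_exp_log hD
  have hlaplace := tendsto_inv_sqrt_smul_tsum (by positivity) hκ
    (fun X hX n => norm_mul_exp_poissonExponent_le hκ.le hC hX (hDC n))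
    (fun v m hm => tendsto_mul_exp_poissonExponent hD hm)
  have hvalue : (2 : ℝ) • ∫ v : ℝ, B * ((Real.exp (κ * (-2 * v ^ 2)) : ℝ) : ℂ) =
      B * (√(2 * π / κ) : ℝ) := by
    rw [integral_const_mul, integral_complex_ofReal, ← two_mul_integral_exp_neg_two_mul_sq κ,
      real_smul, ofReal_mul]
    ring
  rw [hvalue] at hlaplace
  refine hlaplace.congr' ?_
  filter_upwards [eventually_gt_atTop 0] with X hX
  have hsqrt : ((√X : ℝ) : ℂ) = (X : ℂ) ^ (1 / 2 : ℂ) := by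
    rw [ofReal_sqrt_eq_exp_log_div_two hX, ofReal_cpow_eq_exp_mul_log hX]
    ring_nf
  rw [real_smul, ofReal_inv, hsqrt, cpow_add _ _ (mod_cast hX.ne'), ← div_eq_inv_mul,
    ← div_div]
  simp only [div_mul_eq_mul_div, tsum_div_const]

end WeightedPoissonSum

section Wright

variable {α β : ℝ}

/-- The `n`-th coefficient of the Wright function, divided by the exponential factor
`h ^ n * (e / n) ^ (κ * n)` of its size, where `κ = 1 + β - α` and `log h = α log α - β log β`.
What is left has power growth in `n`. -/
noncomputable def normalizedWrightCoeff (α β : ℝ) (a b : ℂ) (n : ℕ) : ℂ :=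
  Complex.Gamma (α * n + a) / Complex.Gamma (β * n + b) / n.factorial *
    Real.exp (-(n * (α * Real.log α - β * Real.log β) + (1 + β - α) * (n - n * Real.log n)))

lemma stirlingApprox_ratio_eq (hα : 0 < α) (hβ : 0 < β) (a b : ℂ) {n : ℕ} (hn : 0 < n) :
    stirlingApprox a (α * n) / stirlingApprox b (β * n) / stirlingApprox 1 n *
        Real.exp (-(n * (α * Real.log α - β * Real.log β) +
          (1 + β - α) * (n - n * Real.log n))) =
      ((√(2 * π) : ℝ) : ℂ)⁻¹ * ((α : ℂ) ^ (a - 1 / 2) * (β : ℂ) ^ (1 / 2 - b)) *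
        (n : ℂ) ^ (a - b - 1 / 2) := by
  have hn₀ : (0 : ℝ) < n := mod_cast hn
  rw [← ofReal_natCast, ofReal_cpow_eq_exp_mul_log hα, ofReal_cpow_eq_exp_mul_log hβ,
    ofReal_cpow_eq_exp_mul_log hn₀, stirlingApprox_eq_exp a (by positivity),
    stirlingApprox_eq_exp b (by positivity), stirlingApprox_eq_exp 1 hn₀,
    mul_div_mul_left _ _ ofReal_sqrt_two_mul_pi_ne_zero, ← Complex.exp_sub, div_mul_eq_div_div_swap,
    ← Complex.exp_sub, Real.log_mul hα.ne' hn₀.ne', Real.log_mul hβ.ne' hn₀.ne', div_eq_inv_mul,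
    ofReal_exp]
  simp only [mul_assoc, ← Complex.exp_add]
  congr 2
  push_cast
  ring

theorem tendsto_normalizedWrightCoeff_div_cpow (hα : 0 < α) (hβ : 0 < β) (a b : ℂ) :
    Tendsto (fun n : ℕ => normalizedWrightCoeff α β a b n / (n : ℂ) ^ (a - b - 1 / 2)) atTop
      (𝓝 (((√(2 * π) : ℝ) : ℂ)⁻¹ * ((α : ℂ) ^ (a - 1 / 2) * (β : ℂ) ^ (1 / 2 - b)))) := by
  have hnat : Tendsto (fun n : ℕ => (n : ℝ)) atTop atTop := tendsto_natCast_atTop_atTop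
  have hGamma_a := (tendsto_Gamma_add_div_stirlingApprox a).comp (hnat.const_mul_atTop hα)
  have hGamma_b := (tendsto_Gamma_add_div_stirlingApprox b).comp (hnat.const_mul_atTop hβ)
  have hfactorial := (tendsto_Gamma_add_div_stirlingApprox 1).comp hnat
  have hlim := ((hGamma_a.div hGamma_b one_ne_zero).div hfactorial one_ne_zero).const_mul
    (((√(2 * π) : ℝ) : ℂ)⁻¹ * ((α : ℂ) ^ (a - 1 / 2) * (β : ℂ) ^ (1 / 2 - b)))
  rw [div_one, div_one, mul_one] at hlim
  refine hlim.congr' ?_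
  filter_upwards [eventually_gt_atTop 0] with n hn
  have hn₀ : (0 : ℝ) < n := mod_cast hn
  have hpow : (n : ℂ) ^ (a - b - 1 / 2) ≠ 0 := by
    rw [← ofReal_natCast, ofReal_cpow_eq_exp_mul_log hn₀]
    exact Complex.exp_ne_zero _
  rw [eq_div_iff hpow, mul_right_comm, ← stirlingApprox_ratio_eq hα hβ a b hn]
  have hSa := stirlingApprox_ne_zero a (by positivity : 0 < α * n)
  have hSb := stirlingApprox_ne_zero b (by positivity : 0 < β * n)
  have hS := stirlingApprox_ne_zero 1 hn₀
  simp only [Pi.div_apply, Function.comp_apply, normalizedWrightCoeff, ofReal_mul, ofReal_natCast,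
    Complex.Gamma_nat_eq_factorial]
  generalize stirlingApprox a (α * n) = Sa, stirlingApprox b (β * n) = Sb at *
  field_simp

lemma wright_ofReal_eq_exp_mul_tsum {x X : ℝ} (hx : 0 < x) (hX : 0 < X)
    (hxX : (1 + β - α) * Real.log X = α * Real.log α - β * Real.log β + Real.log x) (a b : ℂ) :
    wright α β a b x = cexp (((1 + β - α) * X : ℝ) : ℂ) *
      ∑' n : ℕ, normalizedWrightCoeff α β a b n *
        Real.exp ((1 + β - α) * poissonExponent n X) := by
  rw [wright, ← tsum_mul_left]
  refine tsum_congr fun n => ?_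
  have hlog : (n : ℝ) * Real.log (X / n) = n * Real.log X - n * Real.log n := by
    rcases eq_or_ne (n : ℝ) 0 with hn | hn
    · simp [hn]
    · rw [Real.log_div hX.ne' hn, mul_sub]
  have hpow : (x : ℂ) ^ n = Real.exp (n * Real.log x) := by
    rw [Real.exp_nat_mul, Real.exp_log hx, ofReal_pow]
  rw [normalizedWrightCoeff, poissonExponent, ← ofReal_exp, mul_left_comm, mul_assoc,
    ← ofReal_mul, ← ofReal_mul, ← Real.exp_add, ← Real.exp_add, mul_div_right_comm, hpow, hlog]
  congr 3
  linear_combination -(n : ℝ) * hxX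

lemma cpow_neg_sub_half_mul_mul_cpow {κ X : ℝ} (hκ : 0 < κ) (hX : 0 < X) (c ϑ : ℂ) :
    (κ : ℂ) ^ (-ϑ - 1 / 2) * c * ((κ * X : ℝ) : ℂ) ^ ϑ =
      ((√(2 * π) : ℝ) : ℂ)⁻¹ * c * (√(2 * π / κ) : ℝ) * (X : ℂ) ^ ϑ := by
  have hsqrt : ((√κ : ℝ) : ℂ)⁻¹ = (κ : ℂ) ^ (-(1 / 2) : ℂ) := by
    rw [ofReal_sqrt_eq_exp_log_div_two hκ, ofReal_cpow_eq_exp_mul_log hκ, ← Complex.exp_neg]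
    ring_nf
  have hpow : (κ : ℂ) ^ (-ϑ - 1 / 2) * (κ : ℂ) ^ ϑ = ((√κ : ℝ) : ℂ)⁻¹ := by
    rw [hsqrt, ← cpow_add _ _ (mod_cast hκ.ne')]
    ring_nf
  have hpi := ofReal_sqrt_two_mul_pi_ne_zero
  rw [ofReal_mul, mul_cpow_ofReal_nonneg hκ.le hX.le, Real.sqrt_div Real.two_pi_pos.le,
    ofReal_div, div_eq_mul_inv (_ : ℂ) ((√κ : ℝ) : ℂ), ← hpow]
  field_simp

theorem tendsto_tsum_normalizedWrightCoeff_div (hα : 0 < α) (hβ : 0 < β)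
    (hκ : 0 < 1 + β - α) (a b : ℂ) :
    Tendsto (fun X : ℝ => (∑' n : ℕ, normalizedWrightCoeff α β a b n *
        Real.exp ((1 + β - α) * poissonExponent n X)) /
      (((1 + β - α : ℝ) : ℂ) ^ (-(a - b) - 1 / 2) * (α : ℂ) ^ (a - 1 / 2) *
        (β : ℂ) ^ (1 / 2 - b) * (((1 + β - α) * X : ℝ) : ℂ) ^ (a - b))) atTop (𝓝 1) := by
  have hconst : ((√(2 * π) : ℝ) : ℂ)⁻¹ * ((α : ℂ) ^ (a - 1 / 2) * (β : ℂ) ^ (1 / 2 - b)) *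
      (√(2 * π / (1 + β - α)) : ℝ) ≠ 0 := by
    have hsqrt : ((√(2 * π / (1 + β - α)) : ℝ) : ℂ) ≠ 0 :=
      ofReal_ne_zero.2 (Real.sqrt_pos.2 (by positivity)).ne'
    have hα_pow : (α : ℂ) ^ (a - 1 / 2) ≠ 0 := by simp [cpow_eq_zero_iff, hα.ne']
    have hβ_pow : (β : ℂ) ^ (1 / 2 - b) ≠ 0 := by simp [cpow_eq_zero_iff, hβ.ne']
    exact mul_ne_zero (mul_ne_zero (inv_ne_zero ofReal_sqrt_two_mul_pi_ne_zero)
      (mul_ne_zero hα_pow hβ_pow)) hsqrt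
  have hlim := (tendsto_tsum_mul_exp_poissonExponent hκ
    (tendsto_normalizedWrightCoeff_div_cpow hα hβ a b)).div tendsto_const_nhds hconst
  rw [sub_add_cancel, div_self hconst] at hlim
  refine hlim.congr' ?_
  filter_upwards [eventually_gt_atTop 0] with X hX
  rw [Pi.div_apply, mul_assoc (_ ^ _) ((α : ℂ) ^ _), cpow_neg_sub_half_mul_mul_cpow hκ hX,
    div_div, mul_comm ((X : ℂ) ^ _)]

end Wright

end WrightAsymptotics

/-- Leading exponential asymptotics of the Wright function on the positive real axis:
`₁Ψ₁((α,a);(β,b) | x) ∼ A Z^ϑ e^Z` as `x → +∞`, where `κ = 1 + β − α`, `h = α^α β^{−β}`,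
`ϑ = a − b`, `A = κ^{−ϑ−1/2} α^{a−1/2} β^{1/2−b}` and `Z = κ (hx)^{1/κ}`. -/
theorem wright_leading_asymptotics (α β : ℝ) (hα : 0 < α) (hβ : 0 < β)
    (hκ : 0 < 1 + β - α) (a b : ℂ)
    (hpole : ∀ n m : ℕ, (α : ℂ) * (n : ℂ) + a ≠ -(m : ℂ))
    (h : ℝ) (hh : h = α ^ α * β ^ (-β))
    (ϑ : ℂ) (hϑ : ϑ = a - b)
    (A : ℂ) (hA : A = ((1 + β - α : ℝ) : ℂ) ^ (-ϑ - 1 / 2) *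
      ((α : ℝ) : ℂ) ^ (a - 1 / 2) * ((β : ℝ) : ℂ) ^ (1 / 2 - b))
    (Z : ℝ → ℝ) (hZ : ∀ x : ℝ, Z x = (1 + β - α) * (h * x) ^ (1 / (1 + β - α))) :
    Tendsto (fun x : ℝ =>
        wright α β a b (x : ℂ) / (A * ((Z x : ℝ) : ℂ) ^ ϑ * Complex.exp ((Z x : ℝ) : ℂ)))
      atTop (nhds 1) := by
  have hh₀ : 0 < h := by rw [hh]; positivity
  have hX_atTop : Tendsto (fun x : ℝ => (h * x) ^ (1 / (1 + β - α))) atTop atTop :=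
    (tendsto_rpow_atTop (by positivity)).comp (tendsto_id.const_mul_atTop hh₀)
  refine ((tendsto_tsum_normalizedWrightCoeff_div hα hβ hκ a b).comp hX_atTop).congr' ?_
  filter_upwards [eventually_gt_atTop 0] with x hx
  have hX : 0 < (h * x) ^ (1 / (1 + β - α)) := by positivity
  have hlog : (1 + β - α) * Real.log ((h * x) ^ (1 / (1 + β - α))) =
      α * Real.log α - β * Real.log β + Real.log x := by
    rw [Real.log_rpow (by positivity), Real.log_mul hh₀.ne' hx.ne', hh,
      Real.log_mul (by positivity) (by positivity), Real.log_rpow hα, Real.log_rpow hβ]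
    field_simp
    ring
  rw [Function.comp_apply, hZ, hA, hϑ, wright_ofReal_eq_exp_mul_tsum hx hX hlog, mul_comm (cexp _),
    mul_div_mul_right _ _ (Complex.exp_ne_zero _)]
end
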